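/- arXiv:1304.6607 — 8 statements merged into one kernel-verified Lean document; each statement's English description precedes it below -/
import Mathlib

section
/- Let G be a finite simple connected graph with the property that for any two edges e and e' of G with e ∩ e' = ∅ there exists an edge e'' of G with e ∩ e'' ≠ ∅ and e' ∩ e'' ≠ ∅ (equivalently, the complement graph of G is weakly chordal). Then bar(I_{A_G}) = μ(I_{A_G}). -/
open MvPolynomial

/-- The `K`-algebra homomorphism `K[x_e : e ∈ E(G)] → K[t_v : v ∈ V(G)]`
sending `x_e ↦ t_u t_w` for each edge `e = {u,w}`. -/
noncomputable def graphHom (K : Type*) [Field K] {V : Type*} (G : SimpleGraph V) :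
    MvPolynomial G.edgeSet K →ₐ[K] MvPolynomial V K :=
  aeval (fun e : G.edgeSet =>
    Sym2.lift ⟨fun u w => X u * X w, fun u w => mul_comm _ _⟩ (e : Sym2 V))

/-- The toric ideal `I_{A_G}` of the graph `G`. -/
noncomputable def toricIdealGraph (K : Type*) [Field K] {V : Type*} (G : SimpleGraph V) :
    Ideal (MvPolynomial G.edgeSet K) :=
  RingHom.ker (graphHom K G).toRingHom

/-- A binomial: a difference of two (monic) monomials. -/
def IsBinom {K : Type*} [Field K] {σ : Type*} (f : MvPolynomial σ K) : Prop :=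
  ∃ u v : σ →₀ ℕ, f = monomial u 1 - monomial v 1

/-- `μ(I)`: the smallest cardinality of a binomial generating set of `I`. -/
noncomputable def muI {K : Type*} [Field K] {σ : Type*} (I : Ideal (MvPolynomial σ K)) : ℕ :=
  sInf {t | ∃ B : Finset (MvPolynomial σ K), B.card = t ∧
        (∀ f ∈ B, IsBinom f) ∧ Ideal.span (B : Set (MvPolynomial σ K)) = I}

/-- `bar(I)`: the smallest `s` such that there are binomials `B_1,…,B_s ∈ I`
with `rad(I) = rad((B_1,…,B_s))`. -/
noncomputable def barI {K : Type*} [Field K] {σ : Type*} (I : Ideal (MvPolynomial σ K)) : ℕ :=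
  sInf {s | ∃ B : Fin s → MvPolynomial σ K,
        (∀ j, IsBinom (B j) ∧ B j ∈ I) ∧
        I.radical = (Ideal.span (Set.range B)).radical}

/-! Call two monomials of the same multidegree adjacent when they share a variable. Dividing out
shared variables shows that the toric ideal is generated by binomials `x^u - x^v` whose monomials
lie in different components of their fiber. When any two edges of `G` meet or are joined by an edge,
such `u` and `v` are perfect matchings of a vertex set `W`, and the union of two matchings from a
fiber with at least three edges is a single even cycle whose chords are so restricted that `u` and
`v` are the whole fiber. With two edges there are at most three matchings, on four vertices. So the
disconnected fibers consist of `k ≤ 3` isolated points, and `k - 1` binomials for each of them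
generate the ideal.

Conversely, let binomials generate the toric ideal up to radical, and evaluate them at the
characteristic point of a matching `m` in a disconnected fiber. One of them does not vanish there,
so exactly one of its two monomials is supported on `m`, and that support must be all of `m`,
because a proper part of `m` is alone in its fiber. As a binomial has two monomials, each
disconnected fiber uses at least `⌈k / 2⌉ ≥ k - 1` binomials of its own. -/

/-! ### Edge monomials and their multidegrees -/

section Exponents

variable {V : Type*} {G : SimpleGraph V} {u v p : G.edgeSet →₀ ℕ} {x y z : V}

/-- The multidegree of an exponent vector on the edges of `G`: the exponent of the image in
`K[t_v : v ∈ V]` of the corresponding monomial. -/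
noncomputable def multidegree (G : SimpleGraph V) : (G.edgeSet →₀ ℕ) →ₗ[ℕ] (V →₀ ℕ) :=
  Finsupp.linearCombination ℕ fun e : G.edgeSet =>
    Sym2.lift ⟨fun x y => Finsupp.single x 1 + Finsupp.single y 1, fun _ _ => add_comm _ _⟩
      (e : Sym2 V)

open Classical in
/-- The exponent vector of the variable `x_e` for `e = {x, y}`, with junk value `0` when `x` and `y`
are not adjacent. -/
noncomputable def edgeExp (G : SimpleGraph V) (x y : V) : G.edgeSet →₀ ℕ :=
  if h : G.Adj x y then Finsupp.single ⟨s(x, y), h⟩ 1 else 0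

lemma edgeExp_of_adj (h : G.Adj x y) : edgeExp G x y = Finsupp.single ⟨s(x, y), h⟩ 1 :=
  dif_pos h

lemma edgeExp_comm (x y : V) : edgeExp G x y = edgeExp G y x := by
  by_cases h : G.Adj x y
  · simp only [edgeExp_of_adj h, edgeExp_of_adj h.symm, Sym2.eq_swap]
  · simp [edgeExp, h, G.adj_comm y x]

lemma edgeExp_ne_zero (h : G.Adj x y) : edgeExp G x y ≠ 0 := by
  simp [edgeExp_of_adj h]

lemma degree_edgeExp (h : G.Adj x y) : (edgeExp G x y).degree = 1 := by
  simp [edgeExp_of_adj h]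

lemma edgeExp_le_iff (h : G.Adj x y) : edgeExp G x y ≤ u ↔ u ⟨s(x, y), h⟩ ≠ 0 := by
  rw [edgeExp_of_adj h, Finsupp.single_le_iff, Nat.one_le_iff_ne_zero]

lemma multidegree_edgeExp (h : G.Adj x y) :
    multidegree G (edgeExp G x y) = Finsupp.single x 1 + Finsupp.single y 1 := by
  simp [multidegree, edgeExp_of_adj h]

lemma multidegree_mono (h : p ≤ u) : multidegree G p ≤ multidegree G u := by
  obtain ⟨r, rfl⟩ := exists_add_of_le h
  simp

lemma multidegree_apply_ne_zero_iff :
    multidegree G u x ≠ 0 ↔ ∃ y, G.Adj x y ∧ edgeExp G x y ≤ u := by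
  classical
  constructor
  · intro h
    rw [multidegree, Finsupp.linearCombination_apply, Finsupp.sum, Finsupp.finsetSum_apply] at h
    obtain ⟨⟨e, he⟩, heu, hex⟩ := Finset.exists_ne_zero_of_sum_ne_zero h
    induction e with | _ a b
    have hab : G.Adj a b := he
    have hle : edgeExp G a b ≤ u := (edgeExp_le_iff hab).2 (Finsupp.mem_support_iff.1 heu)
    have hx : a = x ∨ b = x := by
      by_contra! hc
      simp [hc.1, hc.2] at hex
    rcases hx with rfl | rfl
    · exact ⟨b, hab, hle⟩
    · exact ⟨a, hab.symm, edgeExp_comm b a ▸ hle⟩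
  · rintro ⟨y, hxy, hle⟩
    have := multidegree_mono hle x
    simp only [multidegree_edgeExp hxy, Finsupp.add_apply, Finsupp.single_eq_same] at this
    omega

lemma support_multidegree_eq_of_support_eq (h : u.support = v.support) :
    (multidegree G u).support = (multidegree G v).support := by
  ext x
  simp only [Finsupp.mem_support_iff, multidegree_apply_ne_zero_iff]
  refine exists_congr fun y => and_congr_right fun hxy => ?_
  rw [edgeExp_le_iff hxy, edgeExp_le_iff hxy, ← Finsupp.mem_support_iff, h,
    Finsupp.mem_support_iff]

lemma exists_edgeExp_le (h : u ≠ 0) : ∃ x y, G.Adj x y ∧ edgeExp G x y ≤ u := by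
  obtain ⟨⟨e, he⟩, hu⟩ := Finsupp.ne_iff.1 h
  induction e with | _ x y
  exact ⟨x, y, he, (edgeExp_le_iff he).2 hu⟩

lemma degree_multidegree (u : G.edgeSet →₀ ℕ) : (multidegree G u).degree = 2 * u.degree := by
  induction u using Finsupp.induction_linear with
  | zero => simp
  | add u v hu hv => simp only [map_add, hu, hv, mul_add]
  | single e n =>
    obtain ⟨e, he⟩ := e
    induction e with | _ x y
    simp [multidegree, mul_two, mul_comm]

lemma degree_eq_of_multidegree_eq (h : multidegree G u = multidegree G v) :
    u.degree = v.degree := by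
  have := congrArg Finsupp.degree h
  simp only [degree_multidegree] at this
  omega

lemma multidegree_eq_zero_iff : multidegree G u = 0 ↔ u = 0 := by
  rw [← Finsupp.degree_eq_zero_iff, degree_multidegree, mul_eq_zero, Finsupp.degree_eq_zero_iff]
  simp

lemma eq_of_le_of_multidegree_eq (h : p ≤ u) (hdeg : multidegree G p = multidegree G u) :
    p = u := by
  obtain ⟨r, rfl⟩ := exists_add_of_le h
  rw [map_add, left_eq_add, multidegree_eq_zero_iff] at hdeg
  simp [hdeg]

lemma apply_le_multidegree (u : G.edgeSet →₀ ℕ) (h : G.Adj x y) :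
    u ⟨s(x, y), h⟩ ≤ multidegree G u x := by
  have hle : u ⟨s(x, y), h⟩ • edgeExp G x y ≤ u := by
    simp [edgeExp_of_adj h, Finsupp.single_le_iff]
  have := multidegree_mono hle x
  simp only [map_nsmul, multidegree_edgeExp h, Finsupp.smul_apply, Finsupp.add_apply,
    Finsupp.single_eq_same, smul_eq_mul] at this
  nlinarith

/-- An exponent vector all of whose multidegree entries are at most `1`, i.e. the indicator vector
of a matching of `G`. -/
def IsMatchingExp (u : G.edgeSet →₀ ℕ) : Prop :=
  ∀ x, multidegree G u x ≤ 1

lemma IsMatchingExp.apply_le_one (hu : IsMatchingExp u) (e : G.edgeSet) : u e ≤ 1 := by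
  obtain ⟨e, he⟩ := e
  induction e with | _ x y
  exact (apply_le_multidegree u he).trans (hu x)

lemma IsMatchingExp.le_of_support_subset (hp : IsMatchingExp p) (h : p.support ⊆ u.support) :
    p ≤ u := fun e => by
  have := hp.apply_le_one e
  have := @h e
  simp only [Finsupp.mem_support_iff] at this
  omega

lemma IsMatchingExp.eq_of_edgeExp_le (hu : IsMatchingExp u) (hxy : G.Adj x y) (hxz : G.Adj x z)
    (hy : edgeExp G x y ≤ u) (hz : edgeExp G x z ≤ u) : y = z := by
  by_contra hyz
  obtain ⟨r, rfl⟩ := exists_add_of_le hy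
  have hz' : edgeExp G x z ≤ r := by
    have hne : (⟨s(x, z), hxz⟩ : G.edgeSet) ≠ ⟨s(x, y), hxy⟩ := fun h =>
      hyz (Sym2.congr_right.1 (congrArg Subtype.val h)).symm
    rw [edgeExp_le_iff hxz] at hz ⊢
    rwa [Finsupp.add_apply, edgeExp_of_adj hxy, Finsupp.single_eq_of_ne hne, zero_add] at hz
  have h₁ := hu x
  have h₂ := multidegree_mono hz' x
  simp only [map_add, multidegree_edgeExp hxy, multidegree_edgeExp hxz, Finsupp.add_apply,
    Finsupp.single_eq_same] at h₁ h₂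
  omega

end Exponents

/-! ### Connectivity of fibers -/

section Fiber

variable {V : Type*} {G : SimpleGraph V} {u v p q : G.edgeSet →₀ ℕ}

/-- Adjacency in a fiber of the multidegree map: two monomials of the same multidegree are joined
when they have a variable in common. -/
def FiberAdj (u v : G.edgeSet →₀ ℕ) : Prop :=
  multidegree G u = multidegree G v ∧ ∃ e, u e ≠ 0 ∧ v e ≠ 0

/-- The reachability relation of `FiberAdj`. Binomials whose two monomials are not fiber-connected
are the ones that cannot be omitted from a generating set of the toric ideal. -/
def FiberConnected (u v : G.edgeSet →₀ ℕ) : Prop :=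
  Relation.ReflTransGen FiberAdj u v

lemma FiberAdj.symm (h : FiberAdj u v) : FiberAdj v u :=
  ⟨h.1.symm, h.2.imp fun _ => And.symm⟩

lemma FiberAdj.fiberConnected (h : FiberAdj u v) : FiberConnected u v :=
  .single h

lemma FiberConnected.symm (h : FiberConnected u v) : FiberConnected v u :=
  have : Std.Symm (FiberAdj (G := G)) := ⟨fun _ _ => FiberAdj.symm⟩
  Relation.ReflTransGen.stdSymm.symm _ _ h

lemma fiberAdj_of_le (hdeg : multidegree G u = multidegree G v) (hp : p ≠ 0) (hpu : p ≤ u)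
    (hpv : p ≤ v) : FiberAdj u v := by
  obtain ⟨e, he⟩ := Finsupp.ne_iff.1 hp
  have := hpu e
  have := hpv e
  rw [Finsupp.coe_zero, Pi.zero_apply] at he
  exact ⟨hdeg, e, by omega, by omega⟩

lemma fiberConnected_of_multidegree_eq_of_le (hdeg : multidegree G u = multidegree G v)
    (hpq : multidegree G p = multidegree G q) (hp : p ≠ 0) (hpu : p ≤ u) (hne : p ≠ u)
    (hqv : q ≤ v) : FiberConnected u v := by
  obtain ⟨r, rfl⟩ := exists_add_of_le hpu
  have hr : r ≠ 0 := fun h => hne (by rw [h, add_zero])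
  have hq : q ≠ 0 := by rwa [← multidegree_eq_zero_iff.ne, ← hpq, multidegree_eq_zero_iff.ne]
  have hmid : multidegree G (p + r) = multidegree G (q + r) := by rw [map_add, map_add, hpq]
  exact (fiberAdj_of_le hmid hr le_add_self le_add_self).fiberConnected.trans
    (fiberAdj_of_le (hmid.symm.trans hdeg) hq le_self_add hqv).fiberConnected

lemma FiberConnected.eq_of_isolated (h : FiberConnected u v) (hu : ∀ t, FiberAdj u t → t = u) :
    v = u := by
  induction h with
  | refl => rfl
  | tail _ hadj ih => exact hu _ (ih ▸ hadj)

lemma eq_of_multidegree_eq_of_degree_le_one (hdeg : multidegree G u = multidegree G v)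
    (hu : u.degree ≤ 1) : u = v := by
  have hdeg' := degree_eq_of_multidegree_eq hdeg
  rcases eq_or_ne u 0 with rfl | hu0
  · rwa [map_zero, eq_comm, multidegree_eq_zero_iff, eq_comm] at hdeg
  have eq_edge : ∀ {t : G.edgeSet →₀ ℕ} {x y : V}, G.Adj x y → edgeExp G x y ≤ t →
      t.degree ≤ 1 → t = edgeExp G x y := by
    intro t x y hxy hle ht
    obtain ⟨r, rfl⟩ := exists_add_of_le hle
    rw [map_add, degree_edgeExp hxy] at ht
    rw [(Finsupp.degree_eq_zero_iff r).1 (by omega), add_zero]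
  obtain ⟨x, y, hxy, hle⟩ := exists_edgeExp_le hu0
  obtain rfl := eq_edge hxy hle hu
  obtain ⟨z, hxz, hle'⟩ : ∃ z, G.Adj x z ∧ edgeExp G x z ≤ v := by
    rw [← multidegree_apply_ne_zero_iff, ← hdeg, multidegree_edgeExp hxy]
    simp
  obtain rfl := eq_edge hxz hle' (hdeg' ▸ hu)
  rw [multidegree_edgeExp hxy, multidegree_edgeExp hxz, add_right_inj,
    Finsupp.single_left_inj one_ne_zero] at hdeg
  rw [hdeg]

lemma FiberAdj.exists_edgeExp_add (h : FiberAdj u v) :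
    ∃ x y u' v', G.Adj x y ∧ u = edgeExp G x y + u' ∧ v = edgeExp G x y + v' ∧
      multidegree G u' = multidegree G v' := by
  obtain ⟨hdeg, ⟨e, he⟩, hue, hve⟩ := h
  induction e with | _ x y
  obtain ⟨u', rfl⟩ := exists_add_of_le ((edgeExp_le_iff he).2 hue)
  obtain ⟨v', rfl⟩ := exists_add_of_le ((edgeExp_le_iff he).2 hve)
  rw [map_add, map_add, add_right_inj] at hdeg
  exact ⟨x, y, u', v', he, rfl, rfl, hdeg⟩

lemma FiberAdj.eq_of_degree_le_two (h : FiberAdj u v) (hu : u.degree ≤ 2) : u = v := by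
  obtain ⟨x, y, u', v', hxy, rfl, rfl, hdeg⟩ := h.exists_edgeExp_add
  rw [map_add, degree_edgeExp hxy] at hu
  rw [eq_of_multidegree_eq_of_degree_le_one hdeg (by omega)]

end Fiber

/-! ### Fibers that are not squarefree -/

section GapFree

variable {V : Type*} {G : SimpleGraph V} {u v p q p' q' : G.edgeSet →₀ ℕ} {w a α β : V}

/-- Any two edges of `G` meet or are joined by an edge: the complement of `G` has no induced
four-cycle whose missing edges are two edges of `G`. -/
def GapFree (G : SimpleGraph V) : Prop :=
  ∀ e ∈ G.edgeSet, ∀ e' ∈ G.edgeSet, ∃ x ∈ e, ∃ y ∈ e', x = y ∨ G.Adj x y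

lemma gapFree_of_forall_exists_edge_meeting
    (h : ∀ e ∈ G.edgeSet, ∀ e' ∈ G.edgeSet, (∀ v : V, v ∈ e → v ∉ e') →
      ∃ e'' ∈ G.edgeSet, (∃ v : V, v ∈ e ∧ v ∈ e'') ∧ (∃ v : V, v ∈ e' ∧ v ∈ e'')) :
    GapFree G := by
  intro e he e' he'
  by_cases hdisj : ∀ v ∈ e, v ∉ e'
  · obtain ⟨e'', he'', ⟨x, hxe, hx⟩, ⟨y, hye, hy⟩⟩ := h e he e' he' hdisj
    refine ⟨x, hxe, y, hye, .inr ?_⟩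
    have hxy : x ≠ y := fun hxy => hdisj x hxe (hxy ▸ hye)
    rwa [← SimpleGraph.mem_edgeSet, ← (Sym2.mem_and_mem_iff hxy).1 ⟨hx, hy⟩]
  · push Not at hdisj
    obtain ⟨x, hxe, hxe'⟩ := hdisj
    exact ⟨x, hxe, x, hxe', .inl rfl⟩

/-- The edges of an alternating walk from `w` to `a` that starts and ends with an edge of `u` and
does not return to `w` along an edge of `v`: `p` collects its edges in `u` and `q` those in `v`. -/
structure IsAlternatingWalk (u v : G.edgeSet →₀ ℕ) (w a : V) (p q : G.edgeSet →₀ ℕ) : Prop where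
  left_le : p ≤ u
  right_le : q ≤ v
  multidegree_eq : multidegree G p =
    multidegree G q + Finsupp.single w 1 + Finsupp.single a 1
  multidegree_apply_eq_zero : multidegree G q w = 0

lemma IsAlternatingWalk.ne_zero (h : IsAlternatingWalk u v w a p q) : p ≠ 0 := by
  rintro rfl
  have := DFunLike.congr_fun h.multidegree_eq w
  simp only [map_zero, Finsupp.zero_apply, Finsupp.add_apply, Finsupp.single_eq_same] at this
  omega

lemma IsAlternatingWalk.exists_right_edge (hdeg : multidegree G u = multidegree G v)
    (hw : 2 ≤ multidegree G u w) (hn : ¬ FiberConnected u v)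
    (h : IsAlternatingWalk u v w a p q) (haw : a ≠ w) :
    ∃ x, G.Adj a x ∧ x ≠ w ∧ q + edgeExp G a x ≤ v := by
  classical
  have hp := h.ne_zero
  obtain ⟨hpu, hqv, hpq, hqw⟩ := h
  obtain ⟨s, rfl⟩ := exists_add_of_le hqv
  obtain ⟨x, hax, hxs⟩ : ∃ x, G.Adj a x ∧ edgeExp G a x ≤ s := by
    rw [← multidegree_apply_ne_zero_iff]
    have hle := multidegree_mono hpu a
    have hpqa := DFunLike.congr_fun hpq a
    simp only [hdeg, map_add, Finsupp.add_apply, Finsupp.single_eq_same] at hle hpqa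
    omega
  refine ⟨x, hax, ?_, add_le_add_right hxs q⟩
  rintro rfl
  refine hn (fiberConnected_of_multidegree_eq_of_le hdeg (q := q + edgeExp G a x) ?_ hp hpu ?_
    (add_le_add_right hxs q))
  · rw [hpq, map_add, multidegree_edgeExp hax]
    abel
  · rintro rfl
    simp only [hpq, Finsupp.add_apply, hqw, Finsupp.single_eq_same,
      Finsupp.single_eq_of_ne haw.symm] at hw
    omega

lemma IsAlternatingWalk.exists_lt (hdeg : multidegree G u = multidegree G v)
    (hw : 2 ≤ multidegree G u w) (hn : ¬ FiberConnected u v)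
    (h : IsAlternatingWalk u v w a p q) (haw : a ≠ w) :
    ∃ b p' q', p < p' ∧ IsAlternatingWalk u v w b p' q' := by
  obtain ⟨x, hax, hxw, hqx⟩ := h.exists_right_edge hdeg hw hn haw
  obtain ⟨hpu, -, hpq, hqw⟩ := h
  obtain ⟨r, rfl⟩ := exists_add_of_le hpu
  obtain ⟨y, hxy, hyr⟩ : ∃ y, G.Adj x y ∧ edgeExp G x y ≤ r := by
    rw [← multidegree_apply_ne_zero_iff]
    have hle := multidegree_mono hqx x
    have hpqx := DFunLike.congr_fun hpq x
    simp only [← hdeg, map_add, multidegree_edgeExp hax, Finsupp.add_apply,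
      Finsupp.single_eq_same, Finsupp.single_eq_of_ne hxw, Finsupp.single_eq_of_ne hax.ne']
      at hle hpqx
    omega
  refine ⟨y, p + edgeExp G x y, q + edgeExp G a x, ?_, add_le_add_right hyr p, hqx, ?_, ?_⟩
  · exact lt_add_of_pos_right p (pos_iff_ne_zero.2 (edgeExp_ne_zero hxy))
  · rw [map_add, map_add, hpq, multidegree_edgeExp hax, multidegree_edgeExp hxy]
    abel
  · rw [map_add, multidegree_edgeExp hax]
    simp [hqw, haw, hxw]

lemma exists_isAlternatingWalk_self (hdeg : multidegree G u = multidegree G v)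
    (hw : 2 ≤ multidegree G u w) (hn : ¬ FiberConnected u v) :
    ∃ p q, IsAlternatingWalk u v w w p q := by
  classical
  have hfin : {p | ∃ a q, IsAlternatingWalk u v w a p q}.Finite :=
    (Set.finite_Icc 0 u).subset fun p ⟨_, _, h⟩ => ⟨zero_le, h.left_le⟩
  have hne : {p | ∃ a q, IsAlternatingWalk u v w a p q}.Nonempty := by
    obtain ⟨a, hwa, hle⟩ := multidegree_apply_ne_zero_iff.1 (show multidegree G u w ≠ 0 by omega)
    exact ⟨edgeExp G w a, a, 0, hle, zero_le, by simp [multidegree_edgeExp hwa], by simp⟩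
  obtain ⟨p, ⟨a, q, h⟩, hmax⟩ := hfin.exists_maximal hne
  obtain rfl | haw := eq_or_ne a w
  · exact ⟨p, q, h⟩
  · obtain ⟨b, p', q', hlt, h'⟩ := h.exists_lt hdeg hw hn haw
    exact absurd (hmax ⟨b, q', h'⟩ hlt.le) hlt.not_ge

/-- A closed alternating walk at `w`, with first and last edge in `p`, can be cut at `α` into a walk
from `w` to `α` ending with an edge of `q`, and the remaining walk from `α` to `w`. -/
def CutAt (w α : V) (p q : G.edgeSet →₀ ℕ) : Prop :=
  ∃ p₁ p₂ q₁ q₂, p = p₁ + p₂ ∧ q = q₁ + q₂ ∧ p₁ ≠ 0 ∧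
    multidegree G p₁ + Finsupp.single α 1 = multidegree G q₁ + Finsupp.single w 1 ∧
    multidegree G p₂ = multidegree G q₂ + Finsupp.single α 1 + Finsupp.single w 1

lemma exists_edge_forall_cutAt
    (h : multidegree G p = multidegree G q + Finsupp.single w 1 + Finsupp.single w 1) :
    ∃ e ∈ G.edgeSet, ∀ α ∈ e, CutAt w α p q := by
  classical
  obtain ⟨a, hwa, hle⟩ := multidegree_apply_ne_zero_iff.1
    (show multidegree G p w ≠ 0 by simp [h])
  obtain ⟨p, rfl⟩ := exists_add_of_le hle
  have hp : multidegree G p + Finsupp.single a 1 = multidegree G q + Finsupp.single w 1 := by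
    rw [map_add, multidegree_edgeExp hwa] at h
    exact add_right_cancel (b := Finsupp.single w 1) (by rw [← h]; abel)
  obtain ⟨b, hab, hle'⟩ : ∃ b, G.Adj a b ∧ edgeExp G a b ≤ q := by
    rw [← multidegree_apply_ne_zero_iff]
    have := DFunLike.congr_fun hp a
    simp only [Finsupp.add_apply, Finsupp.single_eq_same, Finsupp.single_eq_of_ne hwa.ne'] at this
    omega
  obtain ⟨q, rfl⟩ := exists_add_of_le hle'
  refine ⟨s(a, b), hab, fun α hα => ?_⟩
  rcases Sym2.mem_iff.1 hα with rfl | rfl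
  · refine ⟨p, edgeExp G w α, edgeExp G α b + q, 0, add_comm _ _, (add_zero _).symm, ?_, hp, ?_⟩
    · rintro rfl
      have := DFunLike.congr_fun hp w
      simp [Finsupp.single_eq_of_ne hwa.ne] at this
    · simp [multidegree_edgeExp hwa, add_comm]
  · refine ⟨edgeExp G w a, p, edgeExp G a α, q, rfl, rfl, edgeExp_ne_zero hwa, ?_, ?_⟩
    · rw [multidegree_edgeExp hwa, multidegree_edgeExp hab]
      abel
    · rw [map_add, multidegree_edgeExp hab] at hp
      exact add_right_cancel (b := Finsupp.single a 1) (by rw [hp]; abel)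

lemma CutAt.fiberConnected_of_eq (hdeg : multidegree G (p + p') = multidegree G (q + q'))
    (h : CutAt w α p q) (h' : CutAt w α q' p') : FiberConnected (p + p') (q + q') := by
  obtain ⟨p₁, p₂, q₁, q₂, rfl, rfl, hp₁, h₁, h₂⟩ := h
  obtain ⟨q₁', q₂', p₁', p₂', rfl, rfl, -, h₁', -⟩ := h'
  refine fiberConnected_of_multidegree_eq_of_le (p := p₁ + p₁') (q := q₁ + q₁') hdeg ?_ ?_
    (add_le_add le_self_add le_self_add) ?_ (add_le_add le_self_add le_self_add)
  · ext x
    have := DFunLike.congr_fun h₁ x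
    have := DFunLike.congr_fun h₁' x
    simp only [map_add, Finsupp.add_apply] at *
    omega
  · simp [hp₁]
  · intro heq
    have hp₂ : p₂ = 0 := by
      have : p₂ + p₂' = 0 := by rwa [add_add_add_comm, left_eq_add] at heq
      exact (add_eq_zero.1 this).1
    have := DFunLike.congr_fun h₂ w
    simp [hp₂] at this

lemma CutAt.fiberConnected_of_adj (hdeg : multidegree G (p + p') = multidegree G (q + q'))
    (h : CutAt w α p q) (h' : CutAt w β q' p') (hαβ : G.Adj α β) :
    FiberConnected (p + p') (q + q') := by
  obtain ⟨p₁, p₂, q₁, q₂, rfl, rfl, hp₁, h₁, -⟩ := h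
  obtain ⟨q₁', q₂', p₁', p₂', rfl, rfl, hq₁', -, h₂'⟩ := h'
  have hmid : multidegree G (p₁ + q₁' + (edgeExp G α β + q₂ + p₂')) =
      multidegree G (q₁ + q₂ + (q₁' + q₂')) := by
    ext x
    have := DFunLike.congr_fun h₁ x
    have := DFunLike.congr_fun h₂' x
    simp only [map_add, multidegree_edgeExp hαβ, Finsupp.add_apply] at *
    omega
  refine (fiberAdj_of_le (hdeg.trans hmid.symm) hp₁ ?_ ?_).fiberConnected.trans
    (fiberAdj_of_le hmid hq₁' ?_ ?_).fiberConnected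
  · rw [add_assoc]
    exact le_self_add
  · rw [add_assoc]
    exact le_self_add
  · exact le_self_add.trans' le_add_self
  · exact le_self_add.trans le_add_self

lemma GapFree.fiberConnected_of_two_le (hG : GapFree G)
    (hdeg : multidegree G u = multidegree G v) (hw : 2 ≤ multidegree G u w) :
    FiberConnected u v := by
  by_contra hn
  obtain ⟨p, q, hpu, hqv, hpq, -⟩ := exists_isAlternatingWalk_self hdeg hw hn
  obtain ⟨p', rfl⟩ := exists_add_of_le hpu
  obtain ⟨q', rfl⟩ := exists_add_of_le hqv
  have hqp : multidegree G q' =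
      multidegree G p' + Finsupp.single w 1 + Finsupp.single w 1 := by
    rw [map_add, map_add, hpq] at hdeg
    exact add_left_cancel (a := multidegree G q) (by rw [← hdeg]; abel)
  obtain ⟨e, he, hcut⟩ := exists_edge_forall_cutAt hpq
  obtain ⟨e', he', hcut'⟩ := exists_edge_forall_cutAt hqp
  obtain ⟨α, hα, β, hβ, rfl | hαβ⟩ := hG e he e' he'
  · exact hn ((hcut α hα).fiberConnected_of_eq hdeg (hcut' α hβ))
  · exact hn ((hcut α hα).fiberConnected_of_adj hdeg (hcut' β hβ) hαβ)

lemma GapFree.isMatchingExp (hG : GapFree G) (hdeg : multidegree G u = multidegree G v)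
    (hn : ¬ FiberConnected u v) : IsMatchingExp u := fun _ =>
  not_lt.1 fun hw => hn (hG.fiberConnected_of_two_le hdeg hw)

end GapFree

/-! ### Even cycles and their two perfect matchings -/

section EvenCycle

variable {V : Type*} {G : SimpleGraph V} {c : ℤ → V} {n : ℕ} {t : G.edgeSet →₀ ℕ}

lemma sum_range_add_mul_eq_of_apply_eq {M : Type*} [AddCommMonoid M] [IsCancelAdd M] (f : ℤ → M)
    (k s : ℤ) (m : ℕ) (hf : f (s + k * m) = f s) :
    ∑ l ∈ Finset.range m, f (s + k + k * l) = ∑ l ∈ Finset.range m, f (s + k * l) := by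
  apply add_right_cancel (b := f s)
  conv_rhs => rw [← hf, ← Finset.sum_range_succ fun l : ℕ => f (s + k * l), Finset.sum_range_succ']
  push_cast
  simp only [mul_zero, add_zero, mul_add, mul_one, add_assoc, add_comm k]

/-- The exponent vector of `t_{c s} t_{c (s + 1)} ⋯ t_{c (s + m - 1)}`. -/
noncomputable def arcVertices (c : ℤ → V) (s : ℤ) (m : ℕ) : V →₀ ℕ :=
  ∑ l ∈ Finset.range m, Finsupp.single (c (s + l)) 1

/-- The exponent vector of the product of `m` alternate edges of a walk `c`, the first one being
`{c s, c (s + 1)}`. -/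
noncomputable def altEdges (G : SimpleGraph V) (c : ℤ → V) (s : ℤ) (m : ℕ) : G.edgeSet →₀ ℕ :=
  ∑ l ∈ Finset.range m, edgeExp G (c (s + 2 * l)) (c (s + 2 * l + 1))

lemma arcVertices_add (c : ℤ → V) (s : ℤ) (m k : ℕ) :
    arcVertices c s (m + k) = arcVertices c s m + arcVertices c (s + m) k := by
  simp only [arcVertices, Finset.sum_range_add, Nat.cast_add, add_assoc]

lemma arcVertices_one (c : ℤ → V) (s : ℤ) : arcVertices c s 1 = Finsupp.single (c s) 1 := by
  simp [arcVertices]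

lemma degree_arcVertices (c : ℤ → V) (s : ℤ) (m : ℕ) : (arcVertices c s m).degree = m := by
  simp [arcVertices]

lemma exists_eq_of_arcVertices_apply_ne_zero {s : ℤ} {m : ℕ} {x : V}
    (hx : arcVertices c s m x ≠ 0) : ∃ i, c i = x := by
  classical
  rw [arcVertices, Finsupp.finsetSum_apply] at hx
  obtain ⟨l, -, hl⟩ := Finset.exists_ne_zero_of_sum_ne_zero hx
  rw [Finsupp.single_apply] at hl
  exact ⟨s + l, by_contra fun h => hl (if_neg h)⟩

lemma multidegree_altEdges (hc : ∀ i, G.Adj (c i) (c (i + 1))) (s : ℤ) (m : ℕ) :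
    multidegree G (altEdges G c s m) = arcVertices c s (2 * m) := by
  induction m with
  | zero => simp [altEdges, arcVertices]
  | succ m ih =>
    rw [altEdges, Finset.sum_range_succ, ← altEdges, map_add, ih, multidegree_edgeExp (hc _),
      mul_add_one, arcVertices_add, arcVertices_add c _ 1 1, arcVertices_one, arcVertices_one]
    push_cast
    rfl

lemma edgeExp_le_altEdges (c : ℤ → V) (s : ℤ) {m : ℕ} (hm : 0 < m) :
    edgeExp G (c s) (c (s + 1)) ≤ altEdges G c s m := by
  have h := Finset.single_le_sum_of_canonicallyOrdered
    (f := fun l : ℕ => edgeExp G (c (s + 2 * l)) (c (s + 2 * l + 1))) (Finset.mem_range.2 hm)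
  simpa [altEdges] using h

lemma exists_edgeExp_apply_ne_zero_of_altEdges {s : ℤ} {m : ℕ} {e : G.edgeSet}
    (he : altEdges G c s m e ≠ 0) :
    ∃ l : ℕ, edgeExp G (c (s + 2 * l)) (c (s + 2 * l + 1)) e ≠ 0 := by
  rw [altEdges, Finsupp.finsetSum_apply] at he
  obtain ⟨l, -, hl⟩ := Finset.exists_ne_zero_of_sum_ne_zero he
  exact ⟨l, hl⟩

lemma arcVertices_split (hc : ∀ i, G.Adj (c i) (c (i + 1))) (s : ℤ) (a m : ℕ) :
    arcVertices c s (2 * a + 1 + m) = Finsupp.single (c s) 1 +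
      multidegree G (altEdges G c (s + 1) a) + arcVertices c (s + 2 * a + 1) m := by
  rw [arcVertices_add, add_comm (2 * a), arcVertices_add, arcVertices_one,
    multidegree_altEdges hc]
  push_cast
  rw [add_assoc s, add_comm (2 * (a : ℤ))]

/-- A cycle of length `2 * n` in `G`, with its vertices `c i` indexed by the integers
modulo `2 * n`. -/
structure IsEvenCycle (G : SimpleGraph V) (n : ℕ) (c : ℤ → V) : Prop where
  pos : 0 < n
  adj : ∀ i, G.Adj (c i) (c (i + 1))
  eq_iff : ∀ i j, c i = c j ↔ (2 * n : ℤ) ∣ j - i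

namespace IsEvenCycle

lemma add_period (C : IsEvenCycle G n c) (i : ℤ) : c (i + 2 * n) = c i :=
  ((C.eq_iff _ _).2 (by simp)).symm

lemma ne (C : IsEvenCycle G n c) {i j : ℤ} (hij : i < j) (hji : j < i + 2 * n) : c i ≠ c j := by
  rw [Ne, C.eq_iff]
  intro h
  have := Int.le_of_dvd (by omega) h
  omega

lemma exists_mem_window (C : IsEvenCycle G n c) (s i : ℤ) :
    ∃ j, s ≤ j ∧ j < s + 2 * n ∧ c j = c i ∧ Even (j - i) := by
  have hn : (0 : ℤ) < 2 * n := by have := C.pos; omega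
  have hdvd : (2 * n : ℤ) ∣ s + (i - s) % (2 * n) - i :=
    ⟨-((i - s) / (2 * n)), by linarith [Int.emod_add_mul_ediv (i - s) (2 * n)]⟩
  refine ⟨s + (i - s) % (2 * n), ?_, ?_, ((C.eq_iff _ _).2 hdvd).symm, ?_⟩
  · have := Int.emod_nonneg (i - s) hn.ne'
    omega
  · have := Int.emod_lt_of_pos (i - s) hn
    omega
  · exact even_iff_two_dvd.2 ((dvd_mul_right 2 _).trans hdvd)

lemma arcVertices_eq (C : IsEvenCycle G n c) (s : ℤ) :
    arcVertices c s (2 * n) = arcVertices c 0 (2 * n) := by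
  have step (s : ℤ) : arcVertices c (s + 1) (2 * n) = arcVertices c s (2 * n) := by
    have := sum_range_add_mul_eq_of_apply_eq (fun i => Finsupp.single (c i) 1) 1 s (2 * n)
      (by simp [C.add_period])
    simpa only [one_mul, arcVertices] using this
  induction s with
  | zero => rfl
  | succ i ih => rw [step, ih]
  | pred i ih => rw [← ih, ← step, sub_add_cancel]

lemma multidegree_altEdges_eq (C : IsEvenCycle G n c) (i : ℤ) :
    multidegree G (altEdges G c i n) = arcVertices c 0 (2 * n) := by
  rw [multidegree_altEdges C.adj, C.arcVertices_eq]

lemma multidegree_altEdges_congr (C : IsEvenCycle G n c) (i j : ℤ) :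
    multidegree G (altEdges G c i n) = multidegree G (altEdges G c j n) := by
  rw [C.multidegree_altEdges_eq, C.multidegree_altEdges_eq]

lemma altEdges_ne_zero (C : IsEvenCycle G n c) (i : ℤ) : altEdges G c i n ≠ 0 := fun h =>
  edgeExp_ne_zero (C.adj i) (nonpos_iff_eq_zero.1 (h ▸ edgeExp_le_altEdges c i C.pos))

lemma altEdges_eq_of_even_sub (C : IsEvenCycle G n c) {i j : ℤ} (h : Even (j - i)) :
    altEdges G c j n = altEdges G c i n := by
  have step (s : ℤ) : altEdges G c (s + 2) n = altEdges G c s n :=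
    sum_range_add_mul_eq_of_apply_eq (fun i => edgeExp G (c i) (c (i + 1))) 2 s n (by
      rw [C.add_period, add_right_comm, C.add_period])
  obtain ⟨k, hk⟩ := h
  obtain rfl : j = i + 2 * k := by omega
  induction k with
  | zero => simp
  | succ k ih => rw [mul_add_one, ← add_assoc, step, ih (by omega)]
  | pred k ih => rw [← ih (by omega), ← step]; congr 1; ring

lemma arcVertices_le_one (C : IsEvenCycle G n c) (x : V) : arcVertices c 0 (2 * n) x ≤ 1 := by
  classical
  rw [arcVertices, Finsupp.finsetSum_apply]
  simp only [Finsupp.single_apply, Finset.sum_boole, Nat.cast_id, Finset.card_le_one,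
    Finset.mem_filter, Finset.mem_range, zero_add]
  rintro a ⟨ha, rfl⟩ b ⟨hb, hab⟩
  rcases lt_trichotomy a b with h | h | h
  · exact absurd hab.symm (C.ne (by omega) (by omega))
  · exact h
  · exact absurd hab (C.ne (by omega) (by omega))

lemma isMatchingExp_altEdges (C : IsEvenCycle G n c) (i : ℤ) :
    IsMatchingExp (altEdges G c i n) := fun x => by
  rw [C.multidegree_altEdges_eq]
  exact C.arcVertices_le_one x

lemma altEdges_le (C : IsEvenCycle G n c) {i : ℤ}
    (ht : ∀ l : ℕ, edgeExp G (c (i + 2 * l)) (c (i + 2 * l + 1)) ≤ t) : altEdges G c i n ≤ t := by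
  refine (C.isMatchingExp_altEdges i).le_of_support_subset fun e he => ?_
  obtain ⟨l, hl⟩ := exists_edgeExp_apply_ne_zero_of_altEdges (Finsupp.mem_support_iff.1 he)
  exact Finsupp.mem_support_iff.2 fun h0 => hl (nonpos_iff_eq_zero.1 (h0 ▸ ht l e))

lemma fiberConnected_of_edgeExp_le (C : IsEvenCycle G n c)
    (ht : multidegree G t = arcVertices c 0 (2 * n)) {i : ℤ}
    (h : edgeExp G (c i) (c (i + 1)) ≤ t) : FiberConnected t (altEdges G c i n) :=
  (fiberAdj_of_le (ht.trans (C.multidegree_altEdges_eq i).symm) (edgeExp_ne_zero (C.adj i)) h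
    (edgeExp_le_altEdges c i C.pos)).fiberConnected

lemma fiberConnected_of_altEdges_le (C : IsEvenCycle G n c)
    (ht : multidegree G t = arcVertices c 0 (2 * n)) {i : ℤ} {a : ℕ} (ha : 0 < a)
    (h : altEdges G c i a ≤ t) : FiberConnected t (altEdges G c i n) :=
  C.fiberConnected_of_edgeExp_le ht ((edgeExp_le_altEdges c i ha).trans h)

end IsEvenCycle

end EvenCycle

/-! ### Two disjoint perfect matchings form an even cycle -/

section AlternatingSequence

variable {α : Type*} {h : ZMod 2 → α → α} {c : ℤ → α}

lemma apply_add_eq_apply_sub_of_alternating (hinv : ∀ b, Function.Involutive (h b))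
    (hc : ∀ i : ℤ, c (i + 1) = h i (c i)) {i j : ℤ} (hij : c i = c j) (hodd : Odd (j - i)) (k : ℤ) :
    c (i + k) = c (j - k) := by
  have hc' (i : ℤ) : c i = h i (c (i + 1)) := by rw [hc, hinv]
  obtain ⟨m, hm⟩ := hodd
  obtain rfl : j = i + 2 * m + 1 := by omega
  have parity (k : ℤ) : ((i + k : ℤ) : ZMod 2) = (i + 2 * m - k : ℤ) := by
    rw [ZMod.intCast_eq_intCast_iff_dvd_sub]
    exact ⟨m - k, by push_cast; ring⟩
  induction k with
  | zero => simpa using hij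
  | succ k ih =>
    rw [← add_assoc, hc, ih, parity, hc' (_ - (k + 1))]
    congr 2
    · ring_nf
    · ring
  | pred k ih =>
    rw [hc' (i + _), show i + (-(k : ℤ) - 1) + 1 = i + -k by ring, ih, parity,
      show i + 2 * m + 1 - (-k - 1) = i + 2 * m + 1 - -(k : ℤ) + 1 by ring, hc]
    congr 2
    ring

lemma even_sub_of_alternating (hinv : ∀ b, Function.Involutive (h b)) (hfix : ∀ b x, h b x ≠ x)
    (hc : ∀ i : ℤ, c (i + 1) = h i (c i)) {i j : ℤ} (hij : c i = c j) : Even (j - i) := by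
  by_contra hodd
  rw [Int.not_even_iff_odd] at hodd
  obtain ⟨k, hk⟩ := hodd
  have := apply_add_eq_apply_sub_of_alternating hinv hc hij ⟨k, hk⟩ k
  rw [show j - k = i + k + 1 by omega, hc] at this
  exact hfix _ _ this.symm

lemma exists_periodic_alternating [Finite α] (hinv : ∀ b, Function.Involutive (h b))
    (hfix : ∀ b x, h b x ≠ x) (w : α) :
    ∃ (n : ℕ) (c : ℤ → α), 0 < n ∧ (∀ i : ℤ, c (i + 1) = h i (c i)) ∧
      ∀ i j, c i = c j ↔ (2 * n : ℤ) ∣ j - i := by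
  let T : Equiv.Perm (ZMod 2 × α) :=
    { toFun := fun p => (p.1 + 1, h p.1 p.2)
      invFun := fun p => (p.1 - 1, h (p.1 - 1) p.2)
      left_inv := fun p => by simp [hinv p.1 p.2]
      right_inv := fun p => by simp [hinv (p.1 - 1) p.2] }
  have hT (i : ℤ) : (T ^ (i + 1)) (0, w) = T ((T ^ i) (0, w)) := by
    rw [add_comm, zpow_one_add, Equiv.Perm.mul_apply]
  have hfst (i : ℤ) : ((T ^ i) (0, w)).1 = i := by
    induction i with
    | zero => simp
    | succ i ih => simp only [hT, T, Equiv.coe_fn_mk, ih, Int.cast_add, Int.cast_one]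
    | pred i ih =>
      have := congrArg Prod.fst (hT (-i - 1))
      rw [sub_add_cancel, ih] at this
      rw [Int.cast_sub, this]
      simp [T]
  have hc (i : ℤ) : ((T ^ (i + 1)) (0, w)).2 = h i ((T ^ i) (0, w)).2 := by
    simp only [hT, T, Equiv.coe_fn_mk, hfst]
  obtain ⟨N, hNpos, hN⟩ : ∃ N : ℕ, 0 < N ∧
      ∀ i : ℤ, (T ^ i) (0, w) = (0, w) ↔ (N : ℤ) ∣ i :=
    ⟨_, Function.minimalPeriod_pos_of_mem_periodicPts (T.injective.mem_periodicPts (0, w)),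
      fun i => MulAction.zpow_smul_eq_iff_minimalPeriod_dvd (a := T)⟩
  obtain ⟨n, rfl⟩ : 2 ∣ N := by
    rw [← ZMod.natCast_eq_zero_iff, ← Int.cast_natCast, ← hfst, (hN N).2 dvd_rfl]
  push_cast at hN
  refine ⟨n, fun i => ((T ^ i) (0, w)).2, by omega, hc, fun i j => ?_⟩
  rw [← hN, sub_eq_neg_add, zpow_add, zpow_neg, Equiv.Perm.mul_apply, Equiv.Perm.inv_eq_iff_eq]
  refine ⟨fun hij => Prod.ext ?_ hij.symm, fun hij => congrArg Prod.snd hij.symm⟩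
  rw [hfst, hfst, ZMod.intCast_eq_intCast_iff_dvd_sub, Nat.cast_two, ← even_iff_two_dvd]
  exact even_sub_of_alternating (c := fun i => ((T ^ i) (0, w)).2) hinv hfix hc hij.symm

end AlternatingSequence

section Matching

variable {V : Type*} {G : SimpleGraph V} {u v : G.edgeSet →₀ ℕ}

lemma IsMatchingExp.exists_partner (hu : IsMatchingExp u) {W : Finset V}
    (hW : (multidegree G u).support = W) :
    ∃ π : W → W, Function.Involutive π ∧ ∀ x : W, G.Adj x (π x) ∧ edgeExp G (x : V) (π x) ≤ u := by
  subst hW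
  have partner (x : (multidegree G u).support) :
      ∃ y : (multidegree G u).support, G.Adj x y ∧ edgeExp G (x : V) y ≤ u := by
    obtain ⟨y, hxy, hy⟩ := multidegree_apply_ne_zero_iff.1 (Finsupp.mem_support_iff.1 x.2)
    exact ⟨⟨y, Finsupp.mem_support_iff.2 <| multidegree_apply_ne_zero_iff.2
      ⟨x, hxy.symm, edgeExp_comm (G := G) x.1 y ▸ hy⟩⟩, hxy, hy⟩
  choose π hadj hle using partner
  refine ⟨π, fun x => Subtype.ext ?_, fun x => ⟨hadj x, hle x⟩⟩
  exact hu.eq_of_edgeExp_le (hadj (π x)) (hadj x).symm (hle (π x))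
    (edgeExp_comm (G := G) x.1 _ ▸ hle x)

-- Following the edges of `u` and of `v` in turn gives the cycle; it exhausts `u` and `v`, since
-- otherwise exchanging its two perfect matchings inside `u` connects `u` to `v`.
lemma IsMatchingExp.exists_isEvenCycle (hu : IsMatchingExp u)
    (hdeg : multidegree G u = multidegree G v) (hn : ¬FiberConnected u v) :
    ∃ n c, IsEvenCycle G n c ∧ altEdges G c 0 n = u ∧ altEdges G c 1 n = v := by
  have hv : IsMatchingExp v := fun x => hdeg ▸ hu x
  obtain ⟨π, hπ, hle⟩ := hu.exists_partner rfl
  obtain ⟨π', hπ', hle'⟩ := hv.exists_partner (congrArg _ hdeg.symm)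
  have hu0 : u ≠ 0 := by
    rintro rfl
    have := multidegree_eq_zero_iff.1 (hdeg.symm.trans (map_zero _))
    exact hn (this ▸ .refl)
  obtain ⟨w, hw⟩ : (multidegree G u).support.Nonempty :=
    Finsupp.support_nonempty_iff.2 (mt multidegree_eq_zero_iff.1 hu0)
  let h (b : ZMod 2) : (multidegree G u).support → (multidegree G u).support :=
    if b = 0 then π else π'
  have hinv (b : ZMod 2) : Function.Involutive (h b) := by
    dsimp only [h]
    split_ifs <;> assumption
  have hadj (b : ZMod 2) (x : (multidegree G u).support) : G.Adj (x : V) (h b x) := by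
    dsimp only [h]
    split_ifs
    exacts [(hle x).1, (hle' x).1]
  obtain ⟨n, c, hn0, hc, hper⟩ := exists_periodic_alternating hinv
    (fun b x hx => (hadj b x).ne (congrArg Subtype.val hx.symm)) ⟨w, hw⟩
  have C : IsEvenCycle G n fun i => (c i : V) :=
    ⟨hn0, fun i => hc i ▸ hadj _ _, fun i j => Subtype.ext_iff.symm.trans (hper i j)⟩
  have hmem {b : ℤ} {m : G.edgeSet →₀ ℕ} (hm : ∀ x : (multidegree G u).support,
      edgeExp G (x : V) (h b x) ≤ m) : altEdges G (fun i => (c i : V)) b n ≤ m := by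
    refine C.altEdges_le fun l => ?_
    have hb : ((b + 2 * l : ℤ) : ZMod 2) = b := by
      rw [ZMod.intCast_eq_intCast_iff_dvd_sub]
      exact ⟨-l, by push_cast; ring⟩
    have := hm (c (b + 2 * l))
    rwa [← hb, ← hc] at this
  have hle0 := hmem (b := 0) fun x => by simpa [h] using (hle x).2
  have hle1 := hmem (b := 1) fun x => by simpa [h] using (hle' x).2
  refine ⟨n, _, C, ?_, ?_⟩ <;> by_contra hne
  · exact hn (fiberConnected_of_multidegree_eq_of_le hdeg (C.multidegree_altEdges_congr 0 1)
      (C.altEdges_ne_zero 0) hle0 hne hle1)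
  · exact hn (fiberConnected_of_multidegree_eq_of_le hdeg.symm (C.multidegree_altEdges_congr 1 0)
      (C.altEdges_ne_zero 1) hle1 hne hle0).symm

end Matching

/-! ### Chords of a separating cycle -/

section Chords

variable {V : Type*} {G : SimpleGraph V} {c : ℤ → V} {n : ℕ} {i j k l x y z w : ℤ}

/-- Four positions in cyclic order on a cycle of length `2 * n`, consecutive ones being at odd
distance: the ends of two crossing chords `{c x, c y}` and `{c z, c w}` at even distance. -/
structure IsOddQuadruple (n : ℕ) (x z y w : ℤ) : Prop where
  x_lt_z : x < z
  z_lt_y : z < y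
  y_lt_w : y < w
  w_lt : w < x + 2 * n
  odd_xz : (z - x) % 2 = 1
  odd_zy : (y - z) % 2 = 1
  odd_yw : (w - y) % 2 = 1

-- The exponent vector is completed by matching up the four arcs cut out by the chords.
lemma IsEvenCycle.exists_of_crossing (C : IsEvenCycle G n c) (Q : IsOddQuadruple n x z y w)
    (hxy : G.Adj (c x) (c y)) (hzw : G.Adj (c z) (c w)) :
    ∃ t, multidegree G t = arcVertices c 0 (2 * n) ∧
      edgeExp G (c x) (c y) ≤ t ∧ edgeExp G (c z) (c w) ≤ t ∧
      (x + 1 < z ∨ y + 1 < w → FiberConnected t (altEdges G c (x + 1) n)) ∧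
      (z + 1 < y ∨ w + 1 < x + 2 * n → FiberConnected t (altEdges G c x n)) := by
  obtain ⟨h₁, h₂, h₃, h₄, o₁, o₂, o₃⟩ := Q
  obtain ⟨a₁, rfl⟩ : ∃ a : ℕ, z = x + 2 * a + 1 := ⟨((z - x) / 2).toNat, by omega⟩
  obtain ⟨a₂, rfl⟩ : ∃ a : ℕ, y = x + 2 * a₁ + 1 + 2 * a + 1 :=
    ⟨((y - (x + 2 * a₁ + 1)) / 2).toNat, by omega⟩
  obtain ⟨a₃, rfl⟩ : ∃ a : ℕ, w = x + 2 * a₁ + 1 + 2 * a₂ + 1 + 2 * a + 1 :=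
    ⟨((w - (x + 2 * a₁ + 1 + 2 * a₂ + 1)) / 2).toNat, by omega⟩
  obtain ⟨a₄, ha₄⟩ : ∃ a : ℕ, n = a₁ + a₂ + a₃ + a + 2 := ⟨n - (a₁ + a₂ + a₃ + 2), by omega⟩
  set z := x + 2 * a₁ + 1
  set y := z + 2 * a₂ + 1
  set w := y + 2 * a₃ + 1
  let t := edgeExp G (c x) (c y) + edgeExp G (c z) (c w) + altEdges G c (x + 1) a₁ +
    altEdges G c (z + 1) a₂ + altEdges G c (y + 1) a₃ + altEdges G c (w + 1) a₄
  have ht : multidegree G t = arcVertices c 0 (2 * n) := by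
    rw [← C.arcVertices_eq x, show 2 * n =
      2 * a₁ + 1 + (2 * a₂ + 1 + (2 * a₃ + 1 + (2 * a₄ + 1 + 0))) by omega]
    simp only [arcVertices_split C.adj, t, map_add, multidegree_edgeExp hxy,
      multidegree_edgeExp hzw, z, y, w]
    simp only [arcVertices, Finset.range_zero, Finset.sum_empty]
    abel
  have conn {i j : ℤ} {a : ℕ} (hij : (j - i) % 2 = 0) (ha : 0 < a) (h : altEdges G c j a ≤ t) :
      FiberConnected t (altEdges G c i n) :=
    C.altEdges_eq_of_even_sub (Int.even_iff.2 hij) ▸ C.fiberConnected_of_altEdges_le ht ha h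
  obtain ⟨le₁, le₂, le₃, le₄, le₅, le₆⟩ : edgeExp G (c x) (c y) ≤ t ∧ edgeExp G (c z) (c w) ≤ t ∧
      altEdges G c (x + 1) a₁ ≤ t ∧ altEdges G c (z + 1) a₂ ≤ t ∧ altEdges G c (y + 1) a₃ ≤ t ∧
      altEdges G c (w + 1) a₄ ≤ t := by
    refine ⟨?_, ?_, ?_, ?_, ?_, ?_⟩ <;> intro e <;> simp only [t, Finsupp.add_apply] <;> omega
  refine ⟨t, ht, le₁, le₂, ?_, ?_⟩ <;> rintro (h | h)
  exacts [conn (by omega) (by omega) le₃, conn (by omega) (by omega) le₅,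
    conn (by omega) (by omega) le₄, conn (by omega) (by omega) le₆]

/-- An even cycle whose two perfect matchings lie in different components of their fiber. -/
structure IsSeparatingCycle (G : SimpleGraph V) (n : ℕ) (c : ℤ → V) : Prop
    extends IsEvenCycle G n c where
  not_fiberConnected : ¬FiberConnected (altEdges G c 0 n) (altEdges G c 1 n)

namespace IsSeparatingCycle

lemma even_sub_of_fiberConnected (C : IsSeparatingCycle G n c) {s t : G.edgeSet →₀ ℕ}
    (hst : FiberConnected s t) (hs : FiberConnected s (altEdges G c i n))
    (ht : FiberConnected t (altEdges G c j n)) : (j - i) % 2 = 0 := by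
  have hij : FiberConnected (altEdges G c i n) (altEdges G c j n) := (hs.symm.trans hst).trans ht
  by_contra hodd
  rcases Int.emod_two_eq_zero_or_one i with hi | hi
  · rw [C.altEdges_eq_of_even_sub (i := 0) (Int.even_iff.2 (by omega)),
      C.altEdges_eq_of_even_sub (i := 1) (j := j) (Int.even_iff.2 (by omega))] at hij
    exact C.not_fiberConnected hij
  · rw [C.altEdges_eq_of_even_sub (i := 1) (Int.even_iff.2 (by omega)),
      C.altEdges_eq_of_even_sub (i := 0) (j := j) (Int.even_iff.2 (by omega))] at hij
    exact C.not_fiberConnected hij.symm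

lemma not_adj_of_odd_sub (C : IsSeparatingCycle G n c) (hodd : (j - i) % 2 = 1) (hij : i + 1 < j)
    (hji : j + 1 < i + 2 * n) : ¬G.Adj (c i) (c j) := by
  intro h
  obtain ⟨a, rfl⟩ : ∃ a : ℕ, j = i + 2 * a + 1 := ⟨((j - i) / 2).toNat, by omega⟩
  obtain ⟨b, rfl⟩ : ∃ b : ℕ, n = a + b + 1 := ⟨n - (a + 1), by omega⟩
  let t := edgeExp G (c i) (c (i + 2 * a + 1)) + altEdges G c (i + 1) a +
    altEdges G c (i + 2 * a + 1 + 1) b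
  have ht : multidegree G t = arcVertices c 0 (2 * (a + b + 1)) := by
    rw [← C.arcVertices_eq i, show 2 * (a + b + 1) = 2 * a + 1 + (2 * b + 1 + 0) by omega]
    simp only [arcVertices_split C.adj, t, map_add, multidegree_edgeExp h]
    simp only [arcVertices, Finset.range_zero, Finset.sum_empty]
    abel
  have h₁ : FiberConnected t (altEdges G c (i + 1) (a + b + 1)) :=
    C.fiberConnected_of_altEdges_le ht (a := a) (by omega)
      (le_add_self.trans le_self_add)
  have h₂ : FiberConnected t (altEdges G c (i + 2 * a + 1 + 1) (a + b + 1)) :=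
    C.fiberConnected_of_altEdges_le ht (a := b) (by omega) le_add_self
  have := C.even_sub_of_fiberConnected .refl h₁ h₂
  omega

lemma adj_or_adj_of_gapFree (hG : GapFree G) (C : IsSeparatingCycle G n c)
    (hodd : (j - i) % 2 = 1) (hij : i + 1 < j) (hji : j + 1 < i + 2 * n) :
    G.Adj (c i) (c (j + 1)) ∨ G.Adj (c (i + 1)) (c j) := by
  have ne {k l : ℤ} (h₁ : k < l) (h₂ : l < k + 2 * n) : c k ≠ c l := C.ne h₁ h₂
  obtain ⟨x, hx, y, hy, hxy⟩ := hG s(c i, c (i + 1)) (C.adj i) s(c j, c (j + 1)) (C.adj j)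
  rcases Sym2.mem_iff.1 hx with rfl | rfl <;> rcases Sym2.mem_iff.1 hy with rfl | rfl <;>
    rcases hxy with h | h
  · exact absurd h (ne (by omega) (by omega))
  · exact absurd h (C.not_adj_of_odd_sub hodd hij hji)
  · exact absurd h (ne (by omega) (by omega))
  · exact .inl h
  · exact absurd h (ne (by omega) (by omega))
  · exact .inr h
  · exact absurd h (ne (by omega) (by omega))
  · exact absurd h (C.not_adj_of_odd_sub (by omega) (by omega) (by omega))

-- A third chord at odd distance, provided by gap-freeness, crosses one of the two chords; the two
-- crossing pairs give exponent vectors that share an edge and see different matchings.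
lemma not_adj_of_parallel_of_add_four_le (hG : GapFree G) (C : IsSeparatingCycle G n c)
    (heven : (j - i) % 2 = 0) (hij : i + 4 ≤ j) (hji : j < i + 2 * n) (h : G.Adj (c i) (c j)) :
    ¬G.Adj (c (i + 1)) (c (j + 1)) := by
  intro h'
  obtain ⟨t, ht, hit, hjt, -, hconn⟩ := C.exists_of_crossing (x := i) (z := i + 1) (y := j)
    (w := j + 1) (by constructor <;> omega) h h'
  have key {s e} (hs : multidegree G s = arcVertices c 0 (2 * n)) (he : e ≠ 0) (het : e ≤ t)
      (hes : e ≤ s) : ¬FiberConnected s (altEdges G c (i + 1) n) := fun hsc => by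
    have := C.even_sub_of_fiberConnected
      (fiberAdj_of_le (ht.trans hs.symm) he het hes).fiberConnected
      (hconn (by omega)) hsc
    omega
  rcases C.adj_or_adj_of_gapFree hG (i := i + 2) (j := j + 1) (by omega) (by omega) (by omega)
    with h'' | h''
  · obtain ⟨s, hs, hse, -, -, hsc⟩ := C.exists_of_crossing (x := i + 1) (z := i + 2) (y := j + 1)
      (w := j + 1 + 1) (by constructor <;> omega) h' h''
    exact key hs (edgeExp_ne_zero h') hjt hse (hsc (by omega))
  · obtain ⟨s, hs, hse, -, hsc, -⟩ := C.exists_of_crossing (x := i) (z := i + 2 + 1) (y := j)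
      (w := j + 1) (by constructor <;> omega) h h''
    exact key hs (edgeExp_ne_zero h) hit hse (hsc (by omega))

lemma not_adj_of_parallel (hG : GapFree G) (C : IsSeparatingCycle G n c) (hn : 3 ≤ n)
    (heven : (j - i) % 2 = 0) (hij : i < j) (hji : j < i + 2 * n) (h : G.Adj (c i) (c j)) :
    ¬G.Adj (c (i + 1)) (c (j + 1)) := by
  intro h'
  rcases le_or_gt (i + 4) j with h4 | h4
  · exact C.not_adj_of_parallel_of_add_four_le hG heven h4 hji h h'
  · refine C.not_adj_of_parallel_of_add_four_le hG (i := j) (j := i + 2 * n) (by omega) (by omega)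
      (by omega) ?_ ?_
    · rw [C.add_period]
      exact h.symm
    · rw [add_right_comm, C.add_period]
      exact h'.symm

lemma not_adj_of_crossing (hG : GapFree G) (C : IsSeparatingCycle G n c) (hn : 3 ≤ n)
    (Q : IsOddQuadruple n x z y w) (hxy : G.Adj (c x) (c y)) : ¬G.Adj (c z) (c w) := by
  intro hzw
  obtain ⟨t, -, -, -, hc₁, hc₂⟩ := C.exists_of_crossing Q hxy hzw
  obtain ⟨h₁, h₂, h₃, h₄, o₁, o₂, o₃⟩ := Q
  by_cases k₁ : x + 1 < z ∨ y + 1 < w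
  · by_cases k₂ : z + 1 < y ∨ w + 1 < x + 2 * n
    · have := C.even_sub_of_fiberConnected .refl (hc₁ k₁) (hc₂ k₂)
      omega
    · obtain rfl : y = z + 1 := by omega
      have hw : w + 1 = x + 2 * n := by omega
      refine C.not_adj_of_parallel hG hn (by omega) (by omega) (by omega) hzw ?_
      rw [hw, C.add_period]
      exact hxy.symm
  · obtain rfl : z = x + 1 := by omega
    obtain rfl : w = y + 1 := by omega
    exact C.not_adj_of_parallel hG hn (by omega) (by omega) (by omega) hxy hzw

lemma not_adj_of_nested (hG : GapFree G) (C : IsSeparatingCycle G n c) (hn : 3 ≤ n) (hxz : x < z)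
    (hzw : z < w) (hwy : w < y) (hyx : y < x + 2 * n) (oxz : (z - x) % 2 = 1)
    (ezw : (w - z) % 2 = 0) (owy : (y - w) % 2 = 1) (hxy : G.Adj (c x) (c y)) :
    ¬G.Adj (c z) (c w) := by
  intro h
  rcases C.adj_or_adj_of_gapFree hG (i := z) (j := y) (by omega) (by omega) (by omega) with h' | h'
  · exact C.not_adj_of_crossing hG hn (x := x) (y := y) (by constructor <;> omega) hxy h'
  · exact C.not_adj_of_crossing hG hn (x := z) (y := w) (by constructor <;> omega) h h'

lemma not_adj_of_mem_window (hG : GapFree G) (C : IsSeparatingCycle G n c) (hn : 3 ≤ n)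
    (hij : i < j) (hji : j < i + 2 * n) (eij : (j - i) % 2 = 0) (hik : i < k) (hkl : k < l)
    (hli : l < i + 2 * n) (ekl : (l - k) % 2 = 0) (oik : (k - i) % 2 = 1)
    (h : G.Adj (c i) (c j)) : ¬G.Adj (c k) (c l) := by
  rcases lt_or_ge l j with hlj | hjl
  · exact C.not_adj_of_nested hG hn (x := i) (y := j) hik hkl hlj hji oik ekl (by omega) h
  rcases lt_or_ge k j with hkj | hjk
  · exact C.not_adj_of_crossing hG hn (x := i) (y := j) (by constructor <;> omega) h
  · refine C.not_adj_of_nested hG hn (x := j) (y := i + 2 * n) (by omega) hkl hli (by omega)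
      (by omega) ekl (by omega) ?_
    rw [C.add_period]
    exact h.symm

lemma not_adj_of_mixed_parity (hG : GapFree G) (C : IsSeparatingCycle G n c) (hn : 3 ≤ n)
    (hij : (j - i) % 2 = 0) (hkl : (l - k) % 2 = 0) (hik : (k - i) % 2 = 1)
    (h : G.Adj (c i) (c j)) : ¬G.Adj (c k) (c l) := by
  intro h'
  obtain ⟨j', hj₁, hj₂, hj, ej⟩ := C.exists_mem_window i j
  obtain ⟨k', hk₁, hk₂, hk, ek⟩ := C.exists_mem_window i k
  obtain ⟨l', hl₁, hl₂, hl, el⟩ := C.exists_mem_window i l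
  rw [Int.even_iff] at ej ek el
  rw [← hj] at h
  rw [← hk, ← hl] at h'
  have hij' : i ≠ j' := fun e => h.ne (congrArg c e)
  rcases lt_trichotomy k' l' with hlt | rfl | hlt
  · exact C.not_adj_of_mem_window hG hn (by omega) hj₂ (by omega) (by omega) hlt hl₂ (by omega)
      (by omega) h h'
  · exact h'.ne rfl
  · exact C.not_adj_of_mem_window hG hn (by omega) hj₂ (by omega) (by omega) hlt hk₂ (by omega)
      (by omega) h h'.symm

lemma exists_independent_parity (hG : GapFree G) (C : IsSeparatingCycle G n c) (hn : 3 ≤ n) :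
    ∃ r, ∀ i j, (i - r) % 2 = 0 → (j - r) % 2 = 0 → ¬G.Adj (c i) (c j) := by
  by_contra! hadj
  obtain ⟨i, j, hi, hj, h⟩ := hadj 0
  obtain ⟨k, l, hk, hl, h'⟩ := hadj 1
  exact C.not_adj_of_mixed_parity hG hn (by omega) (by omega) (by omega) h h'

end IsSeparatingCycle

end Chords

section TwoElementFibers

variable {V : Type*} {G : SimpleGraph V} {c : ℤ → V} {n : ℕ} {i j : ℤ} {t u v : G.edgeSet →₀ ℕ}

namespace IsSeparatingCycle

lemma eq_or_eq_of_adj_of_odd_sub (C : IsSeparatingCycle G n c) (hodd : (j - i) % 2 = 1)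
    (h : G.Adj (c i) (c j)) : c j = c (i + 1) ∨ c j = c (i - 1) := by
  obtain ⟨j', hj₁, hj₂, hj, ej⟩ := C.exists_mem_window i j
  rw [Int.even_iff] at ej
  rw [← hj] at h ⊢
  rcases eq_or_ne j' (i + 1) with rfl | h₁
  · exact .inl rfl
  · have h₂ : j' + 1 = i + 2 * n := by
      by_contra h₂
      exact C.not_adj_of_odd_sub (by omega) (by omega) (by omega) h
    exact .inr ((congrArg c (by omega)).trans (C.add_period (i - 1)))

lemma edgeExp_le_or_edgeExp_le {r : ℤ}
    (hr : ∀ i j, (i - r) % 2 = 0 → (j - r) % 2 = 0 → ¬G.Adj (c i) (c j))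
    (C : IsSeparatingCycle G n c) (ht : multidegree G t = arcVertices c 0 (2 * n))
    (hi : (i - r) % 2 = 0) :
    edgeExp G (c i) (c (i + 1)) ≤ t ∨ edgeExp G (c (i - 1)) (c i) ≤ t := by
  have mem_support : ∀ x y, G.Adj x y → edgeExp G x y ≤ t → ∃ j, c j = x := fun x y hxy h =>
    exists_eq_of_arcVertices_apply_ne_zero (ht ▸ multidegree_apply_ne_zero_iff.2 ⟨y, hxy, h⟩)
  have hci : multidegree G t (c i) ≠ 0 := by
    rw [ht, ← C.multidegree_altEdges_eq i]
    exact multidegree_apply_ne_zero_iff.2 ⟨_, C.adj i, edgeExp_le_altEdges c i C.pos⟩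
  obtain ⟨y, hy, hle⟩ := multidegree_apply_ne_zero_iff.1 hci
  obtain ⟨j, rfl⟩ := mem_support y (c i) hy.symm (edgeExp_comm (G := G) (c i) y ▸ hle)
  have hodd : (j - i) % 2 = 1 := by
    by_contra heven
    exact hr i j hi (by omega) hy
  rcases C.eq_or_eq_of_adj_of_odd_sub hodd hy with h | h <;> rw [h] at hle
  · exact .inl hle
  · exact .inr (edgeExp_comm (G := G) (c i) _ ▸ hle)

-- Every vertex of an independent parity class is matched to one of its two neighbours on the
-- cycle, and to the same side throughout since the cycle is separating.
lemma eq_or_eq_of_multidegree_eq (hG : GapFree G) (C : IsSeparatingCycle G n c) (hn : 3 ≤ n)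
    (ht : multidegree G t = arcVertices c 0 (2 * n)) :
    t = altEdges G c 0 n ∨ t = altEdges G c 1 n := by
  obtain ⟨r, hr⟩ := C.exists_independent_parity hG hn
  suffices ∃ i, altEdges G c i n ≤ t by
    obtain ⟨i, hi⟩ := this
    rw [← eq_of_le_of_multidegree_eq hi ((C.multidegree_altEdges_eq i).trans ht.symm)]
    rcases Int.emod_two_eq_zero_or_one i with h | h
    · exact .inl (C.altEdges_eq_of_even_sub (Int.even_iff.2 (by omega)))
    · exact .inr (C.altEdges_eq_of_even_sub (Int.even_iff.2 (by omega)))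
  have not_both {i j : ℤ} (hij : (j - i) % 2 = 1) (hi : edgeExp G (c i) (c (i + 1)) ≤ t) :
      ¬edgeExp G (c j) (c (j + 1)) ≤ t := fun hj => by
    have := C.even_sub_of_fiberConnected .refl (C.fiberConnected_of_edgeExp_le ht hi)
      (C.fiberConnected_of_edgeExp_le ht hj)
    omega
  have next_or_prev (i : ℤ) (hi : (i - r) % 2 = 0) := C.edgeExp_le_or_edgeExp_le hr ht hi
  by_cases hnext : edgeExp G (c r) (c (r + 1)) ≤ t
  · refine ⟨r, C.altEdges_le fun l => (next_or_prev (r + 2 * l) (by omega)).resolve_right ?_⟩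
    have := not_both (j := r + 2 * l - 1) (by omega) hnext
    rwa [sub_add_cancel] at this
  · have hprev := (next_or_prev r (by omega)).resolve_left hnext
    refine ⟨r - 1, C.altEdges_le fun l => ?_⟩
    rw [show r - 1 + 2 * l + 1 = r + 2 * l by ring, show r - 1 + 2 * l = r + 2 * l - 1 by ring]
    refine (next_or_prev (r + 2 * l) (by omega)).resolve_left (not_both (i := r - 1) (by omega) ?_)
    rwa [sub_add_cancel]

end IsSeparatingCycle

lemma GapFree.eq_or_eq_of_not_fiberConnected (hG : GapFree G)
    (huv : multidegree G u = multidegree G v) (hn : ¬FiberConnected u v) (h3 : 3 ≤ u.degree)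
    (ht : multidegree G t = multidegree G u) : t = u ∨ t = v := by
  obtain ⟨n, c, C, rfl, rfl⟩ := (hG.isMatchingExp huv hn).exists_isEvenCycle huv hn
  refine IsSeparatingCycle.eq_or_eq_of_multidegree_eq hG ⟨C, hn⟩ ?_
    (ht.trans (C.multidegree_altEdges_eq 0))
  have := degree_multidegree (altEdges G c 0 n)
  rw [C.multidegree_altEdges_eq, degree_arcVertices] at this
  omega

end TwoElementFibers

/-! ### Discrete fibers -/

section DiscreteFibers

variable {V : Type*} {G : SimpleGraph V} {W : Finset V} {m t u v : G.edgeSet →₀ ℕ}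

lemma IsMatchingExp.eq_of_support_eq (hu : IsMatchingExp u) (hv : IsMatchingExp v)
    (h : u.support = v.support) : u = v :=
  (hu.le_of_support_subset h.subset).antisymm (hv.le_of_support_subset h.symm.subset)

/-- The perfect matchings of the subgraph of `G` induced on `W`, as exponent vectors: the fiber of
`multidegree G` over the indicator vector of `W`. -/
def perfectMatchings (G : SimpleGraph V) (W : Finset V) : Set (G.edgeSet →₀ ℕ) :=
  {u | IsMatchingExp u ∧ (multidegree G u).support = W}

lemma finite_perfectMatchings [Finite V] (G : SimpleGraph V) (W : Finset V) :
    (perfectMatchings G W).Finite :=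
  .of_injOn (f := Finsupp.support) (Set.mapsTo_univ _ _)
    (fun _ hu _ hv => hu.1.eq_of_support_eq hv.1) Set.finite_univ

lemma multidegree_eq_of_mem_perfectMatchings (hu : u ∈ perfectMatchings G W)
    (hv : v ∈ perfectMatchings G W) : multidegree G u = multidegree G v := by
  ext x
  have hx := hu.1 x
  have hx' := hv.1 x
  have : multidegree G u x ≠ 0 ↔ multidegree G v x ≠ 0 := by
    rw [← Finsupp.mem_support_iff, ← Finsupp.mem_support_iff, hu.2, hv.2]
  omega

lemma mem_perfectMatchings_of_multidegree_eq (hu : u ∈ perfectMatchings G W)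
    (h : multidegree G u = multidegree G v) : v ∈ perfectMatchings G W :=
  ⟨fun x => h ▸ hu.1 x, h ▸ hu.2⟩

lemma card_eq_of_mem_perfectMatchings (hu : u ∈ perfectMatchings G W) :
    W.card = 2 * u.degree := by
  rw [← degree_multidegree, Finsupp.degree_apply, hu.2, Finset.card_eq_sum_ones]
  refine Finset.sum_congr rfl fun x hx => ?_
  rw [← hu.2, Finsupp.mem_support_iff] at hx
  have := hu.1 x
  omega

/-- `W` carries at least two perfect matchings, and no two of them share an edge, so that the
components of the fiber over the indicator vector of `W` are single points. -/
def IsDiscreteFiber (G : SimpleGraph V) (W : Finset V) : Prop :=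
  (perfectMatchings G W).Nontrivial ∧ (perfectMatchings G W).PairwiseDisjoint Finsupp.support

lemma IsDiscreteFiber.eq_of_fiberAdj (hW : IsDiscreteFiber G W) (hu : u ∈ perfectMatchings G W)
    (h : FiberAdj u v) : v = u := by
  by_contra hne
  obtain ⟨hdeg, e, hue, hve⟩ := h
  exact Finset.disjoint_left.1 (hW.2 (mem_perfectMatchings_of_multidegree_eq hu hdeg) hu hne)
    (Finsupp.mem_support_iff.2 hve) (Finsupp.mem_support_iff.2 hue)

lemma GapFree.isDiscreteFiber (hG : GapFree G) (hdeg : multidegree G u = multidegree G v)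
    (hn : ¬FiberConnected u v) : IsDiscreteFiber G (multidegree G u).support := by
  have hu : u ∈ perfectMatchings G (multidegree G u).support := ⟨hG.isMatchingExp hdeg hn, rfl⟩
  refine ⟨⟨u, hu, v, mem_perfectMatchings_of_multidegree_eq hu hdeg, ?_⟩, ?_⟩
  · rintro rfl
    exact hn .refl
  intro t ht s hs hts
  refine Finset.disjoint_left.2 fun e hte hse => hts ?_
  rw [Finsupp.mem_support_iff] at hte hse
  have htu := multidegree_eq_of_mem_perfectMatchings ht hu
  have hsu := multidegree_eq_of_mem_perfectMatchings hs hu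
  have hadj : FiberAdj t s := ⟨htu.trans hsu.symm, e, hte, hse⟩
  rcases le_or_gt u.degree 2 with h2 | h3
  · exact hadj.eq_of_degree_le_two (degree_eq_of_multidegree_eq htu ▸ h2)
  · rcases hG.eq_or_eq_of_not_fiberConnected hdeg hn h3 htu with rfl | rfl <;>
      rcases hG.eq_or_eq_of_not_fiberConnected hdeg hn h3 hsu with rfl | rfl
    exacts [rfl, absurd hadj.fiberConnected hn, absurd hadj.symm.fiberConnected hn, rfl]

-- A perfect matching of `W` is determined by the partner of one fixed vertex.
lemma IsDiscreteFiber.ncard_lt_card (hW : IsDiscreteFiber G W) :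
    (perfectMatchings G W).ncard < W.card := by
  classical
  obtain ⟨u, hu, v, hv, huv⟩ := hW.1
  obtain ⟨a, ha⟩ : W.Nonempty := by
    rw [← Finset.card_pos, card_eq_of_mem_perfectMatchings hu]
    by_contra h0
    exact huv (eq_of_multidegree_eq_of_degree_le_one
      (multidegree_eq_of_mem_perfectMatchings hu hv) (by omega))
  have exists_partner (t : G.edgeSet →₀ ℕ) (ht : t ∈ perfectMatchings G W) :
      ∃ y ∈ W.erase a, G.Adj a y ∧ edgeExp G a y ≤ t := by
    obtain ⟨y, hay, hy⟩ := multidegree_apply_ne_zero_iff.1 (Finsupp.mem_support_iff.1 (ht.2 ▸ ha))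
    have hyW : multidegree G t y ≠ 0 :=
      multidegree_apply_ne_zero_iff.2 ⟨a, hay.symm, edgeExp_comm (G := G) a y ▸ hy⟩
    exact ⟨y, Finset.mem_erase.2 ⟨hay.ne', ht.2 ▸ Finsupp.mem_support_iff.2 hyW⟩, hay, hy⟩
  have : Nonempty V := ⟨a⟩
  choose! f hfW hadj hle using exists_partner
  have hinj : Set.InjOn f (perfectMatchings G W) := fun t ht s hs hts =>
    (hW.eq_of_fiberAdj ht <| fiberAdj_of_le (multidegree_eq_of_mem_perfectMatchings ht hs)
      (edgeExp_ne_zero (hadj t ht)) (hle t ht) (hts ▸ hle s hs)).symm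
  have := Set.ncard_le_ncard_of_injOn f hfW hinj (Finset.finite_toSet _)
  rw [Set.ncard_coe_finset] at this
  exact this.trans_lt (Finset.card_erase_lt_of_mem ha)

lemma GapFree.ncard_perfectMatchings_le_three (hG : GapFree G) (hW : IsDiscreteFiber G W) :
    (perfectMatchings G W).ncard ≤ 3 := by
  obtain ⟨u, hu, v, hv, huv⟩ := hW.1
  have hdeg := multidegree_eq_of_mem_perfectMatchings hu hv
  rcases le_or_gt u.degree 2 with h2 | h3
  · have := hW.ncard_lt_card
    rw [card_eq_of_mem_perfectMatchings hu] at this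
    omega
  · have hn : ¬FiberConnected u v := fun h =>
      huv (h.eq_of_isolated fun t ht => hW.eq_of_fiberAdj hu ht).symm
    have hsub : perfectMatchings G W ⊆ {u, v} := fun t ht =>
      hG.eq_or_eq_of_not_fiberConnected hdeg hn h3 (multidegree_eq_of_mem_perfectMatchings ht hu)
    exact (Set.ncard_le_ncard hsub).trans ((Set.ncard_pair huv).le.trans (by norm_num))

lemma GapFree.eq_of_support_ssubset (hG : GapFree G) (hm : ∀ t, FiberAdj m t → t = m)
    (hum : u.support ⊂ m.support) (hdeg : multidegree G u = multidegree G v) : v = u := by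
  induction hd : u.degree using Nat.strong_induction_on generalizing u v with
  | _ d ih =>
    have hiso (t) (ht : FiberAdj u t) : t = u := by
      obtain ⟨x, y, u', t', hxy, rfl, rfl, hdeg'⟩ := ht.exists_edgeExp_add
      rw [map_add, degree_edgeExp hxy] at hd
      have hsub : u'.support ⊆ (edgeExp G x y + u').support := Finsupp.support_mono le_add_self
      rw [ih u'.degree (by omega) (hsub.trans_ssubset hum) hdeg' rfl]
    by_cases hn : FiberConnected u v
    · exact hn.eq_of_isolated hiso
    · have hle : u ≤ m := (hG.isMatchingExp hdeg hn).le_of_support_subset hum.subset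
      obtain ⟨e, hem, heu⟩ := Finset.exists_of_ssubset hum
      obtain ⟨r, rfl⟩ := exists_add_of_le hle
      rw [Finsupp.mem_support_iff, Finsupp.add_apply] at hem
      rw [Finsupp.notMem_support_iff] at heu
      refine add_right_cancel (hm (v + r) ⟨by rw [map_add, map_add, hdeg], e, hem, ?_⟩)
      rw [Finsupp.add_apply]
      omega

open Classical in
/-- The number of binomials needed to connect all the discrete fibers: a fiber with `k` elements
needs `k - 1` of them. -/
noncomputable def discreteFiberRank [Fintype V] (G : SimpleGraph V) : ℕ :=
  ∑ W with IsDiscreteFiber G W, ((perfectMatchings G W).ncard - 1)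

end DiscreteFibers

/-! ### The toric ideal -/

section ToricIdeal

variable {V : Type*} {G : SimpleGraph V} (K : Type*) [Field K]

lemma graphHom_monomial (u : G.edgeSet →₀ ℕ) :
    graphHom K G (monomial u 1) = monomial (multidegree G u) 1 := by
  induction u using Finsupp.induction_linear with
  | zero => simp
  | add u v hu hv =>
    rw [← one_mul (1 : K), ← monomial_mul, map_mul, hu, hv, monomial_mul, map_add]
  | single e n =>
    obtain ⟨e, he⟩ := e
    induction e with | _ x y
    rw [graphHom, aeval_monomial, map_one, one_mul, Finsupp.prod_single_index (by rw [pow_zero])]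
    simp [multidegree, X, monomial_pow, monomial_mul]

lemma monomial_sub_monomial_mem_toricIdealGraph_iff {u v : G.edgeSet →₀ ℕ} :
    monomial u 1 - monomial v 1 ∈ toricIdealGraph K G ↔ multidegree G u = multidegree G v := by
  change graphHom K G _ = 0 ↔ _
  rw [map_sub, graphHom_monomial, graphHom_monomial, sub_eq_zero]
  exact (monomial_left_injective one_ne_zero).eq_iff

variable {K} {J : Ideal (MvPolynomial G.edgeSet K)}

-- The quotient map of `J` factors linearly through `graphHom K G`.
lemma toricIdealGraph_le (hJ : ∀ u v, multidegree G u = multidegree G v →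
    monomial u 1 - monomial v 1 ∈ J) : toricIdealGraph K G ≤ J := by
  let ψ : MvPolynomial V K →ₗ[K] MvPolynomial G.edgeSet K ⧸ J :=
    (basisMonomials V K).constr K fun b =>
      Ideal.Quotient.mk J (monomial (Function.invFun (multidegree G) b) 1)
  have hψ : ψ ∘ₗ (graphHom K G).toLinearMap = (Ideal.Quotient.mkₐ K J).toLinearMap := by
    refine (basisMonomials G.edgeSet K).ext fun u => ?_
    have hu : ψ (monomial (multidegree G u) 1) = Ideal.Quotient.mk J
        (monomial (Function.invFun (multidegree G) (multidegree G u)) 1) := by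
      have h := (basisMonomials V K).constr_basis K (fun b => Ideal.Quotient.mk J
        (monomial (Function.invFun (multidegree G) b) 1)) (multidegree G u)
      rwa [coe_basisMonomials] at h
    rw [coe_basisMonomials, LinearMap.comp_apply, AlgHom.toLinearMap_apply, graphHom_monomial, hu]
    exact (Ideal.Quotient.eq).2 (hJ _ _ (Function.invFun_eq ⟨u, rfl⟩))
  intro f hf
  have hf' : ψ (graphHom K G f) = Ideal.Quotient.mk J f := LinearMap.congr_fun hψ f
  rwa [show graphHom K G f = 0 from hf, map_zero, eq_comm,
    Ideal.Quotient.eq_zero_iff_mem] at hf'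

-- A shared variable can be divided out, so fiber-connected pairs reduce to smaller degree.
lemma toricIdealGraph_le_of_forall_not_fiberConnected
    (hJ : ∀ u v, multidegree G u = multidegree G v → ¬FiberConnected u v →
      monomial u 1 - monomial v 1 ∈ J) : toricIdealGraph K G ≤ J := by
  refine toricIdealGraph_le fun u v huv => ?_
  induction hd : u.degree using Nat.strong_induction_on generalizing u v with
  | _ d ih =>
    by_cases hn : FiberConnected u v
    · suffices multidegree G u = multidegree G v ∧ monomial u 1 - monomial v 1 ∈ J from this.2
      clear huv
      induction hn with
      | refl => exact ⟨rfl, by rw [sub_self]; exact J.zero_mem⟩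
      | @tail t s _ hts hut =>
        obtain ⟨hdeg, hmem⟩ := hut
        refine ⟨hdeg.trans hts.1, ?_⟩
        obtain ⟨x, y, t', s', hxy, rfl, rfl, hdeg'⟩ := hts.exists_edgeExp_add
        have hlt : t'.degree < d := by
          rw [← hd, degree_eq_of_multidegree_eq hdeg, map_add, degree_edgeExp hxy]
          omega
        have h := J.mul_mem_left (monomial (edgeExp G x y) 1) (ih _ hlt t' s' hdeg' rfl)
        rw [mul_sub, monomial_mul, monomial_mul, one_mul] at h
        rw [← sub_add_sub_cancel]
        exact J.add_mem hmem h
    · exact hJ u v huv hn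

end ToricIdeal

/-! ### Generators of the toric ideal -/

section Generators

variable (K : Type*) [Field K]

lemma exists_finset_monomial_sub_mem_span {σ : Type*} {S : Set (σ →₀ ℕ)} (hS : S.Finite) :
    ∃ B : Finset (MvPolynomial σ K), B.card ≤ S.ncard - 1 ∧
      (∀ f ∈ B, ∃ u ∈ S, ∃ v ∈ S, f = monomial u 1 - monomial v 1) ∧
      ∀ u ∈ S, ∀ v ∈ S, monomial u 1 - monomial v 1 ∈ Ideal.span (B : Set (MvPolynomial σ K)) := by
  classical
  rcases S.eq_empty_or_nonempty with rfl | ⟨m, hm⟩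
  · exact ⟨∅, by simp⟩
  let B : Finset (MvPolynomial σ K) :=
    (hS.toFinset.erase m).image fun t => monomial m 1 - monomial t 1
  have base_mem (t : σ →₀ ℕ) (ht : t ∈ S) :
      monomial m 1 - monomial t 1 ∈ Ideal.span (B : Set (MvPolynomial σ K)) := by
    rcases eq_or_ne t m with rfl | hne
    · rw [sub_self]
      exact Submodule.zero_mem _
    · exact Ideal.subset_span (Finset.mem_image_of_mem _
        (Finset.mem_erase.2 ⟨hne, hS.mem_toFinset.2 ht⟩))
  refine ⟨B, ?_, ?_, fun u hu v hv => ?_⟩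
  · refine Finset.card_image_le.trans_eq ?_
    rw [Finset.card_erase_of_mem (hS.mem_toFinset.2 hm), Set.ncard_eq_toFinset_card S hS]
  · intro f hf
    obtain ⟨t, ht, rfl⟩ := Finset.mem_image.1 hf
    exact ⟨m, hm, t, hS.mem_toFinset.1 (Finset.mem_of_mem_erase ht), rfl⟩
  · rw [← sub_sub_sub_cancel_left _ _ (monomial m 1)]
    exact Submodule.sub_mem _ (base_mem v hv) (base_mem u hu)

lemma GapFree.exists_finset_span_eq_toricIdealGraph {V : Type*} [Fintype V] {G : SimpleGraph V}
    (hG : GapFree G) :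
    ∃ B : Finset (MvPolynomial G.edgeSet K), B.card ≤ discreteFiberRank G ∧
      (∀ f ∈ B, IsBinom f) ∧
      Ideal.span (B : Set (MvPolynomial G.edgeSet K)) = toricIdealGraph K G := by
  classical
  choose B hcard hbinom hspan using fun W : Finset V =>
    exists_finset_monomial_sub_mem_span K (finite_perfectMatchings G W)
  have hbinom' : ∀ f ∈ Finset.biUnion {W | IsDiscreteFiber G W} B, ∃ W, IsDiscreteFiber G W ∧
      ∃ u ∈ perfectMatchings G W, ∃ v ∈ perfectMatchings G W,
        f = monomial u 1 - monomial v 1 := by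
    intro f hf
    obtain ⟨W, hW, hf⟩ := Finset.mem_biUnion.1 hf
    exact ⟨W, (Finset.mem_filter.1 hW).2, hbinom W f hf⟩
  refine ⟨Finset.biUnion {W | IsDiscreteFiber G W} B,
    Finset.card_biUnion_le.trans (Finset.sum_le_sum fun W _ => hcard W), ?_, le_antisymm ?_ ?_⟩
  · intro f hf
    obtain ⟨-, -, u, -, v, -, rfl⟩ := hbinom' f hf
    exact ⟨u, v, rfl⟩
  · refine Ideal.span_le.2 fun f hf => ?_
    obtain ⟨W, -, u, hu, v, hv, rfl⟩ := hbinom' f hf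
    exact (monomial_sub_monomial_mem_toricIdealGraph_iff K).2
      (multidegree_eq_of_mem_perfectMatchings hu hv)
  · refine toricIdealGraph_le_of_forall_not_fiberConnected fun u v hdeg hn => ?_
    have hu : u ∈ perfectMatchings G (multidegree G u).support :=
      ⟨hG.isMatchingExp hdeg hn, rfl⟩
    refine Ideal.span_mono ?_
      (hspan _ u hu v (mem_perfectMatchings_of_multidegree_eq hu hdeg))
    exact Finset.subset_biUnion_of_mem B
      (Finset.mem_filter.2 ⟨Finset.mem_univ _, hG.isDiscreteFiber hdeg hn⟩)

end Generators

/-! ### Binomials generating up to radical -/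

section LowerBound

variable (K : Type*) [Field K]

open Classical in
/-- The point of affine space whose coordinates are `1` on the support of `m` and `0` elsewhere. -/
noncomputable def supportPoint {σ : Type*} (m : σ →₀ ℕ) : σ → K :=
  fun i => if i ∈ m.support then 1 else 0

open Classical in
lemma eval_supportPoint_monomial {σ : Type*} (m u : σ →₀ ℕ) :
    eval (supportPoint K m) (monomial u 1) = if u.support ⊆ m.support then 1 else 0 := by
  rw [eval_monomial, one_mul, Finsupp.prod]
  split_ifs with h
  · refine Finset.prod_eq_one fun i hi => ?_
    rw [supportPoint, if_pos (h hi), one_pow]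
  · obtain ⟨i, hiu, him⟩ := Finset.not_subset.1 h
    refine Finset.prod_eq_zero hiu ?_
    rw [supportPoint, if_neg him, zero_pow (Finsupp.mem_support_iff.1 hiu)]

lemma eval_supportPoint_monomial_sub_ne_zero_iff {σ : Type*} {m u v : σ →₀ ℕ} :
    eval (supportPoint K m) (monomial u 1 - monomial v 1) ≠ 0 ↔
      ¬(u.support ⊆ m.support ↔ v.support ⊆ m.support) := by
  classical
  rw [map_sub, eval_supportPoint_monomial, eval_supportPoint_monomial]
  by_cases hu : u.support ⊆ m.support <;> by_cases hv : v.support ⊆ m.support <;>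
    simp [hu, hv]

variable {K}

lemma exists_eval_ne_zero_of_mem_radical_span {σ ι : Type*} {B : ι → MvPolynomial σ K}
    {f : MvPolynomial σ K} (hf : f ∈ (Ideal.span (Set.range B)).radical) {a : σ → K}
    (ha : eval a f ≠ 0) : ∃ j, eval a (B j) ≠ 0 := by
  by_contra! hB
  have hle : Ideal.span (Set.range B) ≤ RingHom.ker (eval a) :=
    Ideal.span_le.2 (Set.range_subset_iff.2 hB)
  exact ha ((RingHom.ker_isPrime (eval a)).radical_le_iff.2 hle hf)

variable {V : Type*} {G : SimpleGraph V} {W : Finset V} {ι : Type*} {P Q : ι → G.edgeSet →₀ ℕ}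

-- Evaluate at the characteristic point of `m`: exactly one of `P j` and `Q j` lives on the support
-- of `m`, and a proper subset of that support carries no nontrivial fiber.
lemma GapFree.exists_support_eq_of_mem_perfectMatchings (hG : GapFree G)
    (hW : IsDiscreteFiber G W) (hPQ : ∀ j, multidegree G (P j) = multidegree G (Q j))
    (hrad : toricIdealGraph K G ≤
      (Ideal.span (Set.range fun j => monomial (P j) (1 : K) - monomial (Q j) 1)).radical)
    {m : G.edgeSet →₀ ℕ} (hm : m ∈ perfectMatchings G W) :
    ∃ j, (P j).support = m.support ∨ (Q j).support = m.support := by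
  obtain ⟨m', hm', hne⟩ := hW.1.exists_ne m
  have hnsub : ¬m'.support ⊆ m.support := fun hsub =>
    hne (eq_of_le_of_multidegree_eq (hm'.1.le_of_support_subset hsub)
      (multidegree_eq_of_mem_perfectMatchings hm' hm))
  obtain ⟨j, hj⟩ := exists_eval_ne_zero_of_mem_radical_span
    (hrad ((monomial_sub_monomial_mem_toricIdealGraph_iff K).2
      (multidegree_eq_of_mem_perfectMatchings hm hm')))
    ((eval_supportPoint_monomial_sub_ne_zero_iff K).2 fun h => hnsub (h.1 subset_rfl))
  rw [eval_supportPoint_monomial_sub_ne_zero_iff] at hj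
  have support_eq {u v : G.edgeSet →₀ ℕ} (hdeg : multidegree G u = multidegree G v)
      (hu : u.support ⊆ m.support) (hv : ¬v.support ⊆ m.support) : u.support = m.support := by
    by_contra hc
    have := hG.eq_of_support_ssubset (fun t => hW.eq_of_fiberAdj hm) (hu.ssubset_of_ne hc) hdeg
    exact hv (this ▸ hu)
  by_cases hP : (P j).support ⊆ m.support
  · exact ⟨j, .inl (support_eq (hPQ j) hP (by tauto))⟩
  · exact ⟨j, .inr (support_eq (hPQ j).symm (by tauto) hP)⟩

open Classical in
lemma GapFree.ncard_perfectMatchings_le_two_mul (hG : GapFree G) (hW : IsDiscreteFiber G W)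
    [Fintype ι] (hPQ : ∀ j, multidegree G (P j) = multidegree G (Q j))
    (hrad : toricIdealGraph K G ≤
      (Ideal.span (Set.range fun j => monomial (P j) (1 : K) - monomial (Q j) 1)).radical) :
    (perfectMatchings G W).ncard ≤ 2 * Finset.card {j | (multidegree G (P j)).support = W} := by
  set S : Finset ι := {j | (multidegree G (P j)).support = W}
  have hsub : Finsupp.support '' perfectMatchings G W ⊆
      S.image (fun j => (P j).support) ∪ S.image (fun j => (Q j).support) := by
    rintro _ ⟨m, hm, rfl⟩
    obtain ⟨j, hj⟩ := hG.exists_support_eq_of_mem_perfectMatchings hW hPQ hrad hm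
    have hjS : j ∈ S := by
      refine Finset.mem_filter.2 ⟨Finset.mem_univ j, ?_⟩
      rcases hj with hj | hj
      · rw [support_multidegree_eq_of_support_eq hj, hm.2]
      · rw [hPQ, support_multidegree_eq_of_support_eq hj, hm.2]
    rcases hj with hj | hj
    · exact .inl (Finset.mem_coe.2 (Finset.mem_image.2 ⟨j, hjS, hj⟩))
    · exact .inr (Finset.mem_coe.2 (Finset.mem_image.2 ⟨j, hjS, hj⟩))
  have hinj : Set.InjOn Finsupp.support (perfectMatchings G W) :=
    fun _ hu _ hv => hu.1.eq_of_support_eq hv.1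
  calc (perfectMatchings G W).ncard
      = (Finsupp.support '' perfectMatchings G W).ncard := hinj.ncard_image.symm
    _ ≤ (S.image (fun j => (P j).support) ∪ S.image (fun j => (Q j).support)).card := by
      rw [← Set.ncard_coe_finset, Finset.coe_union]
      exact Set.ncard_le_ncard hsub
    _ ≤ S.card + S.card :=
      (Finset.card_union_le _ _).trans (add_le_add Finset.card_image_le Finset.card_image_le)
    _ = 2 * S.card := (two_mul _).symm

-- Since `k ≤ 3`, the `⌈k / 2⌉` binomials forced by a discrete fiber with `k` elements are at least
-- the `k - 1` that generate it.
lemma GapFree.discreteFiberRank_le_card [Fintype V] (hG : GapFree G) [Fintype ι]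
    {B : ι → MvPolynomial G.edgeSet K} (hB : ∀ j, IsBinom (B j) ∧ B j ∈ toricIdealGraph K G)
    (hrad : toricIdealGraph K G ≤ (Ideal.span (Set.range B)).radical) :
    discreteFiberRank G ≤ Fintype.card ι := by
  classical
  choose P Q hPQ using fun j => (hB j).1
  obtain rfl : B = fun j => monomial (P j) 1 - monomial (Q j) 1 := funext hPQ
  have hdeg (j : ι) : multidegree G (P j) = multidegree G (Q j) :=
    (monomial_sub_monomial_mem_toricIdealGraph_iff K).1 (hB j).2
  calc
    discreteFiberRank G ≤ ∑ W with IsDiscreteFiber G W,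
        Finset.card {j | (multidegree G (P j)).support = W} := by
      refine Finset.sum_le_sum fun W hW => ?_
      have hW : IsDiscreteFiber G W := (Finset.mem_filter.1 hW).2
      have := hG.ncard_perfectMatchings_le_three hW
      have := hG.ncard_perfectMatchings_le_two_mul hW hdeg hrad
      omega
    _ ≤ ∑ W : Finset V, Finset.card {j | (multidegree G (P j)).support = W} :=
      Finset.sum_le_sum_of_subset (Finset.filter_subset _ _)
    _ = Fintype.card ι :=
      (Finset.card_eq_sum_card_fiberwise fun _ _ => Finset.mem_coe.2 (Finset.mem_univ _)).symm

end LowerBound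

/-! ### The two invariants -/

section Invariants

variable {K : Type*} [Field K] {σ : Type*} {I : Ideal (MvPolynomial σ K)}
  {B : Finset (MvPolynomial σ K)}

lemma muI_le_card (hB : ∀ f ∈ B, IsBinom f) (hI : Ideal.span (B : Set (MvPolynomial σ K)) = I) :
    muI I ≤ B.card :=
  Nat.sInf_le ⟨B, rfl, hB, hI⟩

lemma exists_fin_isBinom_radical_eq (hB : ∀ f ∈ B, IsBinom f)
    (hI : Ideal.span (B : Set (MvPolynomial σ K)) = I) :
    ∃ b : Fin B.card → MvPolynomial σ K, (∀ j, IsBinom (b j) ∧ b j ∈ I) ∧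
      I.radical = (Ideal.span (Set.range b)).radical := by
  have hrange : Set.range (Subtype.val ∘ B.equivFin.symm) = (B : Set (MvPolynomial σ K)) := by
    rw [B.equivFin.symm.surjective.range_comp]
    exact Subtype.range_coe
  refine ⟨Subtype.val ∘ B.equivFin.symm, fun j => ?_, by rw [hrange, hI]⟩
  have hj : ↑(B.equivFin.symm j) ∈ B := (B.equivFin.symm j).2
  exact ⟨hB _ hj, hI ▸ Ideal.subset_span hj⟩

lemma barI_le_muI (hB : ∀ f ∈ B, IsBinom f)
    (hI : Ideal.span (B : Set (MvPolynomial σ K)) = I) : barI I ≤ muI I := by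
  obtain ⟨M, hcard, hM, hspan⟩ : muI I ∈ {t | ∃ M : Finset (MvPolynomial σ K), M.card = t ∧
      (∀ f ∈ M, IsBinom f) ∧ Ideal.span (M : Set (MvPolynomial σ K)) = I} :=
    Nat.sInf_mem ⟨_, B, rfl, hB, hI⟩
  rw [← hcard]
  exact Nat.sInf_le (exists_fin_isBinom_radical_eq hM hspan)

lemma GapFree.discreteFiberRank_le_barI (K : Type*) [Field K] {V : Type*} [Fintype V]
    {G : SimpleGraph V} (hG : GapFree G) :
    discreteFiberRank G ≤ barI (toricIdealGraph K G) := by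
  obtain ⟨B, -, hB, hspan⟩ := hG.exists_finset_span_eq_toricIdealGraph K
  refine le_csInf ⟨_, exists_fin_isBinom_radical_eq hB hspan⟩ ?_
  rintro s ⟨b, hb, hrad⟩
  simpa only [Fintype.card_fin] using
    hG.discreteFiberRank_le_card hb (hrad ▸ Ideal.le_radical)

end Invariants

theorem stmt7 (K : Type*) [Field K] (V : Type*) [Fintype V] (G : SimpleGraph V)
    (hconn : G.Connected)
    (h : ∀ e ∈ G.edgeSet, ∀ e' ∈ G.edgeSet, (∀ v : V, v ∈ e → v ∉ e') →
      ∃ e'' ∈ G.edgeSet, (∃ v : V, v ∈ e ∧ v ∈ e'') ∧ (∃ v : V, v ∈ e' ∧ v ∈ e'')) :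
    barI (toricIdealGraph K G) = muI (toricIdealGraph K G) := by
  have hG : GapFree G := gapFree_of_forall_exists_edge_meeting h
  obtain ⟨B, hcard, hB, hspan⟩ := hG.exists_finset_span_eq_toricIdealGraph K
  refine le_antisymm (barI_le_muI hB hspan) ?_
  calc muI (toricIdealGraph K G) ≤ B.card := muI_le_card hB hspan
    _ ≤ discreteFiberRank G := hcard
    _ ≤ barI (toricIdealGraph K G) := hG.discreteFiberRank_le_barI K
end

section
/- For every 1 ≤ i < j ≤ m, the binomial f_{ij} = x_i^{d_i} y_j^{d_j} − x_j^{d_j} y_i^{d_i} is an indispensable binomial of I_2(D): every set of binomials generating I_2(D) contains f_{ij} or −f_{ij}. In particular, I_2(D) is generated by its indispensable binomials. -/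
open MvPolynomial

variable (K : Type*) [Field K]

/-- The binomial `f_{ij} = x_i^{d_i} y_j^{d_j} − x_j^{d_j} y_i^{d_i}` in
`S = K[x_1,…,x_m,y_1,…,y_m]`, where the variable `x_i` is `X (Sum.inl i)` and
`y_i` is `X (Sum.inr i)`. -/
noncomputable def fIJ {m : ℕ} (d : Fin m → ℕ) (i j : Fin m) :
    MvPolynomial (Fin m ⊕ Fin m) K :=
  X (Sum.inl i) ^ d i * X (Sum.inr j) ^ d j - X (Sum.inl j) ^ d j * X (Sum.inr i) ^ d i

/-- The ideal `I_2(D)` generated by the `2`-minors `f_{ij}`, `i < j`. -/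
noncomputable def I2D {m : ℕ} (d : Fin m → ℕ) : Ideal (MvPolynomial (Fin m ⊕ Fin m) K) :=
  Ideal.span {g | ∃ i j : Fin m, i < j ∧ g = fIJ K d i j}

/-- A binomial `g` is indispensable of `I`: every set of binomials generating `I`
contains `g` or `−g`. -/
def IsIndispBinom {K : Type*} [Field K] {σ : Type*} (I : Ideal (MvPolynomial σ K))
    (g : MvPolynomial σ K) : Prop :=
  ∀ B : Set (MvPolynomial σ K), (∀ f ∈ B, IsBinom f) → Ideal.span B = I →
    (g ∈ B ∨ -g ∈ B)

/-! A binomial `x^u - x^v` of an ideal `I` is indispensable as soon as it is the only nonzero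
binomial `x^p - x^q` in `I` with `x^p ∣ x^u`: any set of binomials generating `I` has a nonzero
element with a monomial dividing `x^u`, and that element can then only be `± (x^u - x^v)`.

The minors `f_{ij}` satisfy this criterion in `I_2(D)` for two reasons. No monomial of a minor
divides a different monomial of a minor, so `x_i^{d_i} y_j^{d_j}` is a minimal monomial among those
occurring in elements of `I_2(D)`. And modulo `I_2(D)` it can be rewritten only to
`x_j^{d_j} y_i^{d_i}`, because the set of these two monomials is stable under the moves
`x^c x^u ↔ x^c x^v` given by the minors `x^u - x^v`. -/

section BinomialIdeals

variable {σ R : Type*}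

theorem exists_mem_support_le_of_mem_ideal_span [CommSemiring R] {B : Set (MvPolynomial σ R)}
    {f : MvPolynomial σ R} (hf : f ∈ Ideal.span B) {u : σ →₀ ℕ} (hu : u ∈ f.support) :
    ∃ b ∈ B, ∃ p ∈ b.support, p ≤ u := by
  let P : Set (σ →₀ ℕ) := {p | ∃ b ∈ B, p ∈ b.support}
  have span_le : Ideal.span B ≤ Ideal.span ((fun p => monomial p (1 : R)) '' P) :=
    Ideal.span_le.2 fun b hb =>
      mem_ideal_span_monomial_image.2 fun p hp => ⟨p, ⟨b, hb, hp⟩, le_rfl⟩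
  obtain ⟨p, ⟨b, hb, hp⟩, hpu⟩ := mem_ideal_span_monomial_image.1 (span_le hf) u hu
  exact ⟨b, hb, p, hp, hpu⟩

theorem mem_support_monomial_sub_monomial_iff [CommRing R] [Nontrivial R] {u v p : σ →₀ ℕ}
    (huv : u ≠ v) :
    p ∈ (monomial u (1 : R) - monomial v 1).support ↔ p = u ∨ p = v := by
  classical
  rw [mem_support_iff, coeff_sub, coeff_monomial, coeff_monomial]
  by_cases hu : u = p
  · subst hu
    simp [huv.symm]
  · simp [hu, Ne.symm hu, eq_comm]

theorem mem_iff_mem_of_monomial_sub_monomial_mem_ideal_span [CommRing R] [Nontrivial R]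
    {S : Set (MvPolynomial σ R)} (W : Set (σ →₀ ℕ))
    (hS : ∀ f ∈ S, ∃ u v, f = monomial u 1 - monomial v 1 ∧ ∀ c, c + u ∈ W ↔ c + v ∈ W)
    {p q : σ →₀ ℕ} (hpq : monomial p 1 - monomial q 1 ∈ Ideal.span S) :
    p ∈ W ↔ q ∈ W := by
  let φ : MvPolynomial σ R →ₗ[R] R := (basisMonomials σ R).constr R (W.indicator 1)
  have φ_monomial (w : σ →₀ ℕ) : φ (monomial w 1) = W.indicator 1 w := by
    rw [← (basisMonomials σ R).constr_basis R (W.indicator 1) w, coe_basisMonomials]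
  have φ_mul_eq_zero (f) (hf : f ∈ S) : φ ∘ₗ LinearMap.mulRight R f = 0 := by
    obtain ⟨u, v, rfl, huv⟩ := hS f hf
    refine (basisMonomials σ R).ext fun c => ?_
    have indicator_eq : W.indicator (1 : (σ →₀ ℕ) → R) (c + u) = W.indicator 1 (c + v) :=
      Set.indicator_eq_indicator (huv c) rfl
    simp [mul_sub, monomial_mul, φ_monomial, indicator_eq]
  have φ_eq_zero (f) (hf : f ∈ Ideal.span S) : φ f = 0 := by
    induction hf using Submodule.closure_induction with
    | zero => exact map_zero φ
    | add f g _ _ hf hg => rw [map_add, hf, hg, add_zero]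
    | smul_mem a f hf => exact LinearMap.congr_fun (φ_mul_eq_zero f hf) a
  have indicator_eq : W.indicator (1 : (σ →₀ ℕ) → R) p = W.indicator 1 q := by
    rw [← φ_monomial, ← φ_monomial, ← sub_eq_zero, ← map_sub, φ_eq_zero _ hpq]
  rw [← Set.indicator_eq_one_iff_mem R, indicator_eq, Set.indicator_eq_one_iff_mem]

variable {K}

theorem isIndispBinom_of_forall_le {I : Ideal (MvPolynomial σ K)} {u v : σ →₀ ℕ} (huv : u ≠ v)
    (hI : monomial u 1 - monomial v 1 ∈ I)
    (h : ∀ p q, p ≠ q → monomial p 1 - monomial q 1 ∈ I → p ≤ u → p = u ∧ q = v) :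
    IsIndispBinom I (monomial u 1 - monomial v 1) := by
  rintro B hB rfl
  obtain ⟨b, hb, w, hw, hwu⟩ := exists_mem_support_le_of_mem_ideal_span hI
    ((mem_support_monomial_sub_monomial_iff huv).2 (Or.inl rfl))
  obtain ⟨s, t, rfl⟩ := hB b hb
  have hst : s ≠ t := by
    rintro rfl
    simp at hw
  have hbI : monomial s 1 - monomial t 1 ∈ Ideal.span B := Ideal.subset_span hb
  rcases (mem_support_monomial_sub_monomial_iff hst).1 hw with rfl | rfl
  · obtain ⟨rfl, rfl⟩ := h _ _ hst hbI hwu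
    exact Or.inl hb
  · rw [← neg_mem_iff, neg_sub] at hbI
    obtain ⟨rfl, rfl⟩ := h _ _ hst.symm hbI hwu
    exact Or.inr (by rwa [neg_sub])

end BinomialIdeals

section MinorExponent

variable {ι : Type*}

/-- The exponent vector of the monomial `x_a^{d_a} y_b^{d_b}`, so that `f_{ij}` is the difference of
the monomials with exponents `minorExponent d i j` and `minorExponent d j i`. -/
noncomputable def minorExponent (d : ι → ℕ) (a b : ι) : ι ⊕ ι →₀ ℕ :=
  Finsupp.single (Sum.inl a) (d a) + Finsupp.single (Sum.inr b) (d b)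

variable {d : ι → ℕ}

theorem minorExponent_le_minorExponent_iff (hd : ∀ i, 0 < d i) {a b i j : ι} :
    minorExponent d a b ≤ minorExponent d i j ↔ a = i ∧ b = j := by
  classical
  refine ⟨fun h => ?_, fun ⟨ha, hb⟩ => ha ▸ hb ▸ le_rfl⟩
  have hx := h (Sum.inl a)
  have hy := h (Sum.inr b)
  have ha := (hd a).ne'
  have hb := (hd b).ne'
  simp only [minorExponent, Finsupp.add_apply, Finsupp.single_apply, Sum.inl.injEq, Sum.inr.injEq,
    reduceCtorEq, if_true, if_false] at hx hy
  grind

theorem minorExponent_ne_swap (hd : ∀ i, 0 < d i) {i j : ι} (hij : i ≠ j) :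
    minorExponent d i j ≠ minorExponent d j i :=
  fun h => hij ((minorExponent_le_minorExponent_iff hd).1 h.le).1

theorem add_minorExponent_swap_mem_pair (hd : ∀ i, 0 < d i) {i j a b : ι} {c : ι ⊕ ι →₀ ℕ}
    (h : c + minorExponent d a b ∈ ({minorExponent d i j, minorExponent d j i} : Set _)) :
    c + minorExponent d b a ∈ ({minorExponent d i j, minorExponent d j i} : Set _) := by
  have rigid {k l : ι} (hkl : c + minorExponent d a b = minorExponent d k l) :
      c + minorExponent d b a = minorExponent d l k := by
    obtain ⟨rfl, rfl⟩ := (minorExponent_le_minorExponent_iff hd).1 (hkl ▸ le_add_self)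
    rw [add_eq_right.1 hkl, zero_add]
  exact h.symm.imp rigid rigid

end MinorExponent

section Minors

variable {m : ℕ} {d : Fin m → ℕ}

theorem fIJ_eq_monomial_sub_monomial (d : Fin m → ℕ) (i j : Fin m) :
    fIJ K d i j = monomial (minorExponent d i j) 1 - monomial (minorExponent d j i) 1 := by
  simp [fIJ, minorExponent, X_pow_eq_monomial, monomial_mul]

theorem fIJ_mem_I2D (d : Fin m → ℕ) {i j : Fin m} (hij : i < j) : fIJ K d i j ∈ I2D K d :=
  Ideal.subset_span ⟨i, j, hij, rfl⟩

variable {K}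

theorem eq_minorExponent_of_mem_support_of_le (hd : ∀ i, 0 < d i)
    {f : MvPolynomial (Fin m ⊕ Fin m) K} (hf : f ∈ I2D K d) {p : Fin m ⊕ Fin m →₀ ℕ}
    (hp : p ∈ f.support) {i j : Fin m} (hle : p ≤ minorExponent d i j) :
    p = minorExponent d i j := by
  have eq_of_minorExponent_le {a b : Fin m} (h : minorExponent d a b ≤ p) :
      p = minorExponent d i j := by
    obtain ⟨rfl, rfl⟩ := (minorExponent_le_minorExponent_iff hd).1 (h.trans hle)
    exact hle.antisymm h
  obtain ⟨_, ⟨a, b, hab, rfl⟩, w, hw, hwp⟩ := exists_mem_support_le_of_mem_ideal_span hf hp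
  rw [fIJ_eq_monomial_sub_monomial,
    mem_support_monomial_sub_monomial_iff (minorExponent_ne_swap hd hab.ne)] at hw
  rcases hw with rfl | rfl <;> exact eq_of_minorExponent_le hwp

theorem eq_or_eq_of_monomial_minorExponent_sub_mem_I2D (hd : ∀ i, 0 < d i) {i j : Fin m}
    {q : Fin m ⊕ Fin m →₀ ℕ}
    (h : monomial (minorExponent d i j) 1 - monomial q 1 ∈ I2D K d) :
    q = minorExponent d i j ∨ q = minorExponent d j i := by
  refine (mem_iff_mem_of_monomial_sub_monomial_mem_ideal_span
    {minorExponent d i j, minorExponent d j i} ?_ h).1 (Or.inl rfl)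
  rintro _ ⟨a, b, -, rfl⟩
  exact ⟨_, _, fIJ_eq_monomial_sub_monomial K d a b, fun _ =>
    ⟨add_minorExponent_swap_mem_pair hd, add_minorExponent_swap_mem_pair hd⟩⟩

theorem isIndispBinom_fIJ (hd : ∀ i, 0 < d i) {i j : Fin m} (hij : i < j) :
    IsIndispBinom (I2D K d) (fIJ K d i j) := by
  have hmem := fIJ_mem_I2D K d hij
  rw [fIJ_eq_monomial_sub_monomial] at hmem ⊢
  refine isIndispBinom_of_forall_le (minorExponent_ne_swap hd hij.ne) hmem fun p q hpq hI hle => ?_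
  obtain rfl : p = minorExponent d i j := eq_minorExponent_of_mem_support_of_le hd hI
    ((mem_support_monomial_sub_monomial_iff hpq).2 (Or.inl rfl)) hle
  exact ⟨rfl, (eq_or_eq_of_monomial_minorExponent_sub_mem_I2D hd hI).resolve_left hpq.symm⟩

end Minors

theorem stmt8 (m : ℕ) (hm : 2 ≤ m) (d : Fin m → ℕ) (hd : ∀ i, 0 < d i) :
    (∀ i j : Fin m, i < j → IsIndispBinom (I2D K d) (fIJ K d i j)) ∧
    Ideal.span {g | IsBinom g ∧ g ∈ I2D K d ∧ IsIndispBinom (I2D K d) g} = I2D K d := by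
  have indisp (i j : Fin m) (hij : i < j) := isIndispBinom_fIJ (K := K) hd hij
  refine ⟨indisp, le_antisymm (Ideal.span_le.2 fun g hg => hg.2.1) (Ideal.span_mono ?_)⟩
  rintro _ ⟨i, j, hij, rfl⟩
  exact ⟨⟨_, _, fIJ_eq_monomial_sub_monomial K d i j⟩, fIJ_mem_I2D K d hij, indisp i j hij⟩
end

section
/- The ideal I_2(D) is saturated with respect to the product of all the variables: (I_2(D) : (x_1⋯x_m·y_1⋯y_m)^∞) = I_2(D), i.e., if f ∈ S and (x_1⋯x_m·y_1⋯y_m)^k·f ∈ I_2(D) for some k ≥ 0, then f ∈ I_2(D). -/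
open MvPolynomial

variable (K : Type*) [Field K]

/-! Grade the polynomial ring by `ℤ^σ / L`. The ideal spanned by the binomials `x^u - x^w` with
`u - w ∈ L` is the kernel of the map to the group algebra of `ℤ^σ / L`, in which monomials become
units, so this ideal is saturated. For the `2`-minors of a two-row matrix of pairwise coprime
monomials `x^(p i)` and `x^(q i)`, let `L` be spanned by the exponent differences of the minors. An
element of `L` has the form `(∑_A p + ∑_B q) - (∑_B p + ∑_A q)` for disjoint multisets `A`, `B` of
columns of equal size. By coprimality the two sums have disjoint supports, so every `x^u - x^w` with
this exponent difference is a multiple of `x^(∑_A p + ∑_B q) - x^(∑_B p + ∑_A q)`. This binomial is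
zero modulo the minors: pair the columns of `A` with those of `B` and swap the rows of each pair. -/

section MonoidAlgebra

variable {R : Type*} [Ring R]

theorem ker_mapDomainRingHom {M N : Type*} [AddMonoid M] [AddMonoid N] (φ : M →+ N) :
    RingHom.ker (AddMonoidAlgebra.mapDomainRingHom R φ) =
      Ideal.span {f | ∃ u w, φ u = φ w ∧
        f = AddMonoidAlgebra.single u 1 - AddMonoidAlgebra.single w 1} := by
  set I : Ideal (AddMonoidAlgebra R M) := Ideal.span _
  refine le_antisymm (fun f hf => ?_) (Ideal.span_le.2 ?_)
  · let s : N → M := Function.invFun φ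
    have hsub (g : AddMonoidAlgebra R M) :
        g - AddMonoidAlgebra.mapDomain s (AddMonoidAlgebra.mapDomain φ g) ∈ I := by
      induction g using AddMonoidAlgebra.induction_linear with
      | zero => simp
      | add g₁ g₂ h₁ h₂ =>
        simpa only [AddMonoidAlgebra.mapDomain_add, add_sub_add_comm] using add_mem h₁ h₂
      | single u r =>
        have hs : φ u = φ (s (φ u)) := (Function.invFun_eq ⟨u, rfl⟩).symm
        have hmem := I.mul_mem_left (AddMonoidAlgebra.single 0 r)
          (Ideal.subset_span ⟨u, s (φ u), hs, rfl⟩)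
        simpa [mul_sub, AddMonoidAlgebra.single_mul_single] using hmem
    have hf₀ : AddMonoidAlgebra.mapDomain φ f = 0 := hf
    simpa [hf₀] using hsub f
  · rintro _ ⟨u, w, huw, rfl⟩
    rw [SetLike.mem_coe, RingHom.mem_ker, map_sub, sub_eq_zero]
    simp [huw]

theorem isUnit_single_one {G : Type*} [AddGroup G] (g : G) :
    IsUnit (AddMonoidAlgebra.single g (1 : R)) :=
  (Group.isUnit (Multiplicative.ofAdd g)).map (AddMonoidAlgebra.of R G)

end MonoidAlgebra

section LatticeIdeal

variable {σ : Type*}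

/-- The inclusion `ℕ^σ → ℤ^σ` of exponent vectors, so that they can be subtracted. -/
noncomputable def exponentToInt : (σ →₀ ℕ) →+ (σ →₀ ℤ) :=
  Finsupp.mapRange.addMonoidHom (Nat.castAddMonoidHom ℤ)

theorem exponentToInt_injective : Function.Injective (exponentToInt (σ := σ)) :=
  Finsupp.mapRange_injective _ Nat.cast_zero Nat.cast_injective

variable (R : Type*) [CommRing R] (L : AddSubgroup (σ →₀ ℤ))

/-- The lattice ideal of `L`, spanned by the binomials `x^u - x^w` with `u - w ∈ L`. -/
noncomputable def latticeIdeal : Ideal (MvPolynomial σ R) :=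
  Ideal.span {f | ∃ u w : σ →₀ ℕ, exponentToInt u - exponentToInt w ∈ L ∧
    f = monomial u 1 - monomial w 1}

/-- The class of an exponent vector modulo `L`: the multidegree for which the lattice ideal of `L`
identifies all monomials of equal degree. -/
noncomputable def exponentClass : (σ →₀ ℕ) →+ (σ →₀ ℤ) ⧸ L :=
  (QuotientAddGroup.mk' L).comp exponentToInt

theorem exponentClass_eq_iff {u w : σ →₀ ℕ} :
    exponentClass L u = exponentClass L w ↔ exponentToInt u - exponentToInt w ∈ L :=
  QuotientAddGroup.eq_iff_sub_mem

/-- The homomorphism from the polynomial ring to the group algebra of `ℤ^σ / L` which sends `x^u`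
to the class of `u`. -/
noncomputable def exponentClassHom :
    MvPolynomial σ R →+* AddMonoidAlgebra R ((σ →₀ ℤ) ⧸ L) :=
  AddMonoidAlgebra.mapDomainRingHom R (exponentClass L)

theorem isUnit_exponentClassHom_monomial (u : σ →₀ ℕ) :
    IsUnit (exponentClassHom R L (monomial u 1)) := by
  have h : exponentClassHom R L (monomial u 1) = AddMonoidAlgebra.single (exponentClass L u) 1 :=
    AddMonoidAlgebra.mapDomain_single
  exact h ▸ isUnit_single_one _

theorem ker_exponentClassHom : RingHom.ker (exponentClassHom R L) = latticeIdeal R L := by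
  simp only [latticeIdeal, ← exponentClass_eq_iff]
  exact ker_mapDomainRingHom (exponentClass L)

variable {R L}

theorem mem_latticeIdeal_of_monomial_mul_mem {u : σ →₀ ℕ} {f : MvPolynomial σ R}
    (h : monomial u 1 * f ∈ latticeIdeal R L) : f ∈ latticeIdeal R L := by
  rw [← ker_exponentClassHom, RingHom.mem_ker] at h ⊢
  rw [map_mul] at h
  exact (isUnit_exponentClassHom_monomial R L u).mul_right_eq_zero.1 h

end LatticeIdeal

section TwoMinors

variable {S ι : Type*} [CommRing S]

/-- The ideal of `2`-minors of the matrix with two rows `a` and `b`. The minors on all pairs of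
columns are taken, which only adds zeros and negatives to those on increasing pairs. -/
def twoMinorIdeal (a b : ι → S) : Ideal S :=
  Ideal.span {f | ∃ i j, f = a i * b j - a j * b i}

theorem twoMinorIdeal_eq_span_lt [LinearOrder ι] (a b : ι → S) :
    twoMinorIdeal a b = Ideal.span {f | ∃ i j, i < j ∧ f = a i * b j - a j * b i} := by
  refine le_antisymm (Ideal.span_le.2 ?_) (Ideal.span_mono fun _ ⟨i, j, _, hf⟩ => ⟨i, j, hf⟩)
  rintro _ ⟨i, j, rfl⟩
  rcases lt_trichotomy i j with hij | rfl | hji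
  · exact Ideal.subset_span ⟨i, j, hij, rfl⟩
  · simp
  · rw [← neg_sub]
    exact neg_mem (Ideal.subset_span ⟨j, i, hji, rfl⟩)

theorem prod_mul_prod_sub_mem_twoMinorIdeal (a b : ι → S) {A B : Multiset ι}
    (hAB : A.card = B.card) :
    (A.map a).prod * (B.map b).prod - (B.map a).prod * (A.map b).prod ∈ twoMinorIdeal a b := by
  induction A using Multiset.induction generalizing B with
  | empty =>
    obtain rfl : B = 0 := Multiset.card_eq_zero.1 (by simpa using hAB.symm)
    simp
  | cons i A ih =>
    obtain ⟨j, B, rfl⟩ : ∃ j B', B = j ::ₘ B' := by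
      obtain ⟨j, B', hB, -⟩ := Multiset.card_eq_succ_iff.1 (hAB.symm.trans (A.card_cons i))
      exact ⟨j, B', hB.symm⟩
    have hmul := (twoMinorIdeal a b).mul_sub_mul_mem
      (Ideal.subset_span ⟨i, j, rfl⟩) (ih (by simpa using hAB))
    convert hmul using 1
    simp only [Multiset.map_cons, Multiset.prod_cons]
    ring

end TwoMinors

section CoprimeMonomials

variable {σ ι : Type*}

theorem disjoint_single_single {v w : σ} (hvw : v ≠ w) (m n : ℕ) :
    Disjoint (Finsupp.single v m) (Finsupp.single w n) :=
  Finsupp.disjoint_iff.2 <| (Finset.disjoint_singleton.2 hvw).mono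
    Finsupp.support_single_subset Finsupp.support_single_subset

theorem disjoint_multiset_sum_right {x : σ →₀ ℕ} {s : Multiset (σ →₀ ℕ)}
    (h : ∀ y ∈ s, Disjoint x y) : Disjoint x s.sum := by
  refine Multiset.sum_induction (Disjoint x) s (fun y z hy hz => ?_) disjoint_bot_right h
  rw [Finsupp.disjoint_iff] at hy hz ⊢
  classical exact (Finset.disjoint_union_right.2 ⟨hy, hz⟩).mono_right Finsupp.support_add

theorem exists_add_add_disjoint (A B : Multiset ι) :
    ∃ C A' B', A = C + A' ∧ B = C + B' ∧ Disjoint A' B' := by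
  classical
  refine ⟨A ∩ B, A - B, B - A, ?_, ?_, ?_⟩
  · rw [add_comm, Multiset.sub_add_inter]
  · rw [add_comm, Multiset.inter_comm, Multiset.sub_add_inter]
  · refine Multiset.disjoint_left.2 fun hA hB => ?_
    rw [Multiset.mem_sub] at hA hB
    exact hA.asymm hB

theorem exists_eq_add_of_add_eq_add_of_disjoint {u w x y : σ →₀ ℕ} (hxy : Disjoint x y)
    (h : u + y = w + x) : ∃ t, u = t + x ∧ w = t + y := by
  have hxu : x ≤ u := fun v => by
    have hv : min (x v) (y v) = 0 := DFunLike.congr_fun hxy.eq_bot v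
    have huw : u v + y v = w v + x v := DFunLike.congr_fun h v
    omega
  obtain ⟨t, rfl⟩ := exists_add_of_le hxu
  refine ⟨t, add_comm x t, add_right_cancel (b := x) ?_⟩
  rw [← h, add_assoc, add_comm]

variable (p q : ι → σ →₀ ℕ)

/-- The exponent vector of the product of the entries of a two-row matrix of monomials, with
exponents `p` and `q`, that lie in the first row and the columns `A` or in the second row and the
columns `B`. -/
noncomputable def rowExponent (A B : Multiset ι) : σ →₀ ℕ := (A.map p).sum + (B.map q).sum

theorem rowExponent_add (A A' B B' : Multiset ι) :
    rowExponent p q (A + A') (B + B') = rowExponent p q A B + rowExponent p q A' B' := by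
  simp only [rowExponent, Multiset.map_add, Multiset.sum_add]
  abel

theorem prod_monomial_mul_prod_monomial (R : Type*) [CommSemiring R] (A B : Multiset ι) :
    (A.map fun i => monomial (p i) (1 : R)).prod * (B.map fun i => monomial (q i) (1 : R)).prod =
      monomial (rowExponent p q A B) 1 := by
  have hprod (r : ι → σ →₀ ℕ) (C : Multiset ι) :
      (C.map fun i => monomial (r i) (1 : R)).prod = monomial (C.map r).sum 1 := by
    induction C using Multiset.induction with
    | empty => simp
    | cons i C ih => simp [ih, monomial_mul]
  rw [hprod, hprod, monomial_mul, mul_one, rowExponent]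

/-- The lattice spanned by the exponent differences `(p i + q j) - (p j + q i)` of the two terms of
the `2`-minors. -/
noncomputable def minorLattice : AddSubgroup (σ →₀ ℤ) :=
  AddSubgroup.closure
    {v | ∃ i j, v = exponentToInt (p i + q j) - exponentToInt (p j + q i)}

variable {p q}

theorem exists_rowExponent_of_mem_minorLattice {v : σ →₀ ℤ} (hv : v ∈ minorLattice p q) :
    ∃ A B : Multiset ι, A.card = B.card ∧
      v = exponentToInt (rowExponent p q A B) - exponentToInt (rowExponent p q B A) := by
  induction hv using AddSubgroup.closure_induction with
  | mem v hv =>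
    obtain ⟨i, j, rfl⟩ := hv
    exact ⟨{i}, {j}, by simp, by simp [rowExponent]⟩
  | zero => exact ⟨0, 0, rfl, by simp⟩
  | add v v' _ _ ih ih' =>
    obtain ⟨A, B, hAB, rfl⟩ := ih
    obtain ⟨A', B', hAB', rfl⟩ := ih'
    refine ⟨A + A', B + B', by simp [hAB, hAB'], ?_⟩
    simp only [rowExponent_add, map_add]
    abel
  | neg v _ ih =>
    obtain ⟨A, B, hAB, rfl⟩ := ih
    exact ⟨B, A, hAB.symm, neg_sub _ _⟩

theorem exists_disjoint_rowExponent_of_mem_minorLattice {v : σ →₀ ℤ}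
    (hv : v ∈ minorLattice p q) :
    ∃ A B : Multiset ι, A.card = B.card ∧ Disjoint A B ∧
      v = exponentToInt (rowExponent p q A B) - exponentToInt (rowExponent p q B A) := by
  obtain ⟨A, B, hAB, rfl⟩ := exists_rowExponent_of_mem_minorLattice hv
  obtain ⟨C, A', B', rfl, rfl, hdisj⟩ := exists_add_add_disjoint A B
  refine ⟨A', B', by simpa using hAB, hdisj, ?_⟩
  simp only [rowExponent_add, map_add, add_sub_add_left_eq_sub]

theorem disjoint_rowExponent_right {x : σ →₀ ℕ} {A B : Multiset ι}
    (hA : ∀ i ∈ A, Disjoint x (p i)) (hB : ∀ j ∈ B, Disjoint x (q j)) :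
    Disjoint x (rowExponent p q A B) := by
  rw [rowExponent, ← Multiset.sum_add]
  refine disjoint_multiset_sum_right fun y hy => ?_
  rcases Multiset.mem_add.1 hy with hy | hy <;> obtain ⟨i, hi, rfl⟩ := Multiset.mem_map.1 hy
  exacts [hA i hi, hB i hi]

theorem disjoint_rowExponent_swap (hpq : Pairwise (Function.onFun Disjoint (Sum.elim p q)))
    {A B : Multiset ι} (hAB : Disjoint A B) :
    Disjoint (rowExponent p q A B) (rowExponent p q B A) := by
  have hne {i j : ι} (hi : i ∈ A) (hj : j ∈ B) : i ≠ j := fun h =>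
    Multiset.disjoint_left.1 hAB hi (h ▸ hj)
  refine disjoint_rowExponent_right
    (fun j hj => .symm <| disjoint_rowExponent_right (fun i hi => ?_) fun i _ => ?_)
    (fun i hi => .symm <| disjoint_rowExponent_right (fun j _ => ?_) fun j hj => ?_)
  · exact hpq (Sum.inl_injective.ne (hne hi hj).symm)
  · exact hpq Sum.inl_ne_inr
  · exact hpq Sum.inr_ne_inl
  · exact hpq (Sum.inr_injective.ne (hne hi hj))

theorem monomial_sub_monomial_mem_twoMinorIdeal (R : Type*) [CommRing R]
    (hpq : Pairwise (Function.onFun Disjoint (Sum.elim p q))) {u w : σ →₀ ℕ}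
    (huw : exponentToInt u - exponentToInt w ∈ minorLattice p q) :
    monomial u 1 - monomial w 1 ∈
      twoMinorIdeal (fun i => monomial (p i) (1 : R)) (fun i => monomial (q i) 1) := by
  obtain ⟨A, B, hcard, hAB, h⟩ := exists_disjoint_rowExponent_of_mem_minorLattice huw
  have hadd : u + rowExponent p q B A = w + rowExponent p q A B := by
    apply exponentToInt_injective
    rw [map_add, map_add, add_comm (exponentToInt w), ← sub_eq_sub_iff_add_eq_add, h]
  obtain ⟨t, rfl, rfl⟩ :=
    exists_eq_add_of_add_eq_add_of_disjoint (disjoint_rowExponent_swap hpq hAB) hadd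
  have hmem := Ideal.mul_mem_left _ (monomial t (1 : R))
    (prod_mul_prod_sub_mem_twoMinorIdeal (fun i => monomial (p i) (1 : R))
      (fun i => monomial (q i) 1) hcard)
  simpa only [prod_monomial_mul_prod_monomial, mul_sub, monomial_mul, mul_one] using hmem

theorem twoMinorIdeal_monomial_eq_latticeIdeal (R : Type*) [CommRing R]
    (hpq : Pairwise (Function.onFun Disjoint (Sum.elim p q))) :
    twoMinorIdeal (fun i => monomial (p i) (1 : R)) (fun i => monomial (q i) 1) =
      latticeIdeal R (minorLattice p q) := by
  refine le_antisymm (Ideal.span_le.2 ?_) (Ideal.span_le.2 ?_)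
  · rintro _ ⟨i, j, rfl⟩
    refine Ideal.subset_span ⟨p i + q j, p j + q i, AddSubgroup.subset_closure ⟨i, j, rfl⟩, ?_⟩
    simp only [monomial_mul, mul_one]
  · rintro _ ⟨u, w, huw, rfl⟩
    exact monomial_sub_monomial_mem_twoMinorIdeal R hpq huw

end CoprimeMonomials

theorem I2D_eq_twoMinorIdeal {m : ℕ} (d : Fin m → ℕ) :
    I2D K d = twoMinorIdeal (fun i => monomial (Finsupp.single (Sum.inl i) (d i)) (1 : K))
      (fun i => monomial (Finsupp.single (Sum.inr i) (d i)) 1) := by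
  simp only [twoMinorIdeal_eq_span_lt, ← X_pow_eq_monomial]
  rfl

theorem pairwise_disjoint_sumElim_single {α : Type*} (d : α → ℕ) :
    Pairwise (Function.onFun Disjoint (Sum.elim (fun i => Finsupp.single (Sum.inl i : α ⊕ α) (d i))
      (fun i => Finsupp.single (Sum.inr i) (d i)))) := by
  rintro (i | i) (j | j) hij <;> exact disjoint_single_single hij _ _

theorem prod_X_pow_eq_monomial_nsmul (R : Type*) {σ : Type*} [CommSemiring R] [Fintype σ] (k : ℕ) :
    (∏ v : σ, X v) ^ k = monomial (k • ∑ v : σ, Finsupp.single v 1) (1 : R) := by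
  have hprod : ∏ v : σ, X v = monomial (∑ v : σ, Finsupp.single v 1) (1 : R) :=
    (monomial_sum_one _ _).symm
  rw [hprod, monomial_pow, one_pow]

theorem stmt9_general {R σ ι : Type*} [CommRing R] {p q : ι → σ →₀ ℕ}
    (hpq : Pairwise (Function.onFun Disjoint (Sum.elim p q)))
    {u : σ →₀ ℕ} {f : MvPolynomial σ R}
    (h : monomial u 1 * f ∈
      twoMinorIdeal (fun i => monomial (p i) (1 : R)) (fun i => monomial (q i) 1)) :
    f ∈ twoMinorIdeal (fun i => monomial (p i) (1 : R)) (fun i => monomial (q i) 1) := by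
  rw [twoMinorIdeal_monomial_eq_latticeIdeal R hpq] at h ⊢
  exact mem_latticeIdeal_of_monomial_mul_mem h

theorem stmt9 (m : ℕ) (hm : 2 ≤ m) (d : Fin m → ℕ) (hd : ∀ i, 0 < d i)
    (f : MvPolynomial (Fin m ⊕ Fin m) K) (k : ℕ)
    (h : (∏ v : Fin m ⊕ Fin m, X v) ^ k * f ∈ I2D K d) :
    f ∈ I2D K d := by
  rw [I2D_eq_twoMinorIdeal, prod_X_pow_eq_monomial_nsmul] at h
  exact I2D_eq_twoMinorIdeal K d ▸ stmt9_general (pairwise_disjoint_sumElim_single d) h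
end

section
/- The ideal I_2(D) equals the lattice ideal of the lattice L ⊆ ℤ^{2m} generated by the vectors v_{1j} = (u_{1j}, −u_{1j}) for 2 ≤ j ≤ m, where u_{1j} ∈ ℤ^m has first coordinate d_1, j-th coordinate −d_j, and all other coordinates 0; that is, I_2(D) = ({z^{v⁺} − z^{v⁻} : v ∈ L}), where z^w denotes the monomial in the 2m variables x_1,…,x_m,y_1,…,y_m with exponent vector w ∈ ℕ^{2m}. -/
open MvPolynomial

variable (K : Type*) [Field K]

/-- The vector `u_{1j} ∈ ℤ^m`: first coordinate `d_1`, `j`-th coordinate `−d_j`,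
all other coordinates `0`. -/
def u1j {m : ℕ} (d : Fin (m + 2) → ℕ) (j : Fin (m + 2)) : Fin (m + 2) → ℤ :=
  fun k => if k = 0 then (d 0 : ℤ) else if k = j then -(d j : ℤ) else 0

/-- The vector `v_{1j} = (u_{1j}, −u_{1j}) ∈ ℤ^{2m}`. -/
def v1j {m : ℕ} (d : Fin (m + 2) → ℕ) (j : Fin (m + 2)) :
    (Fin (m + 2) ⊕ Fin (m + 2)) → ℤ :=
  Sum.elim (u1j d j) (fun k => -(u1j d j k))

/-- The lattice `L ⊆ ℤ^{2m}` generated by the vectors `v_{1j}`, `2 ≤ j ≤ m`. -/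
def latticeL {m : ℕ} (d : Fin (m + 2) → ℕ) :
    AddSubgroup ((Fin (m + 2) ⊕ Fin (m + 2)) → ℤ) :=
  AddSubgroup.closure {v | ∃ j : Fin (m + 2), j ≠ 0 ∧ v = v1j d j}

/-- The lattice ideal of a lattice `L ⊆ ℤ^{2m}`:
generated by the binomials `z^{v⁺} − z^{v⁻}`, `v ∈ L`. -/
noncomputable def latticeIdealOf {m : ℕ}
    (L : AddSubgroup ((Fin (m + 2) ⊕ Fin (m + 2)) → ℤ)) :
    Ideal (MvPolynomial (Fin (m + 2) ⊕ Fin (m + 2)) K) :=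
  Ideal.span {g | ∃ v ∈ L,
    g = (∏ s, X s ^ (v s).toNat) - (∏ s, X s ^ (-(v s)).toNat)}

/-!
Everything reduces to the lattice of integer vectors `c` with `∑ i, c i = 0`: it is generated by the
differences `e₀ - eⱼ`, so `L` is its image under `c ↦ (d c, -d c)`, and the binomial of that image
is `∏ xᵢ ^ cᵢ⁺ ∏ yᵢ ^ cᵢ⁻ - ∏ xᵢ ^ cᵢ⁻ ∏ yᵢ ^ cᵢ⁺` evaluated at `xᵢ ^ dᵢ`, `yᵢ ^ dᵢ`. The minor
`xᵢ yⱼ - xⱼ yᵢ` is the binomial of `eᵢ - eⱼ`. Conversely, since `∑ cᵢ⁺ = ∑ cᵢ⁻`, the factors of the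
two products in a monomial can be paired off, and modulo the minors each pair `xᵢ yⱼ` may be
replaced by `xⱼ yᵢ`.
-/

section SumZeroLattice

variable (ι : Type*) [Fintype ι]

/-- The lattice of integer vectors with coordinate sum zero (the root lattice of type `A`), through
which both the lattice `L` and the binomials of its elements are parametrized. -/
def sumZeroLattice : AddSubgroup (ι → ℤ) where
  carrier := {c | ∑ i, c i = 0}
  zero_mem' := by simp
  add_mem' {a b} ha hb := by
    simp_all only [Set.mem_ofPred_eq, Pi.add_apply, Finset.sum_add_distrib, add_zero]
  neg_mem' {a} ha := by
    simp_all only [Set.mem_ofPred_eq, Pi.neg_apply, Finset.sum_neg_distrib, neg_zero]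

variable {ι}

theorem mem_sumZeroLattice {c : ι → ℤ} : c ∈ sumZeroLattice ι ↔ ∑ i, c i = 0 := Iff.rfl

theorem sum_toNat_eq_sum_toNat_neg {c : ι → ℤ} (hc : c ∈ sumZeroLattice ι) :
    ∑ i, (c i).toNat = ∑ i, (-c i).toNat := by
  zify
  rw [← sub_eq_zero, ← Finset.sum_sub_distrib]
  simpa only [Int.toNat_sub_toNat_neg] using mem_sumZeroLattice.mp hc

variable [DecidableEq ι]

theorem single_sub_single_mem_sumZeroLattice (i j : ι) :
    Pi.single i 1 - Pi.single j 1 ∈ sumZeroLattice ι := by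
  simp [mem_sumZeroLattice]

theorem closure_single_sub_single (i₀ : ι) :
    AddSubgroup.closure {c : ι → ℤ | ∃ j, j ≠ i₀ ∧ c = Pi.single i₀ 1 - Pi.single j 1} =
      sumZeroLattice ι := by
  apply le_antisymm
  · rw [AddSubgroup.closure_le]
    rintro _ ⟨j, -, rfl⟩
    exact single_sub_single_mem_sumZeroLattice i₀ j
  · intro c hc
    have decomposition : c = -∑ j, c j • (Pi.single i₀ 1 - Pi.single j 1 : ι → ℤ) := by
      ext k
      simp [smul_sub, Finset.sum_apply, ← Finset.sum_mul, mem_sumZeroLattice.mp hc,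
        Pi.single_apply]
    rw [decomposition]
    refine neg_mem (sum_mem fun j _ => zsmul_mem ?_ (c j))
    by_cases hj : j = i₀
    · simp only [hj, sub_self, zero_mem]
    · exact AddSubgroup.subset_closure ⟨j, hj, rfl⟩

end SumZeroLattice

section Minors

variable {ι : Type*}

theorem prod_pow_mul_prod_pow_swap [Fintype ι] {M : Type*} [CommMonoid M] {x y : ι → M}
    (h : ∀ i j, x i * y j = x j * y i) {a b : ι → ℕ} (hab : ∑ i, a i = ∑ i, b i) :
    (∏ i, x i ^ a i) * ∏ i, y i ^ b i = (∏ i, x i ^ b i) * ∏ i, y i ^ a i := by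
  -- With `n i` copies of `i` in a sigma type, a bijection of these types pairs off the factors.
  have prod_pow_eq (z : ι → M) (n : ι → ℕ) : ∏ i, z i ^ n i = ∏ p : Σ i, Fin (n i), z p.1 := by
    simp [Fintype.prod_sigma]
  let e : (Σ i, Fin (a i)) ≃ Σ i, Fin (b i) := Fintype.equivOfCardEq (by simpa using hab)
  simp only [prod_pow_eq, ← e.prod_comp, ← Finset.prod_mul_distrib, h]

variable {R : Type*} [CommRing R]

theorem minor_mem_span [LinearOrder ι] (x y : ι → R) (i j : ι) :
    x i * y j - x j * y i ∈ Ideal.span {g | ∃ i j, i < j ∧ g = x i * y j - x j * y i} := by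
  rcases lt_trichotomy i j with hij | rfl | hji
  · exact Ideal.subset_span ⟨i, j, hij, rfl⟩
  · simp only [sub_self, zero_mem]
  · rw [← neg_sub]
    exact neg_mem (Ideal.subset_span ⟨j, i, hji, rfl⟩)

variable [Fintype ι]

/-- The binomial `∏ xᵢ ^ cᵢ⁺ ∏ yᵢ ^ cᵢ⁻ - ∏ xᵢ ^ cᵢ⁻ ∏ yᵢ ^ cᵢ⁺` attached to the vector `(c, -c)`,
with `Int.toNat` extracting the positive and negative parts. -/
def swapBinomial (x y : ι → R) (c : ι → ℤ) : R :=
  (∏ i, x i ^ (c i).toNat) * (∏ i, y i ^ (-c i).toNat) -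
    (∏ i, x i ^ (-c i).toNat) * ∏ i, y i ^ (c i).toNat

theorem swapBinomial_mem {I : Ideal R} {x y : ι → R} (h : ∀ i j, x i * y j - x j * y i ∈ I)
    {c : ι → ℤ} (hc : c ∈ sumZeroLattice ι) : swapBinomial x y c ∈ I := by
  rw [swapBinomial, ← Ideal.Quotient.mk_eq_mk_iff_sub_mem]
  simp only [← Ideal.Quotient.mk_eq_mk_iff_sub_mem, map_mul] at h
  simpa only [map_mul, map_prod, map_pow] using
    prod_pow_mul_prod_pow_swap h (sum_toNat_eq_sum_toNat_neg hc)

theorem swapBinomial_single_sub_single [DecidableEq ι] (x y : ι → R) {i j : ι} (hij : i ≠ j) :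
    swapBinomial x y (Pi.single i 1 - Pi.single j 1) = x i * y j - x j * y i := by
  have toNat_single_sub {i j : ι} (hij : i ≠ j) (k : ι) :
      ((Pi.single i 1 - Pi.single j 1 : ι → ℤ) k).toNat = if k = i then 1 else 0 := by
    by_cases hi : k = i <;> by_cases hj : k = j <;> simp_all
  have neg_single_sub (k : ι) : -(Pi.single i 1 - Pi.single j 1 : ι → ℤ) k =
      (Pi.single j 1 - Pi.single i 1 : ι → ℤ) k := by
    rw [← Pi.neg_apply, neg_sub]
  simp only [swapBinomial, neg_single_sub, toNat_single_sub hij, toNat_single_sub hij.symm,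
    pow_ite, pow_one, pow_zero, Finset.prod_ite_eq', Finset.mem_univ, if_true]

theorem span_minors_eq_span_swapBinomial [LinearOrder ι] (x y : ι → R) :
    Ideal.span {g | ∃ i j, i < j ∧ g = x i * y j - x j * y i} =
      Ideal.span (swapBinomial x y '' sumZeroLattice ι) := by
  apply le_antisymm <;> rw [Ideal.span_le]
  · rintro _ ⟨i, j, hij, rfl⟩
    rw [← swapBinomial_single_sub_single x y hij.ne]
    exact Ideal.subset_span ⟨_, single_sub_single_mem_sumZeroLattice i j, rfl⟩
  · rintro _ ⟨c, hc, rfl⟩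
    exact swapBinomial_mem (minor_mem_span x y) hc

end Minors

/-- The homomorphism `c ↦ (d c, -d c)`, with `d c` the coordinatewise product; it carries
`sumZeroLattice` onto the lattice `L`. -/
def weightedAntidiagonal {ι : Type*} (d : ι → ℕ) : (ι → ℤ) →+ (ι ⊕ ι → ℤ) where
  toFun c := Sum.elim (fun i => d i * c i) (fun i => -(d i * c i))
  map_zero' := by ext (i | i) <;> simp
  map_add' a b := by ext (i | i) <;> simp <;> ring

theorem v1j_eq_weightedAntidiagonal {m : ℕ} (d : Fin (m + 2) → ℕ) {j : Fin (m + 2)} (hj : j ≠ 0) :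
    v1j d j = weightedAntidiagonal d (Pi.single 0 1 - Pi.single j 1) := by
  have u1j_eq (k : Fin (m + 2)) :
      u1j d j k = d k * (Pi.single 0 1 - Pi.single j 1 : Fin (m + 2) → ℤ) k := by
    by_cases h0 : k = 0 <;> by_cases hkj : k = j <;> simp_all [u1j]
  ext (k | k) <;> simp only [v1j, weightedAntidiagonal, u1j_eq, AddMonoidHom.coe_mk, ZeroHom.coe_mk,
    Sum.elim_inl, Sum.elim_inr]

theorem latticeL_eq_map_sumZeroLattice {m : ℕ} (d : Fin (m + 2) → ℕ) :
    latticeL d = (sumZeroLattice (Fin (m + 2))).map (weightedAntidiagonal d) := by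
  rw [latticeL, ← closure_single_sub_single 0, AddMonoidHom.map_closure]
  congr 1
  ext v
  constructor
  · rintro ⟨j, hj, rfl⟩
    exact ⟨_, ⟨j, hj, rfl⟩, (v1j_eq_weightedAntidiagonal d hj).symm⟩
  · rintro ⟨_, ⟨j, hj, rfl⟩, rfl⟩
    exact ⟨j, hj, (v1j_eq_weightedAntidiagonal d hj).symm⟩

theorem toNat_natCast_mul (n : ℕ) (c : ℤ) : ((n : ℤ) * c).toNat = n * c.toNat := by
  zify
  rw [Int.ofNat_toNat, Int.ofNat_toNat, mul_max_of_nonneg _ _ n.cast_nonneg, mul_zero]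

theorem prod_pow_toNat_weightedAntidiagonal_sub {ι R : Type*} [Fintype ι] [CommRing R] (d : ι → ℕ)
    (z : ι ⊕ ι → R) (c : ι → ℤ) :
    (∏ s, z s ^ (weightedAntidiagonal d c s).toNat) -
        (∏ s, z s ^ (-weightedAntidiagonal d c s).toNat) =
      swapBinomial (fun i => z (Sum.inl i) ^ d i) (fun i => z (Sum.inr i) ^ d i) c := by
  simp only [weightedAntidiagonal, AddMonoidHom.coe_mk, ZeroHom.coe_mk, Fintype.prod_sum_type,
    Sum.elim_inl, Sum.elim_inr, neg_neg, ← mul_neg, toNat_natCast_mul, pow_mul, swapBinomial]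

theorem stmt10 (m : ℕ) (d : Fin (m + 2) → ℕ) (hd : ∀ i, 0 < d i) :
    I2D K d = latticeIdealOf K (latticeL d) := by
  have minors : I2D K d = Ideal.span (swapBinomial (fun i => X (Sum.inl i) ^ d i)
      (fun i => X (Sum.inr i) ^ d i) '' sumZeroLattice (Fin (m + 2))) :=
    span_minors_eq_span_swapBinomial _ _
  rw [minors, latticeIdealOf, latticeL_eq_map_sumZeroLattice]
  congr 1
  ext g
  simp [← prod_pow_toNat_weightedAntidiagonal_sub, eq_comm]
end

section
/- The height of the ideal I_2(D) in S equals m − 1. -/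
open MvPolynomial

variable (K : Type*) [Field K]

/-- The height of an ideal: the infimum of the heights of the prime ideals
containing it. -/
noncomputable def idealHeight {R : Type*} [CommRing R] (I : Ideal R) : ℕ∞ :=
  ⨅ (p : PrimeSpectrum R) (_ : I ≤ p.asIdeal), Order.height p

/-
Upper bound: once a prime `q` contains the minors and misses an entry `a i`, a prime `p ≤ q`
minimal over the `m - 1` minors of column `i` against the others contains all minors, because
`a i * (a j * b k - a k * b j)` is a combination of minors involving column `i`. Krull's height
theorem bounds the height of `p`.

Lower bound: below a prime `p` of a polynomial ring, freeing the variables outside a set `T` gives a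
prime `q_T ≤ p` consisting of the polynomials whose coefficients with respect to the free variables
lie in `p`. If `p` contains the minors but not `x i`, then letting `T` consist of column `i` and of
the columns in `U` yields primes that strictly increase with `U`: the minor of the columns `i` and
`j` lies in `q_T` exactly when `j ∈ U`. If `p` contains every `x j`, the variables `x j` themselves
separate the members of such a chain.
-/

section Height

/-- The ideal of `2`-minors of the `2 × ι` matrix with rows `a` and `b`. The pairs of columns are
not required to be ordered, so that `ι` needs no order; this only adds zeros and signs. -/
def twoMinors {A ι : Type*} [CommRing A] (a b : ι → A) : Ideal A :=
  Ideal.span (Set.range fun jk : ι × ι ↦ a jk.1 * b jk.2 - a jk.2 * b jk.1)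

variable {A ι : Type*} [CommRing A]

lemma idealHeight_eq_height (I : Ideal A) : idealHeight I = I.height := by
  simp only [idealHeight, ← PrimeSpectrum.height_eq_orderHeight]
  refine le_antisymm ?_ (le_iInf₂ fun p hp ↦ Ideal.height_mono hp)
  rw [Ideal.height_eq_inf_minimalPrimes]
  exact le_iInf₂ fun p hp ↦ iInf₂_le (⟨p, hp.isPrime⟩ : PrimeSpectrum A) hp.le

variable {a b : ι → A}

lemma minor_mem_twoMinors (j k : ι) : a j * b k - a k * b j ∈ twoMinors a b :=
  Ideal.subset_span ⟨(j, k), rfl⟩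

lemma twoMinors_le_iff {I : Ideal A} :
    twoMinors a b ≤ I ↔ ∀ j k, a j * b k - a k * b j ∈ I := by
  rw [twoMinors, Ideal.span_le, Set.range_subset_iff, Prod.forall]
  rfl

lemma twoMinors_le_of_notMem {p : Ideal A} [hp : p.IsPrime] {i : ι} (hi : a i ∉ p)
    (hmem : ∀ j ≠ i, a i * b j - a j * b i ∈ p) : twoMinors a b ≤ p := by
  have hmem' : ∀ j, a i * b j - a j * b i ∈ p := fun j ↦ by
    by_cases hj : j = i
    · simp [hj]
    · exact hmem j hj
  refine twoMinors_le_iff.2 fun j k ↦ (hp.mem_or_mem ?_).resolve_left hi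
  have expansion : a i * (a j * b k - a k * b j) =
      a j * (a i * b k - a k * b i) - a k * (a i * b j - a j * b i) := by ring
  rw [expansion]
  exact p.sub_mem (p.mul_mem_left _ (hmem' k)) (p.mul_mem_left _ (hmem' j))

lemma height_twoMinors_le [IsNoetherianRing A] [Fintype ι] {q : Ideal A} [q.IsPrime]
    (hq : twoMinors a b ≤ q) {i : ι} (hi : a i ∉ q) :
    (twoMinors a b).height ≤ (Fintype.card ι - 1 : ℕ) := by
  classical
  let minors : Finset A := (Finset.univ.erase i).image fun j ↦ a i * b j - a j * b i
  have minors_le : Ideal.span (minors : Set A) ≤ q := by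
    refine Ideal.span_le.2 fun f hf ↦ ?_
    obtain ⟨j, -, rfl⟩ := Finset.mem_image.1 hf
    exact hq (minor_mem_twoMinors i j)
  obtain ⟨p, hp, hpq⟩ := Ideal.exists_minimalPrimes_le minors_le
  have := hp.isPrime
  have twoMinors_le : twoMinors a b ≤ p :=
    twoMinors_le_of_notMem (fun h ↦ hi (hpq h)) fun j hj ↦ hp.le <| Ideal.subset_span <|
      Finset.mem_image_of_mem _ (Finset.mem_erase.2 ⟨hj, Finset.mem_univ j⟩)
  have card_le : minors.card ≤ Fintype.card ι - 1 := by
    simpa using Finset.card_image_le (s := Finset.univ.erase i)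
  calc (twoMinors a b).height
      ≤ p.height := Ideal.height_mono twoMinors_le
    _ ≤ minors.card := Ideal.height_le_card_of_mem_minimalPrimes_span_finset hp
    _ ≤ (Fintype.card ι - 1 : ℕ) := mod_cast card_le

lemma card_le_orderHeight_of_strictMono {α β : Type*} [Preorder β] {f : Finset α → β}
    (hf : StrictMono f) (s : Finset α) : (s.card : ℕ∞) ≤ Order.height (f s) := by
  classical
  induction s using Finset.induction_on with
  | empty => simp
  | insert j s hj ih =>
    rw [Finset.card_insert_of_notMem hj, Nat.cast_add_one]
    exact (add_le_add_left ih 1).trans (Order.height_add_one_le (hf (Finset.ssubset_insert hj)))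

end Height

section PartialQuotient

variable {R σ : Type*} [CommRing R]

open scoped Classical in
/-- Reduction modulo `p` of the variables in `T`, the other variables staying free. Its kernel is
the ideal generated by the polynomials in `p` that involve only variables in `T`; for prime `p` it
is the prime `q_T` of the lower bound. -/
noncomputable def partialQuotient (p : Ideal (MvPolynomial σ R)) (T : Set σ) :
    MvPolynomial σ R →ₐ[R] MvPolynomial σ (MvPolynomial σ R ⧸ p) :=
  aeval fun s ↦ if s ∈ T then C (Ideal.Quotient.mk p (X s)) else X s

variable {p : Ideal (MvPolynomial σ R)} {T : Set σ}

lemma partialQuotient_X_of_mem {s : σ} (hs : s ∈ T) :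
    partialQuotient p T (X s) = C (Ideal.Quotient.mk p (X s)) := by
  simp [partialQuotient, hs]

lemma partialQuotient_X_of_notMem {s : σ} (hs : s ∉ T) : partialQuotient p T (X s) = X s := by
  simp [partialQuotient, hs]

lemma ker_partialQuotient_mono : Monotone fun T ↦ RingHom.ker (partialQuotient p T) := by
  classical
  intro T T' hTT' f hf
  let reduce : MvPolynomial σ (MvPolynomial σ R ⧸ p) →ₐ[MvPolynomial σ R ⧸ p]
      MvPolynomial σ (MvPolynomial σ R ⧸ p) :=
    aeval fun s ↦ partialQuotient p T' (X s)
  have factorization :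
      (reduce.restrictScalars R).comp (partialQuotient p T) = partialQuotient p T' := by
    ext1 s
    by_cases hs : s ∈ T
    · simp [reduce, partialQuotient_X_of_mem hs, partialQuotient_X_of_mem (hTT' hs),
        MvPolynomial.algebraMap_eq]
    · simp [reduce, partialQuotient_X_of_notMem hs]
  rw [RingHom.mem_ker] at hf ⊢
  rw [← factorization, AlgHom.comp_apply, hf, map_zero]

lemma partialQuotient_of_mem_supported {f : MvPolynomial σ R} (hf : f ∈ supported R T) :
    partialQuotient p T f = C (Ideal.Quotient.mk p f) := by
  let constants : MvPolynomial σ R →ₐ[R] MvPolynomial σ (MvPolynomial σ R ⧸ p) :=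
    (Algebra.ofId (MvPolynomial σ R ⧸ p) _).restrictScalars R |>.comp (Ideal.Quotient.mkₐ R p)
  have agree : Set.EqOn (partialQuotient p T) constants (X '' T) := by
    rintro _ ⟨s, hs, rfl⟩
    exact partialQuotient_X_of_mem hs
  exact AlgHom.adjoin_le_equalizer _ _ agree hf

lemma mem_ker_partialQuotient_of_mem_supported {f : MvPolynomial σ R} (hf : f ∈ supported R T)
    (hfp : f ∈ p) : f ∈ RingHom.ker (partialQuotient p T) := by
  rw [RingHom.mem_ker, partialQuotient_of_mem_supported hf, Ideal.Quotient.eq_zero_iff_mem.2 hfp,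
    map_zero]

lemma ker_partialQuotient_le : RingHom.ker (partialQuotient p T) ≤ p := by
  intro f hf
  have hf_univ : f ∈ RingHom.ker (partialQuotient p Set.univ) :=
    ker_partialQuotient_mono (Set.subset_univ T) hf
  rwa [RingHom.mem_ker, partialQuotient_of_mem_supported (by simp), C_eq_zero,
    Ideal.Quotient.eq_zero_iff_mem] at hf_univ

lemma card_le_height_of_notMem_ker {κ : Type*} [Fintype κ] [p.IsPrime] {T : Finset κ → Set σ}
    (hT : Monotone T) (g : κ → MvPolynomial σ R) (hgp : ∀ k, g k ∈ p)
    (hsupp : ∀ U, ∀ k ∈ U, g k ∈ supported R (T U))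
    (hker : ∀ U, ∀ k ∉ U, g k ∉ RingHom.ker (partialQuotient p (T U))) :
    (Fintype.card κ : ℕ∞) ≤ p.height := by
  let chain (U : Finset κ) : PrimeSpectrum (MvPolynomial σ R) :=
    ⟨RingHom.ker (partialQuotient p (T U)), RingHom.ker_isPrime _⟩
  have chain_strictMono : StrictMono chain := by
    intro U V hUV
    obtain ⟨k, hkV, hkU⟩ := Finset.exists_of_ssubset hUV
    refine lt_of_le_of_ne (ker_partialQuotient_mono (hT hUV.le)) fun heq ↦ hker U k hkU ?_
    have ker_eq : RingHom.ker (partialQuotient p (T U)) = RingHom.ker (partialQuotient p (T V)) :=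
      congrArg PrimeSpectrum.asIdeal heq
    rw [ker_eq]
    exact mem_ker_partialQuotient_of_mem_supported (hsupp V k hkV) (hgp k)
  calc (Fintype.card κ : ℕ∞)
      ≤ Order.height (chain Finset.univ) :=
        card_le_orderHeight_of_strictMono chain_strictMono Finset.univ
    _ = (chain Finset.univ).asIdeal.height := (PrimeSpectrum.height_eq_orderHeight _).symm
    _ ≤ p.height := Ideal.height_mono ker_partialQuotient_le

lemma card_le_height_of_X_mem {κ : Type*} [Fintype κ] [p.IsPrime] {v : κ → σ}
    (hv : Function.Injective v) (hp : ∀ k, X (v k) ∈ p) : (Fintype.card κ : ℕ∞) ≤ p.height := by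
  refine card_le_height_of_notMem_ker (T := fun U ↦ v '' U)
    (fun U V hUV ↦ Set.image_mono (mod_cast hUV)) (fun k ↦ X (v k)) hp
    (fun U k hk ↦ Algebra.subset_adjoin (Set.mem_image_of_mem X ⟨k, hk, rfl⟩)) fun U k hk ↦ ?_
  rw [RingHom.mem_ker, partialQuotient_X_of_notMem (by simpa [hv.eq_iff] using hk)]
  exact X_ne_zero _

end PartialQuotient

section PowerMinors

variable {R ι : Type*} [CommRing R] {d e : ι → ℕ}

lemma C_mul_X_pow_sub_X_pow_mul_C_ne_zero {σ : Type*} {c : R} (hc : c ≠ 0) (c' : R) {s t : σ}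
    (hst : s ≠ t) (k : ℕ) {l : ℕ} (hl : l ≠ 0) :
    (C c * X s ^ k - X t ^ l * C c' : MvPolynomial σ R) ≠ 0 := by
  classical
  intro h
  have h_eval := congrArg (eval (Function.update 1 t 0)) h
  simp [hst, hl, hc] at h_eval

lemma minor_notMem_ker_partialQuotient {p : Ideal (MvPolynomial (ι ⊕ ι) R)} [hp : p.IsPrime]
    {T : Set (ι ⊕ ι)} {i j : ι} (hi : X (.inl i) ∉ p) (hxi : .inl i ∈ T) (hyi : .inr i ∈ T)
    (hxj : .inl j ∉ T) (hyj : .inr j ∉ T) (hdj : d j ≠ 0) :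
    X (.inl i) ^ d i * X (.inr j) ^ e j - X (.inl j) ^ d j * X (.inr i) ^ e i ∉
      RingHom.ker (partialQuotient p T) := by
  have mk_pow_ne_zero : Ideal.Quotient.mk p (X (.inl i) ^ d i) ≠ 0 := fun h ↦
    hi (hp.mem_of_pow_mem _ (Ideal.Quotient.eq_zero_iff_mem.1 h))
  rw [RingHom.mem_ker]
  simp only [map_sub, map_mul, map_pow, partialQuotient_X_of_mem hxi, partialQuotient_X_of_mem hyi,
    partialQuotient_X_of_notMem hxj, partialQuotient_X_of_notMem hyj]
  simpa only [map_pow] using C_mul_X_pow_sub_X_pow_mul_C_ne_zero mk_pow_ne_zero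
    (Ideal.Quotient.mk p (X (.inr i) ^ e i)) Sum.inr_ne_inl (e j) hdj

lemma card_sub_one_le_height_of_X_notMem [Fintype ι] (hd : ∀ i, d i ≠ 0)
    {p : Ideal (MvPolynomial (ι ⊕ ι) R)} [p.IsPrime]
    (hle : twoMinors (fun i ↦ X (.inl i) ^ d i) (fun i ↦ X (.inr i) ^ e i) ≤ p)
    {i : ι} (hi : X (.inl i) ∉ p) : ((Fintype.card ι - 1 : ℕ) : ℕ∞) ≤ p.height := by
  classical
  let column : ι ⊕ ι → ι := Sum.elim id id
  let T (U : Finset {j // j ≠ i}) : Set (ι ⊕ ι) := {s | ∀ j : {j // j ≠ i}, column s = j → j ∈ U}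
  have mem_of_column_eq {U} {s : ι ⊕ ι} (hs : column s = i) : s ∈ T U :=
    fun j hj ↦ absurd (hj.symm.trans hs) j.2
  have mem_iff {U} {j : {j // j ≠ i}} {s : ι ⊕ ι} (hs : column s = j) : s ∈ T U ↔ j ∈ U :=
    ⟨fun h ↦ h j hs, fun hj k hk ↦ Subtype.ext (hs.symm.trans hk) ▸ hj⟩
  have X_pow_mem {U} {s : ι ⊕ ι} (hs : s ∈ T U) (k : ℕ) :
      (X s ^ k : MvPolynomial (ι ⊕ ι) R) ∈ supported R (T U) :=
    pow_mem (Algebra.subset_adjoin (Set.mem_image_of_mem X hs)) k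
  have card_columns : Fintype.card {j // j ≠ i} = Fintype.card ι - 1 := Set.card_ne_eq i
  rw [← card_columns]
  have T_mono : Monotone T := fun U V hUV s hs j hj ↦ hUV (hs j hj)
  let minor (j : {j // j ≠ i}) : MvPolynomial (ι ⊕ ι) R :=
    X (.inl i) ^ d i * X (.inr j.1) ^ e j - X (.inl j.1) ^ d j * X (.inr i) ^ e i
  have minor_mem (j) : minor j ∈ p := twoMinors_le_iff.1 hle i j
  refine card_le_height_of_notMem_ker T_mono minor minor_mem (fun U j hj ↦ ?_) fun U j hj ↦ ?_
  · exact sub_mem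
      (mul_mem (X_pow_mem (mem_of_column_eq rfl) _) (X_pow_mem ((mem_iff rfl).2 hj) _))
      (mul_mem (X_pow_mem ((mem_iff rfl).2 hj) _) (X_pow_mem (mem_of_column_eq rfl) _))
  · exact minor_notMem_ker_partialQuotient hi (mem_of_column_eq rfl) (mem_of_column_eq rfl)
      (mt (mem_iff rfl).1 hj) (mt (mem_iff rfl).1 hj) (hd j)

lemma card_sub_one_le_height_twoMinors_X_pow [Fintype ι] (hd : ∀ i, d i ≠ 0) :
    ((Fintype.card ι - 1 : ℕ) : ℕ∞) ≤
      (twoMinors (fun i ↦ (X (.inl i) : MvPolynomial (ι ⊕ ι) R) ^ d i)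
        (fun i ↦ X (.inr i) ^ e i)).height := by
  rw [Ideal.height_eq_inf_minimalPrimes]
  refine le_iInf₂ fun p hp ↦ ?_
  have := hp.isPrime
  by_cases hX : ∀ i, X (.inl i) ∈ p
  · calc ((Fintype.card ι - 1 : ℕ) : ℕ∞)
        ≤ Fintype.card ι := mod_cast Nat.sub_le _ _
      _ ≤ p.height := card_le_height_of_X_mem Sum.inl_injective hX
  · obtain ⟨i, hi⟩ := not_forall.1 hX
    exact card_sub_one_le_height_of_X_notMem hd hp.le hi

lemma height_twoMinors_X_pow_le [IsNoetherianRing R] [Nontrivial R] [Fintype ι] [Nonempty ι] :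
    (twoMinors (fun i ↦ (X (.inl i) : MvPolynomial (ι ⊕ ι) R) ^ d i)
      (fun i ↦ X (.inr i) ^ e i)).height ≤ (Fintype.card ι - 1 : ℕ) := by
  obtain ⟨M, hM⟩ := Ideal.exists_maximal R
  -- All minors vanish at the point whose coordinates are all `1`.
  let q : Ideal (MvPolynomial (ι ⊕ ι) R) := M.comap (eval 1)
  have one_notMem : (1 : R) ∉ M := M.ne_top_iff_one.1 hM.ne_top
  obtain ⟨i⟩ := ‹Nonempty ι›
  exact height_twoMinors_le (q := q) (i := i) (twoMinors_le_iff.2 fun j k ↦ by simp [q])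
    (by simpa [q] using one_notMem)

theorem stmt11_general [IsNoetherianRing R] [Nontrivial R] [Fintype ι] [Nonempty ι]
    (hd : ∀ i, d i ≠ 0) :
    (twoMinors (fun i ↦ (X (.inl i) : MvPolynomial (ι ⊕ ι) R) ^ d i)
      (fun i ↦ X (.inr i) ^ e i)).height = (Fintype.card ι - 1 : ℕ) :=
  height_twoMinors_X_pow_le.antisymm (card_sub_one_le_height_twoMinors_X_pow hd)

end PowerMinors

lemma I2D_eq_twoMinors {m : ℕ} (d : Fin m → ℕ) :
    I2D K d = twoMinors (fun i ↦ X (.inl i) ^ d i) (fun i ↦ X (.inr i) ^ d i) := by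
  refine le_antisymm (Ideal.span_le.2 ?_) (twoMinors_le_iff.2 fun i j ↦ ?_)
  · rintro _ ⟨i, j, -, rfl⟩
    exact minor_mem_twoMinors i j
  · rcases lt_trichotomy i j with hij | rfl | hji
    · exact Ideal.subset_span ⟨i, j, hij, rfl⟩
    · simp
    · rw [← neg_sub]
      exact neg_mem (Ideal.subset_span ⟨j, i, hji, rfl⟩)

theorem stmt11 (m : ℕ) (hm : 2 ≤ m) (d : Fin m → ℕ) (hd : ∀ i, 0 < d i) :
    idealHeight (I2D K d) = (m - 1 : ℕ) := by
  have : NeZero m := ⟨by omega⟩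
  rw [idealHeight_eq_height, I2D_eq_twoMinors, stmt11_general fun i ↦ (hd i).ne', Fintype.card_fin]
end

section
/- The binomial arithmetical rank of I_2(D) equals m(m−1)/2: there exist m(m−1)/2 binomials B_1,…,B_{m(m−1)/2} ∈ I_2(D) with rad(I_2(D)) = rad((B_1,…,B_{m(m−1)/2})), and whenever rad(I_2(D)) = rad((B_1,…,B_s)) for binomials B_1,…,B_s ∈ I_2(D) one has s ≥ m(m−1)/2. -/
open MvPolynomial

variable (K : Type*) [Field K]

/-!
A binomial vanishes at the indicator of a set `S` of variables exactly when both or neither of its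
monomials are supported in `S`. If binomials cut out the same points as `I_2(D)`, then for each
`i < j` one of them does not vanish at the indicator of `{x_i, y_j}`, because `f_{ij}` does not. As
it vanishes at the indicator of `{x_i, y_i, x_j, y_j}`, both of its monomials involve only these
four variables. So if the same binomial served another pair `i' < j'`, it would still not vanish
after intersecting `{x_{i'}, y_{j'}}` with these four variables; but this drops `x_{i'}` or
`y_{j'}`, and every minor, hence the binomial, vanishes at the resulting point.
-/

theorem card_subtype_fst_lt_snd (α : Type*) [Fintype α] [LinearOrder α] :
    Fintype.card {p : α × α // p.1 < p.2} = Fintype.card α * (Fintype.card α - 1) / 2 := by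
  rw [Fintype.card_subtype, Fintype.card_product_filter_lt, Nat.choose_two_right]

section ZeroOnePoints

theorem aeval_indicator_monomial {R σ : Type*} [CommSemiring R] (S : Set σ) (u : σ →₀ ℕ)
    [Decidable (↑u.support ⊆ S)] :
    aeval (S.indicator (1 : σ → R)) (monomial u (1 : R)) = if ↑u.support ⊆ S then 1 else 0 := by
  rw [aeval_monomial, map_one, one_mul, Finsupp.prod]
  split_ifs with h
  · refine Finset.prod_eq_one fun a ha => ?_
    rw [Set.indicator_of_mem (h ha), Pi.one_apply, one_pow]
  · obtain ⟨a, ha, haS⟩ := Set.not_subset.mp h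
    refine Finset.prod_eq_zero ha ?_
    rw [Set.indicator_of_notMem haS, zero_pow (Finsupp.mem_support_iff.mp ha)]

theorem aeval_indicator_monomial_sub_monomial_eq_zero_iff {R σ : Type*} [CommRing R] [Nontrivial R]
    (S : Set σ) (u v : σ →₀ ℕ) :
    aeval (S.indicator (1 : σ → R)) (monomial u (1 : R) - monomial v 1) = 0 ↔
      (↑u.support ⊆ S ↔ ↑v.support ⊆ S) := by
  classical
  rw [map_sub, aeval_indicator_monomial, aeval_indicator_monomial]
  split_ifs <;> simp_all

variable {K} {σ : Type*}

/-- If `B` separates `S` from `T ⊇ S`, both monomials of `B` are supported in `T`. -/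
theorem IsBinom.aeval_indicator_inter_eq_zero_iff {B : MvPolynomial σ K} (hB : IsBinom B)
    {S T : Set σ} (hST : S ⊆ T) (hS : aeval (S.indicator (1 : σ → K)) B ≠ 0)
    (hT : aeval (T.indicator (1 : σ → K)) B = 0) (U : Set σ) :
    aeval ((U ∩ T).indicator (1 : σ → K)) B = 0 ↔ aeval (U.indicator (1 : σ → K)) B = 0 := by
  obtain ⟨u, v, rfl⟩ := hB
  simp only [ne_eq, aeval_indicator_monomial_sub_monomial_eq_zero_iff] at hS hT ⊢
  have huv : ↑u.support ⊆ T ∧ ↑v.support ⊆ T := by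
    have hu : ↑u.support ⊆ S → ↑u.support ⊆ T := fun h => h.trans hST
    have hv : ↑v.support ⊆ S → ↑v.support ⊆ T := fun h => h.trans hST
    tauto
  simp only [Set.subset_inter_iff, huv.1, huv.2, and_true]

end ZeroOnePoints

theorem zeroLocus_radical {k L σ : Type*} [Field k] [Field L] [Algebra k L]
    (I : Ideal (MvPolynomial σ k)) : zeroLocus L I.radical = zeroLocus L I :=
  (zeroLocus_anti_mono Ideal.le_radical).antisymm <|
    le_zeroLocus_iff_le_vanishingIdeal.mpr (radical_le_vanishingIdeal_zeroLocus I)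

section Minors

/-- The variables `x_i` and `y_j` of the first monomial of `f_{ij}`; their indicator is a 0/1 point
at which `f_{ij}` does not vanish. -/
def diagVars {ι : Type*} (i j : ι) : Set (ι ⊕ ι) := {Sum.inl i, Sum.inr j}

/-- The variables `x_i` and `y_i` with `i ∈ C`, that is, those in the columns of `D` indexed by `C`;
all minors vanish at their indicator. -/
def colVars {ι : Type*} (C : Set ι) : Set (ι ⊕ ι) := {v | Sum.elim id id v ∈ C}

theorem diagVars_subset_colVars {ι : Type*} (i j : ι) : diagVars i j ⊆ colVars {i, j} := by
  rintro v (rfl | rfl) <;> simp [colVars]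

variable {m : ℕ}

theorem isBinom_fIJ (d : Fin m → ℕ) (i j : Fin m) : IsBinom (fIJ K d i j) :=
  ⟨Finsupp.single (Sum.inl i) (d i) + Finsupp.single (Sum.inr j) (d j),
    Finsupp.single (Sum.inl j) (d j) + Finsupp.single (Sum.inr i) (d i),
    by simp only [fIJ, X_pow_eq_monomial, monomial_mul, one_mul]⟩

theorem I2D_eq_span_range (d : Fin m → ℕ) :
    I2D K d = Ideal.span (Set.range fun p : {p : Fin m × Fin m // p.1 < p.2} =>
      fIJ K d p.1.1 p.1.2) := by
  rw [I2D]
  congr 1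
  ext f
  simp [eq_comm]

variable {K} {d : Fin m → ℕ}

theorem mem_zeroLocus_I2D_iff {p : Fin m ⊕ Fin m → K} :
    p ∈ zeroLocus K (I2D K d) ↔ ∀ i j, i < j →
      p (Sum.inl i) ^ d i * p (Sum.inr j) ^ d j = p (Sum.inl j) ^ d j * p (Sum.inr i) ^ d i := by
  rw [I2D_eq_span_range, zeroLocus_span]
  simp only [Set.mem_ofPred_eq, Set.forall_mem_range, Subtype.forall, Prod.forall]
  refine forall₃_congr fun i j _ => ?_
  simp only [fIJ, map_sub, map_mul, map_pow, aeval_X, sub_eq_zero]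

theorem indicator_colVars_mem_zeroLocus_I2D (C : Set (Fin m)) :
    (colVars C).indicator (1 : Fin m ⊕ Fin m → K) ∈ zeroLocus K (I2D K d) :=
  mem_zeroLocus_I2D_iff.mpr fun _ _ _ => mul_comm _ _

theorem indicator_mem_zeroLocus_I2D_iff (hd : ∀ i, 0 < d i) {S : Set (Fin m ⊕ Fin m)} :
    S.indicator (1 : Fin m ⊕ Fin m → K) ∈ zeroLocus K (I2D K d) ↔ ∀ i j, i < j →
      (Sum.inl i ∈ S ∧ Sum.inr j ∈ S ↔ Sum.inl j ∈ S ∧ Sum.inr i ∈ S) := by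
  classical
  have h_ind (v : Fin m ⊕ Fin m) (i : Fin m) :
      S.indicator (1 : Fin m ⊕ Fin m → K) v ^ d i = if v ∈ S then 1 else 0 := by
    rw [Set.indicator_apply, Pi.one_apply, ite_pow, one_pow, zero_pow (hd i).ne']
  simp only [mem_zeroLocus_I2D_iff, h_ind]
  refine forall₃_congr fun i j _ => ?_
  split_ifs <;> simp_all

theorem indicator_diagVars_notMem_zeroLocus_I2D (hd : ∀ i, 0 < d i) {i j : Fin m} (hij : i < j) :
    (diagVars i j).indicator (1 : Fin m ⊕ Fin m → K) ∉ zeroLocus K (I2D K d) := by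
  rw [indicator_mem_zeroLocus_I2D_iff hd]
  intro h
  have hji : Sum.inl j ∈ diagVars i j := ((h i j hij).mp ⟨.inl rfl, .inr rfl⟩).1
  simp [diagVars, hij.ne'] at hji

theorem indicator_diagVars_inter_colVars_mem_zeroLocus_I2D (hd : ∀ i, 0 < d i) {i j : Fin m}
    {C : Set (Fin m)} (hC : ¬(i ∈ C ∧ j ∈ C)) :
    (diagVars i j ∩ colVars C).indicator (1 : Fin m ⊕ Fin m → K) ∈ zeroLocus K (I2D K d) := by
  have h_not (a b : Fin m) : ¬(Sum.inl a ∈ diagVars i j ∩ colVars C ∧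
      Sum.inr b ∈ diagVars i j ∩ colVars C) := by
    simp only [diagVars, colVars, Set.mem_inter_iff, Set.mem_insert_iff, Set.mem_singleton_iff,
      Set.mem_ofPred_eq, Sum.inl.injEq, Sum.inr.injEq, reduceCtorEq, or_false, false_or,
      Sum.elim_inl, Sum.elim_inr, id]
    rintro ⟨⟨rfl, ha⟩, rfl, hb⟩
    exact hC ⟨ha, hb⟩
  exact (indicator_mem_zeroLocus_I2D_iff hd).mpr fun a b _ => iff_of_false (h_not a b) (h_not b a)

theorem IsBinom.mem_pair_of_aeval_indicator_diagVars_ne_zero (hd : ∀ i, 0 < d i)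
    {B : MvPolynomial (Fin m ⊕ Fin m) K} (hB : IsBinom B)
    (hvan : B ∈ vanishingIdeal K (zeroLocus K (I2D K d))) {i j i' j' : Fin m}
    (h : aeval ((diagVars i j).indicator (1 : Fin m ⊕ Fin m → K)) B ≠ 0)
    (h' : aeval ((diagVars i' j').indicator (1 : Fin m ⊕ Fin m → K)) B ≠ 0) :
    i ∈ ({i', j'} : Set (Fin m)) ∧ j ∈ ({i', j'} : Set (Fin m)) := by
  by_contra hC
  exact h <| (hB.aeval_indicator_inter_eq_zero_iff (diagVars_subset_colVars i' j') h'
    (hvan _ (indicator_colVars_mem_zeroLocus_I2D _)) _).mp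
    (hvan _ (indicator_diagVars_inter_colVars_mem_zeroLocus_I2D hd hC))

theorem le_card_of_zeroLocus_I2D_eq_zeroLocus_span_range (hd : ∀ i, 0 < d i)
    {ι : Type*} [Fintype ι] {B : ι → MvPolynomial (Fin m ⊕ Fin m) K} (hB : ∀ k, IsBinom (B k))
    (hV : zeroLocus K (I2D K d) = zeroLocus K (Ideal.span (Set.range B))) :
    m * (m - 1) / 2 ≤ Fintype.card ι := by
  have hvan (k : ι) : B k ∈ vanishingIdeal K (zeroLocus K (I2D K d)) :=
    hV ▸ le_vanishingIdeal_zeroLocus _ (Ideal.subset_span ⟨k, rfl⟩)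
  have hex (p : {p : Fin m × Fin m // p.1 < p.2}) :
      ∃ k, aeval ((diagVars p.1.1 p.1.2).indicator (1 : Fin m ⊕ Fin m → K)) (B k) ≠ 0 := by
    have hp := indicator_diagVars_notMem_zeroLocus_I2D (K := K) hd p.2
    simpa [hV, zeroLocus_span] using hp
  choose F hF using hex
  suffices hinj : Function.Injective F by
    simpa only [card_subtype_fst_lt_snd, Fintype.card_fin] using
      Fintype.card_le_of_injective F hinj
  rintro ⟨⟨i, j⟩, hij⟩ ⟨⟨i', j'⟩, hij'⟩ hFeq
  obtain ⟨hi, hj⟩ := (hB _).mem_pair_of_aeval_indicator_diagVars_ne_zero hd (hvan _)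
    (hF ⟨(i, j), hij⟩) (hFeq ▸ hF ⟨(i', j'), hij'⟩)
  simp only [Set.mem_insert_iff, Set.mem_singleton_iff] at hi hj
  grind

end Minors

theorem stmt12_general (m : ℕ) (d : Fin m → ℕ) (hd : ∀ i, 0 < d i) :
    (∃ B : Fin (m * (m - 1) / 2) → MvPolynomial (Fin m ⊕ Fin m) K,
      (∀ k, IsBinom (B k)) ∧ I2D K d = Ideal.span (Set.range B)) ∧
    (∀ (s : ℕ) (B : Fin s → MvPolynomial (Fin m ⊕ Fin m) K),
      (∀ k, IsBinom (B k)) →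
      zeroLocus K (I2D K d) = zeroLocus K (Ideal.span (Set.range B)) →
      m * (m - 1) / 2 ≤ s) := by
  constructor
  · have hcard : Fintype.card {p : Fin m × Fin m // p.1 < p.2} = m * (m - 1) / 2 := by
      rw [card_subtype_fst_lt_snd, Fintype.card_fin]
    let e := (Fintype.equivFinOfCardEq hcard).symm
    refine ⟨fun k => fIJ K d (e k).1.1 (e k).1.2, fun k => isBinom_fIJ K d _ _, ?_⟩
    rw [I2D_eq_span_range, ← e.surjective.range_comp]
    rfl
  · intro s B hB hV
    simpa only [Fintype.card_fin] using le_card_of_zeroLocus_I2D_eq_zeroLocus_span_range hd hB hV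

theorem stmt12 (m : ℕ) (hm : 2 ≤ m) (d : Fin m → ℕ) (hd : ∀ i, 0 < d i) :
    (∃ B : Fin (m * (m - 1) / 2) → MvPolynomial (Fin m ⊕ Fin m) K,
      (∀ k, IsBinom (B k) ∧ B k ∈ I2D K d) ∧
      (I2D K d).radical = (Ideal.span (Set.range B)).radical) ∧
    (∀ (s : ℕ) (B : Fin s → MvPolynomial (Fin m ⊕ Fin m) K),
      (∀ k, IsBinom (B k) ∧ B k ∈ I2D K d) →
      (I2D K d).radical = (Ideal.span (Set.range B)).radical →
      m * (m - 1) / 2 ≤ s) := by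
  obtain ⟨⟨B, hB, hspan⟩, hlower⟩ := stmt12_general K m d hd
  refine ⟨⟨B, fun k => ⟨hB k, hspan ▸ Ideal.subset_span ⟨k, rfl⟩⟩, congrArg Ideal.radical hspan⟩,
    fun s B hB hrad => hlower s B (fun k => (hB k).1) ?_⟩
  rw [← zeroLocus_radical, hrad, zeroLocus_radical]
end

section
/- The ideal I_2(D) is a prime ideal of S if and only if gcd(d_i, d_j) = 1 for every 1 ≤ i < j ≤ m. -/
open MvPolynomial

variable (K : Type*) [Field K]

/-!
If `g > 1` divides `d i` and `d j`, then `f_{ij} = A ^ g - B ^ g` with `A = x_i^a y_j^b` and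
`B = x_j^b y_i^a` has the factor `A - B`. Setting `x_i = X`, `x_j = y_i = y_j = 1` and all other
variables to `0` turns every element of the ideal into a multiple of `X ^ d i - 1`, while both
factors become nonzero polynomials of smaller degree; hence the ideal is not prime.

If the `d i` are pairwise coprime, the ideal is the kernel of the monomial map
`x_i ↦ t_i s^{1/d_i}`, `y_i ↦ t_i` into a domain. Such a kernel is spanned by the differences of
monomials with the same image. If `u` and `v` are the exponents of two such monomials, then
`∑ (u_{x_i} - v_{x_i}) / d_i = 0`, and coprimality forces `d_i ∣ u_{x_i} - v_{x_i}`. So the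
monomials differ by trading powers of `x_i^{d_i}` for powers of `y_i^{d_i}`, equally often in both
directions, and this is possible modulo the relations `x_i^{d_i} y_j^{d_j} = x_j^{d_j} y_i^{d_i}`.
-/

theorem dvd_of_den_sum_div_eq_one {ι : Type*} {s : Finset ι} {d : ι → ℕ}
    (hd : ∀ i ∈ s, d i ≠ 0) (hcop : (s : Set ι).Pairwise (Nat.Coprime.onFun d)) {c : ι → ℤ}
    (hsum : (∑ i ∈ s, (c i : ℚ) / d i).den = 1) {i : ι} (hi : i ∈ s) : (d i : ℤ) ∣ c i := by
  classical
  have den_dvd (j : ι) : ((c j : ℚ) / d j).den ∣ d j := by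
    have := Rat.den_dvd (c j) (d j)
    rw [Rat.divInt_eq_div] at this
    exact_mod_cast this
  have den_dvd_prod : ((c i : ℚ) / d i).den ∣ ∏ j ∈ s.erase i, d j := by
    rw [← Finset.add_sum_erase s _ hi] at hsum
    have h := Rat.sub_den_dvd ((c i : ℚ) / d i + ∑ j ∈ s.erase i, (c j : ℚ) / d j)
      (∑ j ∈ s.erase i, (c j : ℚ) / d j)
    rw [add_sub_cancel_right, hsum, one_mul] at h
    exact (h.trans (Finset.Rat.den_sum_dvd_prod_den _ _)).trans
      (Finset.prod_dvd_prod_of_dvd _ _ fun j _ ↦ den_dvd j)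
  have coprime_prod : (d i).Coprime (∏ j ∈ s.erase i, d j) :=
    Nat.Coprime.prod_right fun j hj ↦
      hcop hi (Finset.mem_of_mem_erase hj) (Finset.ne_of_mem_erase hj).symm
  refine (Rat.den_div_intCast_eq_one_iff _ _ (mod_cast hd i hi)).mp ?_
  exact_mod_cast Nat.eq_one_of_dvd_coprimes coprime_prod (den_dvd i) den_dvd_prod

theorem prod_map_mul_prod_map_comm {ι M : Type*} [CommMonoid M] {a b : ι → M}
    (h : ∀ i j, a i * b j = a j * b i) {s t : Multiset ι} (hst : s.card = t.card) :
    (s.map a).prod * (t.map b).prod = (t.map a).prod * (s.map b).prod := by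
  induction s using Multiset.induction generalizing t with
  | empty => simp [Multiset.card_eq_zero.mp hst.symm]
  | cons i s ih =>
    obtain ⟨j, hj⟩ : ∃ j, j ∈ t := Multiset.card_pos_iff_exists_mem.mp (by simp [← hst])
    obtain ⟨t, rfl⟩ := Multiset.exists_cons_of_mem hj
    simp only [Multiset.card_cons, Nat.add_right_cancel_iff] at hst
    simp only [Multiset.map_cons, Multiset.prod_cons]
    rw [mul_mul_mul_comm, h, ih hst, mul_mul_mul_comm]

theorem finsuppProd_pow_mul_comm {ι M : Type*} [CommMonoid M] {a b : ι → M}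
    (h : ∀ i j, a i * b j = a j * b i) {p q : ι →₀ ℕ} (hpq : p.degree = q.degree) :
    (p.prod fun i n ↦ a i ^ n) * (q.prod fun i n ↦ b i ^ n) =
      (q.prod fun i n ↦ a i ^ n) * (p.prod fun i n ↦ b i ^ n) := by
  have prod_eq (c : ι → M) (r : ι →₀ ℕ) :
      (r.prod fun i n ↦ c i ^ n) = (r.toMultiset.map c).prod := by
    rw [Finsupp.toMultiset_map, Finsupp.prod_toMultiset,
      Finsupp.prod_mapDomain_index (fun _ ↦ pow_zero _) (fun _ _ _ ↦ pow_add _ _ _)]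
  simp only [prod_eq]
  exact prod_map_mul_prod_map_comm h (by
    simpa only [Finsupp.card_toMultiset, Finsupp.degree_apply, Finsupp.sum, id] using hpq)

theorem ker_mapDomainRingHom_eq_span {R M N : Type*} [Ring R] [AddMonoid M] [AddMonoid N]
    (f : M →+ N) :
    RingHom.ker (AddMonoidAlgebra.mapDomainRingHom R f) = Ideal.span
      {p | ∃ u v, f u = f v ∧ p = AddMonoidAlgebra.single u 1 - AddMonoidAlgebra.single v 1} := by
  set I : Ideal (AddMonoidAlgebra R M) := Ideal.span _ with hI
  apply le_antisymm
  · intro p hp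
    have sub_mem (p : AddMonoidAlgebra R M) : p - AddMonoidAlgebra.mapDomain (Function.invFun f)
        (AddMonoidAlgebra.mapDomainRingHom R f p) ∈ I := by
      induction p using AddMonoidAlgebra.induction_linear with
      | zero => simp
      | add p q hp hq =>
        rw [map_add, AddMonoidAlgebra.mapDomain_add, add_sub_add_comm]
        exact add_mem hp hq
      | single u r =>
        have hu : f u = f (Function.invFun f (f u)) := (Function.invFun_eq ⟨u, rfl⟩).symm
        have hmem := I.mul_mem_left (AddMonoidAlgebra.single 0 r)
          (Ideal.subset_span ⟨u, _, hu, rfl⟩)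
        simpa [mul_sub, AddMonoidAlgebra.single_mul_single] using hmem
    simpa [RingHom.mem_ker.mp hp, -AddMonoidAlgebra.mapDomainRingHom_apply] using sub_mem p
  · rw [hI, Ideal.span_le]
    rintro _ ⟨u, v, huv, rfl⟩
    rw [SetLike.mem_coe, RingHom.mem_ker, map_sub, sub_eq_zero]
    simp [huv]

theorem sumElim_eq_inf_add {ι : Type*} {a b a' b' : ι →₀ ℕ} (h : a + b = a' + b') :
    Finsupp.sumElim a b =
      Finsupp.sumElim a b ⊓ Finsupp.sumElim a' b' + Finsupp.sumElim (a - a') (a' - a) := by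
  ext (i | i) <;> have hi := DFunLike.congr_fun h i <;>
    simp only [Finsupp.add_apply, Finsupp.inf_apply, Finsupp.sumElim_inl, Finsupp.sumElim_inr,
      Finsupp.tsub_apply] at hi ⊢ <;> omega

theorem exists_pointwise_smul_eq {ι : Type*} {d : ι → ℕ} {f : ι →₀ ℕ} (h : ∀ i, d i ∣ f i) :
    ∃ p : ι →₀ ℕ, d • p = f := by
  refine ⟨Finsupp.onFinset f.support (fun i ↦ f i / d i) fun i hi ↦ ?_, ?_⟩
  · aesop
  · ext i
    simp [Nat.mul_div_cancel' (h i)]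

section

variable {ι : Type*}

/-- The exponent of the image of a monomial under the parametrization `x_i ↦ t_i s^{1/d_i}`,
`y_i ↦ t_i`, the first component recording the powers of the `t_i` and the second that of `s`.
Rational exponents of `s` make a common multiple of the `d_i` unnecessary, so that `ι` may be
infinite. -/
noncomputable def toricWeight (d : ι → ℕ) : (ι ⊕ ι →₀ ℕ) →+ (ι →₀ ℕ) × ℚ :=
  Finsupp.weight (Sum.elim (fun i ↦ (Finsupp.single i 1, (d i : ℚ)⁻¹))
    (fun i ↦ (Finsupp.single i 1, 0)))

theorem toricWeight_sumElim (d : ι → ℕ) (a b : ι →₀ ℕ) :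
    toricWeight d (Finsupp.sumElim a b) = (a + b, a.sum fun i n ↦ (n : ℚ) / d i) := by
  rw [toricWeight, Finsupp.weight_apply, Finsupp.sum_sumElim]
  ext1
  · conv_rhs => rw [← a.sum_single, ← b.sum_single]
    simp [Finsupp.sum, Prod.fst_sum]
  · simp [Finsupp.sum, Prod.snd_sum, div_eq_mul_inv]

theorem toricWeight_sumElim_smul {d : ι → ℕ} (hd : ∀ i, d i ≠ 0) (p q : ι →₀ ℕ) :
    toricWeight d (Finsupp.sumElim (d • p) (d • q)) = (d • (p + q), (p.degree : ℚ)) := by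
  have hsupp : (d • p).support ⊆ p.support := fun i ↦ by aesop
  rw [toricWeight_sumElim, smul_add, Finsupp.sum_of_support_subset _ hsupp _ (by simp),
    Finsupp.degree_apply, Nat.cast_sum]
  congr 1
  exact Finset.sum_congr rfl fun i _ ↦ by simp [hd i]

theorem dvd_tsub_of_toricWeight_eq {d : ι → ℕ} (hd : ∀ i, d i ≠ 0)
    (hcop : Pairwise (Nat.Coprime.onFun d)) {a b a' b' : ι →₀ ℕ}
    (h : toricWeight d (Finsupp.sumElim a b) = toricWeight d (Finsupp.sumElim a' b')) (i : ι) :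
    d i ∣ (a - a') i := by
  classical
  let s := insert i (a.support ∪ a'.support)
  have hsum : ∑ k ∈ s, (((a k - a' k : ℤ) : ℚ) / d k) = 0 := by
    have h₂ := congrArg Prod.snd h
    simp only [toricWeight_sumElim] at h₂
    rw [Finsupp.sum_of_support_subset a (s := s) (by grind) _ (by simp),
      Finsupp.sum_of_support_subset a' (s := s) (by grind) _ (by simp)] at h₂
    simpa [sub_div, sub_eq_zero] using h₂
  have hdvd : (d i : ℤ) ∣ a i - a' i :=
    dvd_of_den_sum_div_eq_one (c := fun k ↦ a k - a' k) (fun k _ ↦ hd k)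
      (hcop.set_pairwise _) (by rw [hsum, Rat.den_zero]) (Finset.mem_insert_self i _)
  rw [Finsupp.tsub_apply]
  rcases le_total (a i) (a' i) with hle | hle
  · simp [Nat.sub_eq_zero_of_le hle]
  · rwa [← Int.natCast_dvd_natCast, Nat.cast_sub hle]

theorem exists_exchange_of_toricWeight_eq {d : ι → ℕ} (hd : ∀ i, d i ≠ 0)
    (hcop : Pairwise (Nat.Coprime.onFun d)) {u v : ι ⊕ ι →₀ ℕ}
    (h : toricWeight d u = toricWeight d v) :
    ∃ (w : ι ⊕ ι →₀ ℕ) (p q : ι →₀ ℕ), p.degree = q.degree ∧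
      u = w + Finsupp.sumElim (d • p) (d • q) ∧ v = w + Finsupp.sumElim (d • q) (d • p) := by
  obtain ⟨a, b, rfl⟩ : ∃ a b, u = Finsupp.sumElim a b :=
    ⟨_, _, (Finsupp.sumFinsuppEquivProdFinsupp.symm_apply_apply u).symm⟩
  obtain ⟨a', b', rfl⟩ : ∃ a' b', v = Finsupp.sumElim a' b' :=
    ⟨_, _, (Finsupp.sumFinsuppEquivProdFinsupp.symm_apply_apply v).symm⟩
  obtain ⟨p, hp⟩ := exists_pointwise_smul_eq (dvd_tsub_of_toricWeight_eq hd hcop h)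
  obtain ⟨q, hq⟩ := exists_pointwise_smul_eq (dvd_tsub_of_toricWeight_eq hd hcop h.symm)
  have hadd : a + b = a' + b' := by
    simpa only [toricWeight_sumElim] using congrArg Prod.fst h
  have hu := sumElim_eq_inf_add hadd
  have hv := sumElim_eq_inf_add hadd.symm
  rw [← hp, ← hq] at hu hv
  rw [inf_comm] at hv
  generalize Finsupp.sumElim a b ⊓ Finsupp.sumElim a' b' = w at hu hv
  refine ⟨w, p, q, ?_, hu, hv⟩
  rw [hu, hv, map_add, map_add, toricWeight_sumElim_smul hd, toricWeight_sumElim_smul hd] at h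
  have hdeg : (p.degree : ℚ) = q.degree := congrArg Prod.snd (add_left_cancel h)
  exact_mod_cast hdeg

end

section

variable (R : Type*) [CommRing R] {ι : Type*}

/-- The minor `x_i^{d_i} y_j^{d_j} − x_j^{d_j} y_i^{d_i}` over an arbitrary ring and index type,
with the encoding of the variables used in `fIJ`. -/
noncomputable def powMinor (d : ι → ℕ) (i j : ι) : MvPolynomial (ι ⊕ ι) R :=
  X (Sum.inl i) ^ d i * X (Sum.inr j) ^ d j - X (Sum.inl j) ^ d j * X (Sum.inr i) ^ d i

/-- The ideal `I_2(D)` over an arbitrary ring and index type. All pairs `(i, j)` are admitted, so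
no order on `ι` is involved. -/
noncomputable def powMinorIdeal (d : ι → ℕ) : Ideal (MvPolynomial (ι ⊕ ι) R) :=
  Ideal.span {p | ∃ i j, p = powMinor R d i j}

theorem monomial_sumElim_smul (d : ι → ℕ) (p q : ι →₀ ℕ) :
    monomial (Finsupp.sumElim (d • p) (d • q)) (1 : R) =
      (p.prod fun i n ↦ (X (Sum.inl i) ^ d i) ^ n) *
        (q.prod fun i n ↦ (X (Sum.inr i) ^ d i) ^ n) := by
  have prod_smul (r : ι →₀ ℕ) (x : ι → MvPolynomial (ι ⊕ ι) R) :
      ((d • r).prod fun i n ↦ x i ^ n) = r.prod fun i n ↦ (x i ^ d i) ^ n := by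
    have hsupp : (d • r).support ⊆ r.support := fun i ↦ by aesop
    rw [Finsupp.prod_of_support_subset _ hsupp _ (by simp)]
    simp [Finsupp.prod, pow_mul]
  rw [monic_monomial_eq, Finsupp.prod_sumElim]
  exact congrArg₂ _ (prod_smul p _) (prod_smul q _)

theorem powMinor_eq_monomial_sub_monomial (d : ι → ℕ) (i j : ι) :
    powMinor R d i j =
      monomial (Finsupp.sumElim (d • Finsupp.single i 1) (d • Finsupp.single j 1)) 1 -
        monomial (Finsupp.sumElim (d • Finsupp.single j 1) (d • Finsupp.single i 1)) 1 := by
  simp [monomial_sumElim_smul, powMinor]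

theorem monomial_exchange_sub_mem (d : ι → ℕ) {p q : ι →₀ ℕ} (hpq : p.degree = q.degree) :
    monomial (Finsupp.sumElim (d • p) (d • q)) 1 - monomial (Finsupp.sumElim (d • q) (d • p)) 1 ∈
      powMinorIdeal R d := by
  rw [← Ideal.Quotient.eq]
  simp only [monomial_sumElim_smul, map_mul, map_finsuppProd, map_pow]
  refine finsuppProd_pow_mul_comm (fun i j ↦ ?_) hpq
  simp only [← map_mul, ← map_pow]
  exact Ideal.Quotient.eq.mpr (Ideal.subset_span ⟨i, j, rfl⟩)

theorem powMinorIdeal_eq_ker {d : ι → ℕ} (hd : ∀ i, d i ≠ 0)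
    (hcop : Pairwise (Nat.Coprime.onFun d)) :
    powMinorIdeal R d = RingHom.ker (AddMonoidAlgebra.mapDomainRingHom R (toricWeight d)) := by
  rw [ker_mapDomainRingHom_eq_span]
  apply le_antisymm <;> refine Ideal.span_le.mpr ?_
  · rintro _ ⟨i, j, rfl⟩
    refine Ideal.subset_span ⟨_, _, ?_, powMinor_eq_monomial_sub_monomial R d i j⟩
    simp [toricWeight_sumElim_smul hd, add_comm]
  · rintro _ ⟨u, v, huv, rfl⟩
    obtain ⟨w, p, q, hpq, rfl, rfl⟩ := exists_exchange_of_toricWeight_eq hd hcop huv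
    have hmem := Ideal.mul_mem_left _ (monomial w 1) (monomial_exchange_sub_mem R d hpq)
    rwa [mul_sub, monomial_mul, monomial_mul, one_mul] at hmem

end

section

variable {R : Type*} [CommRing R] {ι : Type*}

open Classical in
/-- The specialization `x_i ↦ X`, `x_j, y_i, y_j ↦ 1`, all other variables `↦ 0`, under which the
only surviving minors are those of the columns `i ≠ j`, with value `± (X ^ d i - 1)`. -/
noncomputable def pairSpecialization (i j : ι) : MvPolynomial (ι ⊕ ι) R →ₐ[R] Polynomial R :=
  aeval (Sum.elim (fun k ↦ if k = i then Polynomial.X else if k = j then 1 else 0)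
    (fun k ↦ if k = i ∨ k = j then 1 else 0))

theorem X_pow_sub_one_dvd_pairSpecialization {d : ι → ℕ} (hd : ∀ i, d i ≠ 0)
    {i j : ι} (hij : i ≠ j) {p : MvPolynomial (ι ⊕ ι) R} (hp : p ∈ powMinorIdeal R d) :
    (Polynomial.X ^ d i - 1 : Polynomial R) ∣ pairSpecialization i j p := by
  have hle : powMinorIdeal R d ≤
      (Ideal.span {Polynomial.X ^ d i - 1}).comap (pairSpecialization i j) := by
    refine Ideal.span_le.mpr ?_
    rintro _ ⟨k, l, rfl⟩
    rw [SetLike.mem_coe, Ideal.mem_comap, Ideal.mem_span_singleton]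
    have hdk := hd k
    have hdl := hd l
    rcases eq_or_ne k l with rfl | hkl
    · simp [powMinor]
    by_cases hk : k = i ∨ k = j
    · by_cases hl : l = i ∨ l = j
      · rcases hk with rfl | rfl <;> rcases hl with rfl | rfl
        · simp [powMinor]
        · simp [pairSpecialization, powMinor, hij.symm]
        · simpa [pairSpecialization, powMinor, hij.symm] using dvd_sub_comm.mp dvd_rfl
        · simp [powMinor]
      · simp_all [pairSpecialization, powMinor]
    · simp_all [pairSpecialization, powMinor]
  exact Ideal.mem_span_singleton.mp (hle hp)

theorem not_mul_dvd_of_monic [Nontrivial R] {p q : Polynomial R} (hp : p.Monic)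
    (hpq : (p * q).Monic) (hp₀ : 0 < p.natDegree) (hlt : p.natDegree < (p * q).natDegree) :
    ¬ p * q ∣ p ∧ ¬ p * q ∣ q := by
  have hq : q.Monic := hp.of_mul_monic_left hpq
  have hdeg : (p * q).natDegree = p.natDegree + q.natDegree := hp.natDegree_mul hq
  exact ⟨hpq.not_dvd_of_natDegree_lt hp.ne_zero hlt,
    hpq.not_dvd_of_natDegree_lt hq.ne_zero (by omega)⟩

theorem not_X_pow_sub_one_dvd_of_mul_eq [Nontrivial R] {a n : ℕ} (ha : 0 < a) (han : a < n)
    {q : Polynomial R} (hq : (Polynomial.X ^ a - 1) * q = Polynomial.X ^ n - 1) :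
    ¬ (Polynomial.X ^ n - 1 : Polynomial R) ∣ Polynomial.X ^ a - 1 ∧
      ¬ (Polynomial.X ^ n - 1 : Polynomial R) ∣ q := by
  have monic {k : ℕ} (hk : 0 < k) : (Polynomial.X ^ k - 1 : Polynomial R).Monic := by
    simpa only [map_one] using Polynomial.monic_X_pow_sub_C (1 : R) hk.ne'
  have natDegree_eq (k : ℕ) : (Polynomial.X ^ k - 1 : Polynomial R).natDegree = k := by
    simpa only [map_one] using Polynomial.natDegree_X_pow_sub_C (r := (1 : R))
  rw [← hq]
  refine not_mul_dvd_of_monic (monic ha) ?_ ?_ ?_ <;> simp only [hq, natDegree_eq]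
  · exact monic (ha.trans han)
  · exact ha
  · exact han

theorem eq_one_of_isPrime_powMinorIdeal [Nontrivial R] {d : ι → ℕ} (hd : ∀ i, d i ≠ 0)
    (hprime : (powMinorIdeal R d).IsPrime) {i j : ι} (hij : i ≠ j) {g : ℕ} (hi : g ∣ d i)
    (hj : g ∣ d j) : g = 1 := by
  obtain ⟨a, ha⟩ := hi
  obtain ⟨b, hb⟩ := hj
  obtain ⟨hg, ha₀⟩ : g ≠ 0 ∧ a ≠ 0 := mul_ne_zero_iff.mp (ha ▸ hd i)
  by_contra hg₁
  have hlt : a < d i := by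
    rw [ha]
    exact lt_mul_of_one_lt_left (by omega) (by omega)
  let A : MvPolynomial (ι ⊕ ι) R := X (Sum.inl i) ^ a * X (Sum.inr j) ^ b
  let B : MvPolynomial (ι ⊕ ι) R := X (Sum.inl j) ^ b * X (Sum.inr i) ^ a
  let C := ∑ k ∈ Finset.range g, A ^ k * B ^ (g - 1 - k)
  have hABC : (A - B) * C = powMinor R d i j := by
    rw [(Commute.all A B).mul_geom_sum₂, powMinor, ha, hb]
    ring
  have hAB : pairSpecialization i j (A - B) = Polynomial.X ^ a - 1 := by
    simp [pairSpecialization, A, B, hij.symm]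
  have hmul : (Polynomial.X ^ a - 1) * pairSpecialization i j C = Polynomial.X ^ d i - 1 := by
    rw [← hAB, ← map_mul, hABC]
    simp [pairSpecialization, powMinor, hij.symm]
  obtain ⟨not_dvd_AB, not_dvd_C⟩ := not_X_pow_sub_one_dvd_of_mul_eq (by omega) hlt hmul
  have hmem : (A - B) * C ∈ powMinorIdeal R d := hABC ▸ Ideal.subset_span ⟨i, j, rfl⟩
  rcases hprime.mem_or_mem hmem with hmem | hmem
  · exact not_dvd_AB (hAB ▸ X_pow_sub_one_dvd_pairSpecialization hd hij hmem)
  · exact not_dvd_C (X_pow_sub_one_dvd_pairSpecialization hd hij hmem)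

end

theorem stmt13_general {R ι : Type*} [CommRing R] [IsDomain R] {d : ι → ℕ} (hd : ∀ i, d i ≠ 0) :
    (powMinorIdeal R d).IsPrime ↔ Pairwise (Nat.Coprime.onFun d) := by
  constructor
  · intro hprime i j hij
    exact eq_one_of_isPrime_powMinorIdeal hd hprime hij
      (Nat.gcd_dvd_left _ _) (Nat.gcd_dvd_right _ _)
  · intro hcop
    rw [powMinorIdeal_eq_ker R hd hcop]
    exact RingHom.ker_isPrime _

theorem I2D_eq_powMinorIdeal {m : ℕ} (d : Fin m → ℕ) : I2D K d = powMinorIdeal K d := by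
  apply le_antisymm <;> refine Ideal.span_le.mpr ?_
  · rintro _ ⟨i, j, -, rfl⟩
    exact Ideal.subset_span ⟨i, j, rfl⟩
  · rintro _ ⟨i, j, rfl⟩
    rcases lt_trichotomy i j with hij | rfl | hij
    · exact Ideal.subset_span ⟨i, j, hij, rfl⟩
    · simp [powMinor]
    · rw [SetLike.mem_coe, ← neg_mem_iff]
      refine Ideal.subset_span ⟨j, i, hij, ?_⟩
      rw [powMinor, fIJ, neg_sub]

theorem stmt13 (m : ℕ) (hm : 2 ≤ m) (d : Fin m → ℕ) (hd : ∀ i, 0 < d i) :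
    (I2D K d).IsPrime ↔ ∀ i j : Fin m, i < j → Nat.gcd (d i) (d j) = 1 := by
  rw [I2D_eq_powMinorIdeal, stmt13_general fun i ↦ (hd i).ne', pairwise_iff_lt]
end

section
/- If rad(I_A) = rad((B_1,…,B_s)) for binomials B_1,…,B_s ∈ I_A, then s ≥ m(m−1)/2; that is, the binomial arithmetical rank of the toric ideal I_A satisfies bar(I_A) ≥ m(m−1)/2. -/
/-!
Group the variables into columns `{x_i, y_i}`. The ideal `I_A` is homogeneous for the grading by
columns, so both monomials of a binomial in `I_A` involve the same columns, and when they involve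
at most one column they coincide because `b_i ≠ 0`. For `i ≠ j` let `p` be the point whose only
nonzero coordinates are `x_i = y_j = 1`. The binomial `x_i^{b_j} y_j^{b_i} - x_j^{b_i} y_i^{b_j}`
of `I_A` takes the value `1` at `p`, so some `B_k` does not vanish at `p`, and then the columns
involved in `B_k` are exactly `i` and `j`. Hence every pair of columns is realised by some `B_k`.
-/

open MvPolynomial

variable (K : Type*) [Field K]

/-- The `K`-algebra homomorphism `φ : S → K[t_1,…,t_{m+1}]` with
`φ(x_i) = t_1^{b_i} t_{i+1}` and `φ(y_i) = t_{i+1}`, where `b_i = ∏_{j ≠ i} d_j`.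
(Here `t_1` is `X 0` and `t_{i+1}` is `X i.succ`.) -/
noncomputable def phiA {m : ℕ} (d : Fin m → ℕ) :
    MvPolynomial (Fin m ⊕ Fin m) K →ₐ[K] MvPolynomial (Fin (m + 1)) K :=
  aeval (Sum.elim
    (fun i : Fin m => X 0 ^ (∏ j ∈ Finset.univ.erase i, d j) * X i.succ)
    (fun i : Fin m => X i.succ))

/-- The toric ideal `I_A` of the Lawrence lifting of `(b_1,…,b_m)`. -/
noncomputable def IA {m : ℕ} (d : Fin m → ℕ) : Ideal (MvPolynomial (Fin m ⊕ Fin m) K) :=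
  RingHom.ker (phiA K d).toRingHom

section Evaluation

variable {R A S σ κ : Type*} [CommRing R] [CommRing A] [CommRing S]

theorem exists_map_ne_zero_of_mem_radical_span_range {B : κ → A} {f : A}
    (hf : f ∈ (Ideal.span (Set.range B)).radical) (φ : A →+* S) (hφ : ¬IsNilpotent (φ f)) :
    ∃ k, φ (B k) ≠ 0 := by
  by_contra! hB
  have hle : Ideal.span (Set.range B) ≤ RingHom.ker φ :=
    Ideal.span_le.2 (Set.range_subset_iff.2 hB)
  obtain ⟨n, hn⟩ := hf
  exact hφ ⟨n, (map_pow φ f n).symm.trans (hle hn)⟩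

theorem eval_ite_mem_monomial_one [DecidableEq σ] (s : Finset σ) (u : σ →₀ ℕ) :
    eval (fun a ↦ if a ∈ s then 1 else 0) (monomial u (1 : R)) =
      if u.support ⊆ s then 1 else 0 := by
  rw [eval_monomial, one_mul]
  split_ifs with h
  · exact Finset.prod_eq_one fun a ha ↦ by simp only [if_pos (h ha), one_pow]
  · obtain ⟨a, hau, has⟩ := Finset.not_subset.1 h
    exact Finset.prod_eq_zero hau <| by
      simp only [if_neg has, zero_pow (Finsupp.mem_support_iff.1 hau)]

end Evaluation

section ToricIdeal

variable (R : Type*) {σ τ : Type*} [CommRing R]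

/-- The toric ideal of the vector configuration `w`: the kernel of the homomorphism that sends
the variable `a` to the monomial with exponent vector `w a`. -/
noncomputable def toricIdeal (w : σ → τ →₀ ℕ) : Ideal (MvPolynomial σ R) :=
  RingHom.ker (aeval (R := R) fun a ↦ monomial (w a) (1 : R))

variable {R}

theorem aeval_monomial_one_monomial_one (w : σ → τ →₀ ℕ) (u : σ →₀ ℕ) :
    aeval (fun a ↦ monomial (w a) (1 : R)) (monomial u (1 : R)) =
      monomial (Finsupp.weight w u) 1 := by
  simp only [aeval_monomial, map_one, one_mul, monomial_pow, one_pow, Finsupp.weight_apply,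
    monomial_finsupp_sum_index]

theorem monomial_sub_monomial_mem_toricIdeal_iff [Nontrivial R] {w : σ → τ →₀ ℕ}
    {u v : σ →₀ ℕ} :
    monomial u 1 - monomial v 1 ∈ toricIdeal R w ↔
      Finsupp.weight w u = Finsupp.weight w v := by
  rw [toricIdeal, RingHom.mem_ker, map_sub, aeval_monomial_one_monomial_one,
    aeval_monomial_one_monomial_one, sub_eq_zero, monomial_left_inj one_ne_zero]

end ToricIdeal

section Columns

variable {ι : Type*} [DecidableEq ι]

/-- The columns `{x_i, y_i}` of the generic `2 × ι` matrix that meet the monomial with exponent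
vector `u`; here `x_i` is the variable `Sum.inl i` and `y_i` is `Sum.inr i`. -/
def columns (u : ι ⊕ ι →₀ ℕ) : Finset ι :=
  u.support.image (Sum.elim id id)

theorem mem_columns {u : ι ⊕ ι →₀ ℕ} {i : ι} :
    i ∈ columns u ↔ u (Sum.inl i) + u (Sum.inr i) ≠ 0 := by
  simp [columns, imp_iff_not_or]

theorem columns_subset_pair {u : ι ⊕ ι →₀ ℕ} {i j : ι}
    (hu : u.support ⊆ {Sum.inl i, Sum.inr j}) : columns u ⊆ {i, j} :=
  (Finset.image_subset_image hu).trans (by simp)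

theorem eq_single_add_single_of_columns_subset_singleton {u : ι ⊕ ι →₀ ℕ} {i : ι}
    (hu : columns u ⊆ {i}) :
    u = Finsupp.single (Sum.inl i) (u (Sum.inl i)) +
      Finsupp.single (Sum.inr i) (u (Sum.inr i)) := by
  have hcolumn (j : ι) (hj : j ≠ i) : u (Sum.inl j) = 0 ∧ u (Sum.inr j) = 0 := by
    have hju : j ∉ columns u := fun h ↦ hj (Finset.mem_singleton.1 (hu h))
    rwa [mem_columns, not_not, Nat.add_eq_zero_iff] at hju
  ext (j | j) <;> rcases eq_or_ne j i with rfl | hj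
  · simp
  · simp [(hcolumn j hj).1, hj.symm]
  · simp
  · simp [(hcolumn j hj).2, hj.symm]

end Columns

section Lawrence

variable {ι : Type*}

/-- The Lawrence lifting of the row vector `b`: the variable `x_i` has degree `b_i` in the
coordinate `none`, and both `x_i` and `y_i` have degree one in the coordinate `some i`. -/
noncomputable def lawrenceLifting (b : ι → ℕ) : ι ⊕ ι → Option ι →₀ ℕ :=
  Sum.elim (fun i ↦ Finsupp.single none (b i) + Finsupp.single (some i) 1)
    (fun i ↦ Finsupp.single (some i) 1)

/-- The exponent vector of the monomial `x_i^{b_j} y_j^{b_i}`. Subtracting the monomial with `i`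
and `j` exchanged gives a binomial in the toric ideal of the Lawrence lifting of `b`. -/
noncomputable def crossExponent (b : ι → ℕ) (i j : ι) : ι ⊕ ι →₀ ℕ :=
  Finsupp.single (Sum.inl i) (b j) + Finsupp.single (Sum.inr j) (b i)

theorem weight_lawrenceLifting_crossExponent_comm (b : ι → ℕ) (i j : ι) :
    Finsupp.weight (lawrenceLifting b) (crossExponent b i j) =
      Finsupp.weight (lawrenceLifting b) (crossExponent b j i) := by
  simp only [crossExponent, lawrenceLifting, map_add, Finsupp.weight_single, Sum.elim_inl,
    Sum.elim_inr, smul_add, Finsupp.smul_single, smul_eq_mul, mul_comm (b j)]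
  abel

/-- The point whose only nonzero coordinates are `x_i = y_j = 1`. At this point every monomial
involving a column other than `i` and `j` vanishes. -/
def crossPoint (R : Type*) [Zero R] [One R] [DecidableEq ι] (i j : ι) : ι ⊕ ι → R :=
  fun a ↦ if a ∈ ({Sum.inl i, Sum.inr j} : Finset (ι ⊕ ι)) then 1 else 0

theorem eval_crossPoint_monomial_one {R : Type*} [CommRing R] [DecidableEq ι] (i j : ι)
    (u : ι ⊕ ι →₀ ℕ) :
    eval (crossPoint R i j) (monomial u 1) =
      if u.support ⊆ {Sum.inl i, Sum.inr j} then 1 else 0 :=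
  eval_ite_mem_monomial_one _ u

theorem eval_crossPoint_crossExponent_sub (R : Type*) [CommRing R] [DecidableEq ι] {b : ι → ℕ}
    {i j : ι} (hb : b i ≠ 0) (hij : i ≠ j) :
    eval (crossPoint R i j)
      (monomial (crossExponent b i j) 1 - monomial (crossExponent b j i) 1) = 1 := by
  have hsupport : (crossExponent b i j).support ⊆ {Sum.inl i, Sum.inr j} :=
    Finsupp.support_add.trans <| Finset.union_subset_union Finsupp.support_single_subset
      Finsupp.support_single_subset
  have hmem : Sum.inl j ∈ (crossExponent b j i).support := by simp [crossExponent, hb]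
  have hsupport' : ¬(crossExponent b j i).support ⊆ {Sum.inl i, Sum.inr j} :=
    fun h ↦ by simpa [hij.symm] using h hmem
  rw [map_sub, eval_crossPoint_monomial_one, eval_crossPoint_monomial_one, if_pos hsupport,
    if_neg hsupport', sub_zero]

theorem weight_lawrenceLifting_some (b : ι → ℕ) (u : ι ⊕ ι →₀ ℕ) (i : ι) :
    Finsupp.weight (lawrenceLifting b) u (some i) = u (Sum.inl i) + u (Sum.inr i) := by
  classical
  induction u using Finsupp.induction_linear with
  | zero => simp
  | add u v hu hv =>
    simp only [map_add, Finsupp.add_apply, hu, hv]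
    exact add_add_add_comm ..
  | single a n =>
    rcases a with j | j <;> simp [Finsupp.weight_single, lawrenceLifting, Finsupp.single_apply]

variable [DecidableEq ι] {b : ι → ℕ} {u v : ι ⊕ ι →₀ ℕ}

theorem columns_eq_of_weight_eq
    (huv : Finsupp.weight (lawrenceLifting b) u = Finsupp.weight (lawrenceLifting b) v) :
    columns u = columns v := by
  ext i
  rw [mem_columns, mem_columns, ← weight_lawrenceLifting_some b, huv, weight_lawrenceLifting_some]

theorem weight_lawrenceLifting_none_of_columns_subset_singleton {i : ι} (b : ι → ℕ)
    (hu : columns u ⊆ {i}) :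
    Finsupp.weight (lawrenceLifting b) u none = u (Sum.inl i) * b i := by
  conv_lhs => rw [eq_single_add_single_of_columns_subset_singleton hu]
  simp [Finsupp.weight_single, lawrenceLifting]

theorem eq_of_weight_eq_of_columns_subset_singleton {i : ι} (hb : b i ≠ 0)
    (huv : Finsupp.weight (lawrenceLifting b) u = Finsupp.weight (lawrenceLifting b) v)
    (hu : columns u ⊆ {i}) : u = v := by
  have hv : columns v ⊆ {i} := columns_eq_of_weight_eq huv ▸ hu
  have hinl : u (Sum.inl i) = v (Sum.inl i) := by
    apply mul_right_cancel₀ hb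
    rw [← weight_lawrenceLifting_none_of_columns_subset_singleton b hu, huv,
      weight_lawrenceLifting_none_of_columns_subset_singleton b hv]
  have hinr : u (Sum.inr i) = v (Sum.inr i) := by
    apply add_left_cancel (a := u (Sum.inl i))
    rw [← weight_lawrenceLifting_some b, huv, weight_lawrenceLifting_some, hinl]
  rw [eq_single_add_single_of_columns_subset_singleton hu, hinl, hinr,
    ← eq_single_add_single_of_columns_subset_singleton hv]

theorem one_lt_card_columns_of_weight_eq (hb : ∀ i, b i ≠ 0)
    (huv : Finsupp.weight (lawrenceLifting b) u = Finsupp.weight (lawrenceLifting b) v)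
    (hne : u ≠ v) : 1 < (columns u).card := by
  by_contra! hcard
  have : Nonempty ι := by
    by_contra hι
    rw [not_nonempty_iff] at hι
    exact hne (Subsingleton.elim u v)
  obtain ⟨i, hi⟩ := Finset.card_le_one_iff_subset_singleton.1 hcard
  exact hne (eq_of_weight_eq_of_columns_subset_singleton (hb i) huv hi)

theorem columns_eq_pair_of_eval_crossPoint_ne_zero {R : Type*} [CommRing R]
    (hb : ∀ i, b i ≠ 0) {i j : ι}
    (huv : Finsupp.weight (lawrenceLifting b) u = Finsupp.weight (lawrenceLifting b) v)
    (heval : eval (crossPoint R i j) (monomial u 1 - monomial v 1) ≠ 0) :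
    columns u = {i, j} := by
  have hne : u ≠ v := by
    rintro rfl
    exact heval (by rw [sub_self, map_zero])
  have hsubset : columns u ⊆ {i, j} := by
    by_contra hu
    have hv : ¬columns v ⊆ {i, j} := columns_eq_of_weight_eq huv ▸ hu
    apply heval
    rw [map_sub, eval_crossPoint_monomial_one, eval_crossPoint_monomial_one,
      if_neg (mt columns_subset_pair hu), if_neg (mt columns_subset_pair hv), sub_zero]
  exact Finset.eq_of_subset_of_card_le hsubset
    (Finset.card_le_two.trans (one_lt_card_columns_of_weight_eq hb huv hne))

end Lawrence

theorem stmt14_general {R ι κ : Type*} [CommRing R] [Nontrivial R] [Fintype ι] [Fintype κ]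
    (b : ι → ℕ) (hb : ∀ i, b i ≠ 0) (B : κ → MvPolynomial (ι ⊕ ι) R)
    (hbinom : ∀ k, ∃ u v, B k = monomial u 1 - monomial v 1)
    (hmem : ∀ k, B k ∈ toricIdeal R (lawrenceLifting b))
    (hrad : toricIdeal R (lawrenceLifting b) ≤ (Ideal.span (Set.range B)).radical) :
    (Fintype.card ι).choose 2 ≤ Fintype.card κ := by
  classical
  choose u v huv using hbinom
  have hsubset : Finset.univ.powersetCard 2 ⊆ Finset.univ.image fun k ↦ columns (u k) := by
    intro T hT
    obtain ⟨i, j, hij, rfl⟩ := Finset.card_eq_two.1 (Finset.mem_powersetCard.1 hT).2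
    have hcross : monomial (crossExponent b i j) 1 - monomial (crossExponent b j i) 1 ∈
        (Ideal.span (Set.range B)).radical :=
      hrad <| monomial_sub_monomial_mem_toricIdeal_iff.2 <|
        weight_lawrenceLifting_crossExponent_comm b i j
    obtain ⟨k, hk⟩ := exists_map_ne_zero_of_mem_radical_span_range hcross (eval (crossPoint R i j))
      (by rw [eval_crossPoint_crossExponent_sub R (hb i) hij]; exact not_isNilpotent_one)
    rw [huv k] at hk
    have hweight : Finsupp.weight (lawrenceLifting b) (u k) =
        Finsupp.weight (lawrenceLifting b) (v k) :=
      monomial_sub_monomial_mem_toricIdeal_iff.1 (huv k ▸ hmem k)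
    exact Finset.mem_image.2
      ⟨k, Finset.mem_univ k, columns_eq_pair_of_eval_crossPoint_ne_zero hb hweight hk⟩
  calc (Fintype.card ι).choose 2 = (Finset.univ.powersetCard 2 : Finset (Finset ι)).card := by
        rw [Finset.card_powersetCard, Finset.card_univ]
    _ ≤ (Finset.univ.image fun k ↦ columns (u k)).card := Finset.card_le_card hsubset
    _ ≤ Fintype.card κ := Finset.card_image_le

theorem IA_eq_toricIdeal {m : ℕ} (d : Fin m → ℕ) :
    IA K d = toricIdeal K (lawrenceLifting fun i ↦ ∏ j ∈ Finset.univ.erase i, d j) := by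
  have hphi : phiA K d = (rename (finSuccEquiv m).symm).comp (aeval fun a ↦
      monomial (lawrenceLifting (fun i ↦ ∏ j ∈ Finset.univ.erase i, d j) a) (1 : K)) := by
    apply MvPolynomial.algHom_ext
    have hX (j : Option (Fin m)) : monomial (Finsupp.single j 1) (1 : K) = X j := rfl
    rintro (i | i) <;>
      simp [phiA, lawrenceLifting, monomial_add_single, ← X_pow_eq_monomial, hX]
  ext f
  change phiA K d f = 0 ↔ aeval _ f = 0
  rw [hphi, AlgHom.comp_apply,
    map_eq_zero_iff _ (rename_injective _ (finSuccEquiv m).symm.injective)]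

theorem stmt14 (m : ℕ) (hm : 2 ≤ m) (d : Fin m → ℕ) (hd : ∀ i, 0 < d i)
    (s : ℕ) (B : Fin s → MvPolynomial (Fin m ⊕ Fin m) K)
    (hB : ∀ k, IsBinom (B k) ∧ B k ∈ IA K d)
    (hrad : (IA K d).radical = (Ideal.span (Set.range B)).radical) :
    m * (m - 1) / 2 ≤ s := by
  simp only [IA_eq_toricIdeal] at hB hrad
  simpa only [Fintype.card_fin, Nat.choose_two_right] using stmt14_general _
    (fun i ↦ Finset.prod_ne_zero_iff.2 fun j _ ↦ (hd j).ne') B (fun k ↦ (hB k).1)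
    (fun k ↦ (hB k).2) (Ideal.le_radical.trans hrad.le)
end
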